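/- arXiv:math/0508153 — 3 statements merged into one kernel-verified Lean document; each statement's English description precedes it below -/
import Mathlib

section
/- For every integer n ≥ 2, the expected number of 01 moves in a uniformly random reduced decomposition of the longest element w_0^B ∈ B_n equals 2/(n² − 2); equivalently, (n² − 2) · Σ_{ω ∈ R(w_0^B)} m(ω) = 2 · |R(w_0^B)|, where m(ω) denotes the number of 01 moves in ω. -/
/-- The generator `sᵢ` of the hyperoctahedral group `Bₙ`, realized as a permutation of `ℤ`:
`s₀` swaps `1` and `-1`; for `i ≥ 1`, `sᵢ` swaps `i` with `i+1` and `-i` with `-(i+1)`,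
fixing all other integers. -/
def sB (i : ℕ) : Equiv.Perm ℤ :=
  if i = 0 then Equiv.swap 1 (-1)
  else Equiv.swap (i : ℤ) ((i : ℤ) + 1) * Equiv.swap (-(i : ℤ)) (-((i : ℤ) + 1))

/-- The product `s_{i₁} ⋯ s_{i_ℓ}` corresponding to the word `i₁ ⋯ i_ℓ`. -/
def wordProd (l : List ℕ) : Equiv.Perm ℤ := (l.map sB).prod

/-- The underlying function of the longest element `w₀ᴮ ∈ Bₙ`: `i ↦ -i` on `{-n, …, n}`,
fixing all other integers. -/
def w0BFun (n : ℕ) : ℤ → ℤ := fun i => if -(n : ℤ) ≤ i ∧ i ≤ (n : ℤ) then -i else i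

lemma w0BFun_involutive (n : ℕ) : Function.Involutive (w0BFun n) := by
  intro i
  unfold w0BFun
  split_ifs <;> omega

/-- The longest element `w₀ᴮ ∈ Bₙ`, as a permutation of `ℤ`. -/
def w0B (n : ℕ) : Equiv.Perm ℤ := (w0BFun_involutive n).toPerm

/-- `l` is a reduced decomposition of `w` in `Bₙ`: a word over the alphabet `{0, …, n-1}`
whose product of generators is `w`, of minimal length among all such words. -/
def IsReducedWord (n : ℕ) (w : Equiv.Perm ℤ) (l : List ℕ) : Prop :=
  (∀ i ∈ l, i < n) ∧ wordProd l = w ∧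
    ∀ l' : List ℕ, (∀ i ∈ l', i < n) → wordProd l' = w → l.length ≤ l'.length

/-- `R(w)`, the set of reduced decompositions of `w` in `Bₙ`. -/
def RSet (n : ℕ) (w : Equiv.Perm ℤ) : Set (List ℕ) := {l | IsReducedWord n w l}

/-- The length `ℓ(w)` of `w ∈ Bₙ`: the minimal length of a word over `{0, …, n-1}`
whose product of generators is `w`. -/
noncomputable def lenB (n : ℕ) (w : Equiv.Perm ℤ) : ℕ :=
  sInf {m : ℕ | ∃ l : List ℕ, (∀ i ∈ l, i < n) ∧ wordProd l = w ∧ l.length = m}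

/-- Whether a word begins with `k (k+1) k` or `(k+1) k (k+1)` for some `k ≥ 1`. -/
def isYB : List ℕ → Bool
  | a :: b :: c :: _ => (a != 0 && b == a + 1 && c == a) || (b != 0 && a == b + 1 && c == b + 1)
  | _ => false

/-- The number of Yang–Baxter moves in a word. -/
def ybCount (l : List ℕ) : ℕ :=
  ((Finset.range l.length).filter fun j => isYB (l.drop j) = true).card

/-- Whether a word begins with `0101` or `1010`. -/
def is01 : List ℕ → Bool
  | a :: b :: c :: d :: _ =>
      (a == 0 && b == 1 && c == 0 && d == 1) || (a == 1 && b == 0 && c == 1 && d == 0)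
  | _ => false

/-- The number of 01 moves in a word. -/
def m01Count (l : List ℕ) : ℕ :=
  ((Finset.range l.length).filter fun j => is01 (l.drop j) = true).card

/-- The underlying function of `w_k ∈ Bₙ`: `k ↦ -(k+2)`, `k+2 ↦ -k`, and `i ↦ -i` for all
other `i ∈ {1, …, n}`, extended by `w(-i) = -w(i)` and fixing all integers outside
`{-n, …, -1, 1, …, n}`. -/
def wkFun (n k : ℕ) : ℤ → ℤ := fun i =>
  if -(n : ℤ) ≤ i ∧ i ≤ (n : ℤ) then
    if i = (k : ℤ) then -((k : ℤ) + 2)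
    else if i = (k : ℤ) + 2 then -(k : ℤ)
    else if i = -(k : ℤ) then (k : ℤ) + 2
    else if i = -((k : ℤ) + 2) then (k : ℤ)
    else -i
  else i

/-- The underlying function of `w' ∈ Bₙ`: `1 ↦ 1`, `2 ↦ 2`, and `i ↦ -i` for `3 ≤ i ≤ n`,
extended by `w(-i) = -w(i)` and fixing all integers outside `{-n, …, -1, 1, …, n}`. -/
def wpFun (n : ℕ) : ℤ → ℤ := fun i =>
  if (-(n : ℤ) ≤ i ∧ i ≤ (n : ℤ)) ∧ (i < -2 ∨ 2 < i) then -i else i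

/-- `w`, viewed as a signed permutation of `{1, …, n}` via the values `w(1), …, w(n)`,
contains the signed pattern `p` (given by its list of values `p(1), …, p(m)`). -/
def ContainsPattern (n : ℕ) (w : ℤ → ℤ) (p : List ℤ) : Prop :=
  ∃ j : Fin p.length → ℤ, StrictMono j ∧ (∀ r, 1 ≤ j r ∧ j r ≤ (n : ℤ)) ∧
    (∀ r s, w (j r) < w (j s) ↔ p.get r < p.get s) ∧
    (∀ r, w (j r) < 0 ↔ p.get r < 0)

namespace BW

open Equiv

def lo (i : ℕ) : ℤ := if i = 0 then -1 else (i : ℤ)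
def hi (i : ℕ) : ℤ := (i : ℤ) + 1

/-- The reflection exchanging `a` and `b` (and `-a` and `-b`). -/
def T (a b : ℤ) : Perm ℤ :=
  if a = -b then swap a b else swap a b * swap (-a) (-b)

lemma T_apply {a b : ℤ} (ha : a ≠ 0) (hb : b ≠ 0) (x : ℤ) :
    T a b x = if x = a then b else if x = b then a else if x = -a then -b
      else if x = -b then -a else x := by
  unfold T
  split_ifs <;> simp only [Perm.mul_apply, swap_apply_def] <;> split_ifs <;> omega

lemma lo_ne (i : ℕ) : lo i ≠ 0 := by unfold lo; split_ifs <;> omega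
lemma hi_ne (i : ℕ) : hi i ≠ 0 := by unfold hi; omega
lemma lo_lt_hi (i : ℕ) : lo i < hi i := by unfold lo hi; split_ifs <;> omega

lemma sB_eq (i : ℕ) : sB i = T (lo i) (hi i) := by
  unfold sB T lo hi
  by_cases h : i = 0
  · subst h; simp [swap_comm]
  · have : ¬ ((i : ℤ) = -((i : ℤ) + 1)) := by omega
    rw [if_neg h, if_neg h, if_neg this]

lemma sB_apply (i : ℕ) (x : ℤ) :
    sB i x = if x = lo i then hi i else if x = hi i then lo i else if x = -lo i then -hi i
      else if x = -hi i then -lo i else x := by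
  rw [sB_eq, T_apply (lo_ne i) (hi_ne i)]

lemma T_mul_self {a b : ℤ} (ha : a ≠ 0) (hb : b ≠ 0) : T a b * T a b = 1 := by
  ext x
  rw [Perm.mul_apply, T_apply ha hb, T_apply ha hb]
  simp only [Perm.one_apply]
  split_ifs <;> omega

lemma T_left {a b : ℤ} (ha : a ≠ 0) (hb : b ≠ 0) : T a b a = b := by
  rw [T_apply ha hb]; simp
lemma T_right {a b : ℤ} (ha : a ≠ 0) (hb : b ≠ 0) : T a b b = a := by
  rw [T_apply ha hb]; split_ifs <;> omega

lemma T_comm {a b : ℤ} (ha : a ≠ 0) (hb : b ≠ 0) : T a b = T b a := by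
  ext x
  rw [T_apply ha hb, T_apply hb ha]
  split_ifs <;> omega

lemma T_neg {a b : ℤ} (ha : a ≠ 0) (hb : b ≠ 0) : T (-a) (-b) = T a b := by
  ext x
  rw [T_apply ha hb, T_apply (by omega) (by omega)]
  split_ifs <;> omega

lemma sB_mul_self (i : ℕ) : sB i * sB i = 1 := by
  rw [sB_eq]; exact T_mul_self (lo_ne i) (hi_ne i)

lemma sB_cancel (i : ℕ) (w : Perm ℤ) : sB i * (sB i * w) = w := by
  rw [← mul_assoc, sB_mul_self, one_mul]

lemma T_cancel {a b : ℤ} (ha : a ≠ 0) (hb : b ≠ 0) (w : Perm ℤ) : w * T a b * T a b = w := by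
  rw [mul_assoc, T_mul_self ha hb, mul_one]

structure SP (N : ℕ) (w : Perm ℤ) : Prop where
  odd : ∀ x, w (-x) = - w x
  supp : ∀ x : ℤ, (N : ℤ) < x → w x = x

namespace SP
variable {N : ℕ} {w v : Perm ℤ}

lemma zero (h : SP N w) : w 0 = 0 := by have := h.odd 0; simp at this; omega
lemma ne_zero (h : SP N w) {x : ℤ} (hx : x ≠ 0) : w x ≠ 0 := by
  intro h0
  exact hx (w.injective (h0.trans h.zero.symm))
lemma supp' (h : SP N w) {x : ℤ} (hx : x < -(N : ℤ)) : w x = x := by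
  have := h.supp (-x) (by omega)
  have h2 := h.odd x
  omega
lemma le (h : SP N w) {x : ℤ} (hx : x ≤ N) : w x ≤ N := by
  by_contra hc
  have := h.supp (w x) (by omega)
  have := w.injective this
  omega
lemma ge (h : SP N w) {x : ℤ} (hx : -(N : ℤ) ≤ x) : -(N : ℤ) ≤ w x := by
  by_contra hc
  have := h.supp' (x := w x) (by omega)
  have := w.injective this
  omega
lemma one : SP N 1 := ⟨fun _ => rfl, fun _ _ => rfl⟩
lemma mul (hw : SP N w) (hv : SP N v) : SP N (w * v) :=
  ⟨fun x => by simp [hv.odd, hw.odd], fun x hx => by simp [hv.supp x hx, hw.supp x hx]⟩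
lemma inv (hw : SP N w) : SP N w⁻¹ :=
  ⟨fun x => by rw [Perm.inv_eq_iff_eq, hw.odd]; simp,
   fun x hx => by rw [Perm.inv_eq_iff_eq, hw.supp x hx]⟩
lemma mono {M : ℕ} (h : SP N w) (hNM : N ≤ M) : SP M w :=
  ⟨h.odd, fun x hx => h.supp x (by omega)⟩
lemma T {a b : ℤ} (ha : a ≠ 0) (hb : b ≠ 0) (ha1 : a ≤ N) (ha2 : -(N : ℤ) ≤ a)
    (hb1 : b ≤ N) (hb2 : -(N : ℤ) ≤ b) : SP N (T a b) := by
  constructor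
  · intro x
    rw [T_apply ha hb, T_apply ha hb]
    split_ifs <;> omega
  · intro x hx
    rw [T_apply ha hb]
    split_ifs <;> omega
lemma sB {i : ℕ} (hi' : i < N) : SP N (sB i) := by
  rw [sB_eq]
  apply SP.T (lo_ne i) (hi_ne i) <;> (simp only [lo, hi]; try split_ifs) <;> omega
end SP

lemma conj {w : Perm ℤ} (hw : ∀ x, w (-x) = - w x) {a b : ℤ} (ha : a ≠ 0) (hb : b ≠ 0)
    (ha' : w a ≠ 0) (hb' : w b ≠ 0) : w * T a b = T (w a) (w b) * w := by
  ext x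
  simp only [Perm.mul_apply]
  rw [T_apply ha hb, T_apply ha' hb']
  have e1 : w x = w a ↔ x = a := w.injective.eq_iff
  have e2 : w x = w b ↔ x = b := w.injective.eq_iff
  have e3 : w x = - w a ↔ x = -a := by rw [← hw]; exact w.injective.eq_iff
  have e4 : w x = - w b ↔ x = -b := by rw [← hw]; exact w.injective.eq_iff
  simp only [e1, e2, e3, e4]
  split_ifs <;> simp [hw]

/-- `sB i` flips the order of a pair only if it is the pair of `i`. -/
lemma sB_order (i : ℕ) {x y : ℤ} (hx : x ≠ 0) (hy : y ≠ 0) (h : x < y) (h2 : sB i y < sB i x) :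
    (x = lo i ∧ y = hi i) ∨ (x = - hi i ∧ y = - lo i) := by
  rw [sB_apply, sB_apply] at h2
  unfold lo hi at *
  split_ifs at h2 <;> omega

/-- if `sB i` moves `x` then `sB i = T x (sB i x)`. -/
lemma sB_eq_T_of_ne (i : ℕ) {x : ℤ} (h : sB i x ≠ x) : sB i = T x (sB i x) := by
  have hl := lo_ne i
  have hh := hi_ne i
  rw [sB_apply] at *
  rw [sB_eq]
  split_ifs at h ⊢ with h1 h2 h3 h4
  · rw [h1]
  · rw [h2, T_comm hl hh]
  · rw [h3, T_neg hl hh]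
  · rw [h4, T_neg hh hl, T_comm hl hh]
  · exact absurd rfl h

/-- If `sB i` flips the order of `x<y` then `sB i = T x y`. -/
lemma sB_eq_T (i : ℕ) {x y : ℤ} (hx : x ≠ 0) (hy : y ≠ 0) (h : x < y) (h2 : sB i y < sB i x) :
    sB i = T x y := by
  rcases sB_order i hx hy h h2 with ⟨h1, h2⟩ | ⟨h1, h2⟩
  · rw [h1, h2, sB_eq]
  · rw [h1, h2, T_neg (hi_ne i) (lo_ne i), T_comm (hi_ne i) (lo_ne i), sB_eq]

lemma wordProd_nil : wordProd [] = 1 := rfl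
lemma wordProd_cons (i : ℕ) (l : List ℕ) : wordProd (i :: l) = sB i * wordProd l := by
  simp [wordProd]
lemma wordProd_append (l l' : List ℕ) : wordProd (l ++ l') = wordProd l * wordProd l' := by
  simp [wordProd]

def Wd (N : ℕ) (l : List ℕ) : Prop := ∀ i ∈ l, i < N

lemma Wd.cons {N i : ℕ} {l : List ℕ} (hi : i < N) (h : Wd N l) : Wd N (i :: l) := by
  intro j hj
  rcases List.mem_cons.1 hj with rfl | hj
  · exact hi
  · exact h j hj
lemma Wd.tail {N i : ℕ} {l : List ℕ} (h : Wd N (i :: l)) : Wd N l :=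
  fun j hj => h j (List.mem_cons_of_mem _ hj)
lemma Wd.head {N i : ℕ} {l : List ℕ} (h : Wd N (i :: l)) : i < N := h i (by simp)

lemma wordProd_SP {N : ℕ} : ∀ {l : List ℕ}, Wd N l → SP N (wordProd l)
  | [], _ => SP.one
  | i :: l, h => by
    rw [wordProd_cons]
    exact (SP.sB h.head).mul (wordProd_SP h.tail)

/-- Strong exchange. -/
lemma exchange {N : ℕ} : ∀ {l : List ℕ}, Wd N l → ∀ {p q : ℤ}, p ≠ 0 → q ≠ 0 → p < q →
    wordProd l q < wordProd l p →
    ∃ l', Wd N l' ∧ l'.length + 1 = l.length ∧ wordProd l' = wordProd l * T p q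
  | [], _, p, q, _, _, h, h2 => by simp [wordProd_nil] at h2; omega
  | i :: l, hl, p, q, hp, hq, h, h2 => by
    rw [wordProd_cons] at h2 ⊢
    have hS := wordProd_SP hl.tail
    by_cases hc : wordProd l q < wordProd l p
    · obtain ⟨l', h1, h2, h3⟩ := exchange hl.tail hp hq h hc
      refine ⟨i :: l', h1.cons hl.head, by simp; omega, ?_⟩
      rw [wordProd_cons, h3, mul_assoc]
    · have hne : wordProd l p ≠ wordProd l q := fun hh => by
        have := (wordProd l).injective hh; omega
      refine ⟨l, hl.tail, by simp, ?_⟩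
      have := sB_eq_T i (hS.ne_zero hp) (hS.ne_zero hq) (by omega) h2
      rw [mul_assoc, conj hS.odd hp hq (hS.ne_zero hp) (hS.ne_zero hq), ← this, sB_cancel]

/-- left descent -/
def D (w : Perm ℤ) (i : ℕ) : Prop := w⁻¹ (hi i) < w⁻¹ (lo i)

end BW

namespace BW

open Equiv

lemma word_move (N : ℕ) : ∀ (d : ℕ) (y : ℤ), y ≠ 0 → -((N : ℤ) + 1) ≤ y → y + d = (N : ℤ) + 1 →
    ∃ c, Wd (N + 1) c ∧ wordProd c ((N : ℤ) + 1) = y := by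
  intro d
  induction d using Nat.strong_induction_on with
  | _ d ih =>
    intro y hy h1 h2
    rcases Nat.eq_zero_or_pos d with h0 | hd
    · refine ⟨[], fun _ h => by simp at h, ?_⟩
      simp [wordProd_nil]; omega
    · by_cases hy0 : 0 < y
      · obtain ⟨c, hc, hc2⟩ := ih (d - 1) (by omega) (y + 1) (by omega) (by omega) (by omega)
        refine ⟨y.toNat :: c, hc.cons (by omega), ?_⟩
        rw [wordProd_cons, Perm.mul_apply, hc2, sB_apply]
        unfold lo hi
        split_ifs <;> omega
      · by_cases hy1 : y = -1
        · obtain ⟨c, hc, hc2⟩ := ih (d - 2) (by omega) 1 (by omega) (by omega) (by omega)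
          refine ⟨0 :: c, hc.cons (by omega), ?_⟩
          rw [wordProd_cons, Perm.mul_apply, hc2, sB_apply, hy1]
          simp [lo, hi]
        · obtain ⟨c, hc, hc2⟩ := ih (d - 1) (by omega) (y + 1) (by omega) (by omega) (by omega)
          refine ⟨(-y-1).toNat :: c, hc.cons (by omega), ?_⟩
          rw [wordProd_cons, Perm.mul_apply, hc2, sB_apply]
          unfold lo hi
          split_ifs <;> omega

lemma word_exists : ∀ {N : ℕ} {w : Perm ℤ}, SP N w → ∃ l, Wd N l ∧ wordProd l = w
  | 0, w, h => by
    refine ⟨[], fun _ h => by simp at h, ?_⟩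
    rw [wordProd_nil]
    ext x
    rcases lt_trichotomy x 0 with hx | hx | hx
    · rw [h.supp' (by simpa using hx)]; rfl
    · rw [hx, h.zero]; rfl
    · rw [h.supp x (by simpa using hx)]; rfl
  | N + 1, w, h => by
    have b1 : w ((N : ℤ) + 1) ≤ (N : ℤ) + 1 := by
      have := h.le (x := (N : ℤ) + 1) (by push_cast; omega)
      push_cast at this; exact this
    have b2 : -((N : ℤ) + 1) ≤ w ((N : ℤ) + 1) := by
      have := h.ge (x := (N : ℤ) + 1) (by push_cast; omega)
      push_cast at this; omega
    obtain ⟨c, hc, hc2⟩ := word_move N (((N : ℤ) + 1) - w ((N : ℤ) + 1)).toNat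
      (w ((N : ℤ) + 1)) (h.ne_zero (by omega)) b2 (by omega)
    have hcS := wordProd_SP hc
    have h' := hcS.inv.mul h
    have h2 : SP N ((wordProd c)⁻¹ * w) := by
      refine ⟨h'.odd, fun x hx => ?_⟩
      by_cases hx1 : x = (N : ℤ) + 1
      · rw [Perm.mul_apply, Perm.inv_eq_iff_eq, hx1, hc2]
      · exact h'.supp x (by push_cast; omega)
    obtain ⟨l, hl, hl2⟩ := word_exists h2
    refine ⟨c ++ l, ?_, ?_⟩
    · intro j hj
      rcases List.mem_append.1 hj with hj | hj
      · exact hc j hj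
      · have := hl j hj; omega
    · rw [wordProd_append, hl2, mul_inv_cancel_left]

/-- minimal word length (same as `lenB`) -/
noncomputable def len (N : ℕ) (w : Perm ℤ) : ℕ :=
  sInf {m : ℕ | ∃ l : List ℕ, Wd N l ∧ wordProd l = w ∧ l.length = m}

lemma len_le {N : ℕ} {l : List ℕ} (h : Wd N l) : len N (wordProd l) ≤ l.length :=
  Nat.sInf_le ⟨l, h, rfl, rfl⟩

lemma len_spec {N : ℕ} {w : Perm ℤ} (h : SP N w) :
    ∃ l, Wd N l ∧ wordProd l = w ∧ l.length = len N w := by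
  obtain ⟨l, hl, hl2⟩ := word_exists h
  exact Nat.sInf_mem (s := {m : ℕ | ∃ l : List ℕ, Wd N l ∧ wordProd l = w ∧ l.length = m})
    ⟨_, l, hl, hl2, rfl⟩

lemma len_one (N : ℕ) : len N 1 = 0 := by
  have := len_le (N := N) (l := []) (fun _ h => by simp at h)
  simpa [wordProd_nil] using this

lemma len_eq_zero {N : ℕ} {w : Perm ℤ} (h : SP N w) : len N w = 0 ↔ w = 1 := by
  constructor
  · intro h0
    obtain ⟨l, _, h2, h3⟩ := len_spec h
    have : l = [] := List.length_eq_zero_iff.1 (h3.trans h0)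
    rw [← h2, this, wordProd_nil]
  · rintro rfl; exact len_one N

/-- going down by a reflection -/
lemma len_down {N : ℕ} {w : Perm ℤ} (h : SP N w) {p q : ℤ} (hp : p ≠ 0) (hq : q ≠ 0)
    (hpq : p < q) (hd : w q < w p) : len N (w * T p q) < len N w := by
  obtain ⟨l, h1, h2, h3⟩ := len_spec h
  subst h2
  obtain ⟨l', h4, h5, h6⟩ := exchange h1 hp hq hpq hd
  rw [← h6]
  have := len_le h4
  omega

lemma len_up {N : ℕ} {w : Perm ℤ} (h : SP N w) {p q : ℤ} (hp : p ≠ 0) (hq : q ≠ 0)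
    (hp1 : -(N : ℤ) ≤ p) (hq1 : q ≤ N)
    (hpq : p < q) (hd : w p < w q) : len N w < len N (w * T p q) := by
  have h' : SP N (w * T p q) := h.mul (SP.T hp hq (by omega) hp1 hq1 (by omega))
  have := len_down h' hp hq hpq (by
    rw [Perm.mul_apply, Perm.mul_apply, T_left hp hq, T_right hp hq]; exact hd)
  rwa [T_cancel hp hq] at this

lemma len_sB_le {N : ℕ} {w : Perm ℤ} (h : SP N w) {i : ℕ} (hi : i < N) :
    len N (sB i * w) ≤ len N w + 1 := by
  obtain ⟨l, h1, h2, h3⟩ := len_spec h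
  have := len_le (h1.cons hi)
  rw [wordProd_cons, h2] at this
  simp at this; omega

lemma sB_mul_eq {N : ℕ} {w : Perm ℤ} (h : SP N w) (i : ℕ) :
    sB i * w = w * T (w⁻¹ (lo i)) (w⁻¹ (hi i)) := by
  have hl := lo_ne i
  have hh := hi_ne i
  rw [conj h.odd (h.inv.ne_zero hl) (h.inv.ne_zero hh) (by simpa using hl) (by simpa using hh),
    sB_eq]
  simp

lemma lo_bd {N i : ℕ} (h : i < N) : -(N : ℤ) ≤ lo i ∧ lo i ≤ N := by
  unfold lo; split_ifs <;> omega
lemma hi_bd {N i : ℕ} (h : i < N) : -(N : ℤ) ≤ hi i ∧ hi i ≤ N := by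
  unfold hi; omega

lemma len_sB_of_not_D {N : ℕ} {w : Perm ℤ} (h : SP N w) {i : ℕ} (hi' : i < N) (hd : ¬ D w i) :
    len N (sB i * w) = len N w + 1 := by
  have hl := lo_ne i
  have hh := hi_ne i
  have hne : w⁻¹ (lo i) ≠ w⁻¹ (hi i) := fun hc => by
    have := w⁻¹.injective hc
    have := lo_lt_hi i; omega
  unfold D at hd
  have := len_up h (p := w⁻¹ (lo i)) (q := w⁻¹ (hi i)) (h.inv.ne_zero hl) (h.inv.ne_zero hh)
    (h.inv.ge (lo_bd hi').1) (h.inv.le (hi_bd hi').2) (by omega) (by simpa using lo_lt_hi i)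
  rw [← sB_mul_eq h] at this
  have := len_sB_le h hi'
  omega

lemma D_sB {w : Perm ℤ} {i : ℕ} : D (sB i * w) i ↔ ¬ D w i := by
  have hne : w⁻¹ (lo i) ≠ w⁻¹ (hi i) := fun hc => by
    have := w⁻¹.injective hc
    have := lo_lt_hi i; omega
  have hl := lo_ne i
  have hh := hi_ne i
  have hs : (sB i)⁻¹ = sB i := inv_eq_of_mul_eq_one_left (sB_mul_self i)
  unfold D
  rw [mul_inv_rev, Perm.mul_apply, Perm.mul_apply, hs, sB_eq, T_left hl hh, T_right hl hh]
  omega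

lemma len_sB_of_D {N : ℕ} {w : Perm ℤ} (h : SP N w) {i : ℕ} (hi' : i < N) (hd : D w i) :
    len N (sB i * w) + 1 = len N w := by
  have := len_sB_of_not_D ((SP.sB hi').mul h) hi' (fun hc => D_sB.1 hc hd)
  rw [sB_cancel] at this
  exact this.symm

lemma no_desc {N : ℕ} {w : Perm ℤ} (h : SP N w) (hd : ∀ i < N, ¬ D w i) : w = 1 := by
  by_contra hne
  obtain ⟨l, h1, h2, h3⟩ := len_spec h
  cases l with
  | nil => rw [wordProd_nil] at h2; exact hne h2.symm
  | cons i l =>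
    have := len_sB_of_not_D h h1.head (hd i h1.head)
    rw [← h2, wordProd_cons, sB_cancel] at this
    have h4 := len_le h1.tail
    rw [← h2, wordProd_cons] at h3
    simp at h3
    omega

/-- The core of the lifting property. -/
lemma lifting {N : ℕ} {w : Perm ℤ} (h : SP N w) {p q : ℤ} (hp : p ≠ 0) (hq : q ≠ 0)
    (hp1 : -(N : ℤ) ≤ p) (hp2 : p ≤ N) (hq1 : -(N : ℤ) ≤ q) (hq2 : q ≤ N)
    (hpq : p < q) {i : ℕ} (hi' : i < N)
    (hl : len N (w * T p q) = len N w + 1) (hD : D (w * T p q) i) (hnD : ¬ D w i) :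
    sB i * (w * T p q) = w := by
  have hx : SP N (w * T p q) := h.mul (SP.T hp hq hp2 hp1 hq2 hq1)
  have hup : w p < w q := by
    by_contra hc
    have hne : w p ≠ w q := fun hh => by have := w.injective hh; omega
    have := len_down h hp hq hpq (by omega)
    omega
  have hs := len_sB_of_D hx hi' hD
  obtain ⟨C, c1, c2, c3⟩ := len_spec ((SP.sB hi').mul hx)
  have hy := wordProd_SP c1
  have hxC : w * T p q = sB i * wordProd C := by rw [c2, sB_cancel]
  have hwC : w = sB i * wordProd C * T p q := by rw [← hxC, T_cancel hp hq]
  by_cases hc : wordProd C q < wordProd C p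
  · exfalso
    obtain ⟨l', l1, l2, l3⟩ := exchange c1 hp hq hpq hc
    have e : sB i * w = wordProd l' := by
      rw [l3]
      conv_lhs => rw [hwC]
      rw [mul_assoc, sB_cancel]
    have := len_sB_of_not_D h hi' hnD
    rw [e] at this
    have := len_le l1
    omega
  · have hne : wordProd C p ≠ wordProd C q := fun hh => by
      have := (wordProd C).injective hh; omega
    have hx2 : (sB i * wordProd C) q < (sB i * wordProd C) p := by
      rw [← hxC, Perm.mul_apply, Perm.mul_apply, T_left hp hq, T_right hp hq]; exact hup
    have := sB_eq_T i (hy.ne_zero hp) (hy.ne_zero hq) (by omega) hx2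
    rw [hxC, sB_cancel]
    rw [hwC, mul_assoc, conj hy.odd hp hq (hy.ne_zero hp) (hy.ne_zero hq), ← this, sB_cancel]

end BW

namespace BW

open Equiv

open Classical in
noncomputable def wds (N : ℕ) : ℕ → Perm ℤ → Finset (List ℕ)
  | 0, w => if w = 1 then {[]} else ∅
  | L + 1, w => (Finset.range N).biUnion fun i => (wds N L (sB i * w)).image (List.cons i)

lemma mem_wds {N : ℕ} : ∀ {L : ℕ} {w : Perm ℤ} {l : List ℕ},
    l ∈ wds N L w ↔ Wd N l ∧ wordProd l = w ∧ l.length = L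
  | 0, w, l => by
    unfold wds
    split_ifs with h
    · constructor
      · intro hl
        rw [Finset.mem_singleton] at hl
        subst hl
        exact ⟨fun _ h => by simp at h, by rw [wordProd_nil, h], rfl⟩
      · rintro ⟨_, _, h3⟩
        simpa using List.length_eq_zero_iff.1 h3
    · constructor
      · intro hl; simp at hl
      · rintro ⟨_, h2, h3⟩
        have := List.length_eq_zero_iff.1 h3
        subst this
        exact absurd h2.symm h
  | L + 1, w, l => by
    unfold wds
    simp only [Finset.mem_biUnion, Finset.mem_range, Finset.mem_image]
    constructor
    · rintro ⟨i, hi, l', hl', rfl⟩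
      obtain ⟨h1, h2, h3⟩ := mem_wds.1 hl'
      refine ⟨h1.cons hi, ?_, by simp [h3]⟩
      rw [wordProd_cons, h2, sB_cancel]
    · rintro ⟨h1, h2, h3⟩
      cases l with
      | nil => simp at h3
      | cons i l =>
        refine ⟨i, h1.head, l, mem_wds.2 ⟨h1.tail, ?_, by simpa using h3⟩, rfl⟩
        rw [← h2, wordProd_cons, sB_cancel]

lemma card_wds_succ (N L : ℕ) (w : Perm ℤ) :
    (wds N (L + 1) w).card = ∑ i ∈ Finset.range N, (wds N L (sB i * w)).card := by
  rw [wds, Finset.card_biUnion]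
  · refine Finset.sum_congr rfl fun i _ => ?_
    exact Finset.card_image_of_injective _ (List.cons_injective)
  · intro i _ j _ hij
    rw [Function.onFun, Finset.disjoint_left]
    intro l h1 h2
    obtain ⟨a, _, ha⟩ := Finset.mem_image.1 h1
    obtain ⟨b, _, hb⟩ := Finset.mem_image.1 h2
    rw [← ha] at hb
    exact hij (List.cons.inj hb).1.symm

lemma wds_empty {N L : ℕ} {w : Perm ℤ} (h : L < len N w) : wds N L w = ∅ := by
  rw [Finset.eq_empty_iff_forall_notMem]
  intro l hl
  obtain ⟨h1, h2, h3⟩ := mem_wds.1 hl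
  have := len_le h1
  rw [h2] at this
  omega

noncomputable def f (N : ℕ) (w : Perm ℤ) : ℕ := (wds N (len N w) w).card

lemma f_pos {N : ℕ} {w : Perm ℤ} (h : SP N w) : 0 < f N w := by
  obtain ⟨l, hl⟩ := len_spec h
  exact Finset.card_pos.2 ⟨l, mem_wds.2 hl⟩

lemma f_one (N : ℕ) : f N 1 = 1 := by
  unfold f; rw [len_one, wds]; simp

open Classical in
lemma f_rec {N : ℕ} {w : Perm ℤ} (h : SP N w) (hw : w ≠ 1) :
    f N w = ∑ i ∈ Finset.range N, if D w i then f N (sB i * w) else 0 := by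
  have h0 : len N w ≠ 0 := fun hc => hw ((len_eq_zero h).1 hc)
  obtain ⟨L, hL⟩ := Nat.exists_eq_succ_of_ne_zero h0
  unfold f
  rw [hL, Nat.succ_eq_add_one, card_wds_succ]
  refine Finset.sum_congr rfl fun i hi => ?_
  have hi := Finset.mem_range.1 hi
  split_ifs with hd
  · have := len_sB_of_D h hi hd
    have : len N (sB i * w) = L := by omega
    rw [this]
  · have := len_sB_of_not_D h hi hd
    rw [wds_empty (by omega)]; rfl

/-- index set of positions different from `k` -/
noncomputable def J (N : ℕ) (k : ℤ) : Finset ℤ :=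
  (Finset.Icc (-(N : ℤ)) N).filter fun j => j ≠ 0 ∧ j ≠ k

lemma mem_J {N : ℕ} {k j : ℤ} : j ∈ J N k ↔ (-(N : ℤ) ≤ j ∧ j ≤ N) ∧ j ≠ 0 ∧ j ≠ k := by
  simp [J]

open Classical in
noncomputable def G (N : ℕ) (k : ℤ) (w : Perm ℤ) : ℤ :=
  ∑ j ∈ J N k, if len N (w * T k j) = len N w + 1 then
    (if j < k then 1 else -1) * (f N (w * T k j) : ℤ) else 0

lemma lifting' {N : ℕ} {w : Perm ℤ} (h : SP N w) {p q : ℤ} (hp : p ≠ 0) (hq : q ≠ 0)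
    (hp1 : -(N : ℤ) ≤ p) (hp2 : p ≤ N) (hq1 : -(N : ℤ) ≤ q) (hq2 : q ≤ N)
    (hpq : p ≠ q) {i : ℕ} (hi' : i < N)
    (hl : len N (w * T p q) = len N w + 1) (hD : D (w * T p q) i) (hnD : ¬ D w i) :
    sB i * (w * T p q) = w := by
  rcases lt_or_gt_of_ne hpq with hlt | hlt
  · exact lifting h hp hq hp1 hp2 hq1 hq2 hlt hi' hl hD hnD
  · rw [T_comm hp hq] at *
    exact lifting h hq hp hq1 hq2 hp1 hp2 hlt hi' hl hD hnD

lemma len_T_iff {N : ℕ} {w : Perm ℤ} (h : SP N w) {k j : ℤ} (hk : k ≠ 0) (hj : j ≠ 0)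
    (hk1 : -(N : ℤ) ≤ k) (hk2 : k ≤ N) (hj1 : -(N : ℤ) ≤ j) (hj2 : j ≤ N) (hkj : j ≠ k) :
    len N w < len N (w * T k j) ↔ (j < k ↔ w j < w k) := by
  have hne : w j ≠ w k := fun hh => hkj (w.injective hh)
  rcases lt_or_gt_of_ne hkj with hlt | hlt
  · rw [T_comm hk hj]
    by_cases hw : w j < w k
    · have := len_up h hj hk hj1 hk2 hlt hw
      simp [hlt, hw, this]
    · have := len_down h hj hk hlt (by omega)
      simp [hlt, hw]; omega
  · by_cases hw : w j < w k
    · have := len_down h hk hj hlt (by omega)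
      have : ¬ j < k := by omega
      simp [hw, this]; omega
    · have := len_up h hk hj hk1 hj2 hlt (by omega)
      have h2 : ¬ j < k := by omega
      simp [hw, h2, this]

open Classical in
lemma term_eq {N : ℕ} {w : Perm ℤ} (h : SP N w) {k j : ℤ} (hk : k ≠ 0)
    (hk1 : -(N : ℤ) ≤ k) (hk2 : k ≤ N) (hj : j ∈ J N k) {i : ℕ} (hi' : i < N) :
    (if len N (w * T k j) = len N w + 1 then
      (if j < k then 1 else -1) * (if D (w * T k j) i then (f N (sB i * (w * T k j)) : ℤ) else 0)
      else 0)
    = (if D w i then (if len N (sB i * w * T k j) = len N (sB i * w) + 1 then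
      (if j < k then 1 else -1) * (f N (sB i * w * T k j) : ℤ) else 0) else 0)
      + (if w j = sB i (w k) then (if w j < w k then (f N w : ℤ) else -(f N w : ℤ)) else 0) := by
  obtain ⟨⟨hj1, hj2⟩, hj0, hjk⟩ := mem_J.1 hj
  have hx : SP N (w * T k j) := h.mul (SP.T hk hj0 hk2 hk1 hj2 hj1)
  have key := len_T_iff h hk hj0 hk1 hk2 hj1 hj2 hjk
  have hne : w j ≠ w k := fun hh => hjk (w.injective hh)
  have hiff : w j = sB i (w k) ↔ w * T k j = sB i * w := by
    constructor
    · intro he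
      rw [conj h.odd hk hj0 (h.ne_zero hk) (h.ne_zero hj0)]
      rw [sB_eq_T_of_ne i (x := w k) (by rw [← he]; exact hne), he]
    · intro he
      have := congrArg (fun g : Perm ℤ => g k) he
      simp only [Perm.mul_apply, T_left hk hj0] at this
      exact this
  by_cases hc : w * T k j = sB i * w
  · rw [if_pos (hiff.2 hc)]
    have e : sB i * w * T k j = w := by rw [mul_assoc, hc, sB_cancel]
    rw [e, hc, sB_cancel, D_sB]
    rw [hc] at key
    by_cases hd : D w i
    · have h1 := len_sB_of_D h hi' hd
      have h2 : ¬ (j < k ↔ w j < w k) := by rw [← key]; omega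
      rw [if_neg (by omega), if_pos hd, if_pos h1.symm]
      split_ifs <;> first | (exfalso; tauto) | ring
    · have h1 := len_sB_of_not_D h hi' hd
      have h2 : (j < k ↔ w j < w k) := by rw [← key]; omega
      rw [if_pos (by omega), if_neg hd, if_pos hd]
      by_cases h4 : w j < w k <;> simp [h2, h4]
  · rw [if_neg (fun hh => hc (hiff.1 hh)), add_zero]
    have hA : (len N (w * T k j) = len N w + 1 ∧ D (w * T k j) i) ↔
        (D w i ∧ len N (sB i * w * T k j) = len N (sB i * w) + 1) := by
      constructor
      · rintro ⟨h1, h2⟩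
        have hd : D w i := by
          by_contra hnd
          have := lifting' h hk hj0 hk1 hk2 hj1 hj2 (Ne.symm hjk) hi' h1 h2 hnd
          apply hc
          conv_rhs => rw [← this]
          rw [sB_cancel]
        refine ⟨hd, ?_⟩
        have h3 := len_sB_of_D h hi' hd
        have h4 := len_sB_of_D hx hi' h2
        rw [mul_assoc]; omega
      · rintro ⟨hd, h1⟩
        have h3 := len_sB_of_D h hi' hd
        have hD : D (w * T k j) i := by
          by_contra hnd
          have hw' := (SP.sB hi').mul h
          have := lifting' hw' hk hj0 hk1 hk2 hj1 hj2 (Ne.symm hjk) hi' h1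
            (by rw [mul_assoc]; exact D_sB.2 hnd) (fun hh => D_sB.1 hh hd)
          rw [mul_assoc, sB_cancel] at this
          exact hc this
        have h4 := len_sB_of_D hx hi' hD
        rw [← mul_assoc] at h4
        exact ⟨by omega, hD⟩
    rw [← mul_assoc]
    by_cases hB : (D w i ∧ len N (sB i * w * T k j) = len N (sB i * w) + 1)
    · obtain ⟨a1, a2⟩ := hA.2 hB
      rw [if_pos a1, if_pos a2, if_pos hB.1, if_pos hB.2]
    · have hB' := mt hA.1 hB
      rw [not_and] at hB hB'
      by_cases c1 : len N (w * T k j) = len N w + 1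
      · rw [if_pos c1, if_neg (hB' c1), mul_zero]
        by_cases c2 : D w i
        · rw [if_pos c2, if_neg (hB c2)]
        · rw [if_neg c2]
      · rw [if_neg c1]
        by_cases c2 : D w i
        · rw [if_pos c2, if_neg (hB c2)]
        · rw [if_neg c2]

lemma sum_sign {N : ℕ} {v : ℤ} (hv : v ≠ 0) (h1 : -(N : ℤ) < v) (h2 : v < N) (c : ℤ) :
    ∑ i ∈ Finset.range N, (if sB i v = v then 0 else if sB i v < v then c else -c) = 0 := by
  have hs : ({v.natAbs, v.natAbs - 1} : Finset ℕ) ⊆ Finset.range N := by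
    intro x hx
    simp only [Finset.mem_insert, Finset.mem_singleton] at hx
    rw [Finset.mem_range]; omega
  rw [← Finset.sum_subset hs, Finset.sum_pair (by omega)]
  · rcases lt_or_gt_of_ne hv with h | h
    · have e1 : sB v.natAbs v = v - 1 := by
        rw [sB_apply]; unfold lo hi; split_ifs <;> omega
      have e2 : sB (v.natAbs - 1) v = if v = -1 then 1 else v + 1 := by
        rw [sB_apply]; unfold lo hi; split_ifs <;> omega
      have e3 : v < sB (v.natAbs - 1) v := by rw [e2]; split_ifs <;> omega
      rw [if_neg (by omega), if_pos (by omega), if_neg (by omega), if_neg (by omega)]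
      ring
    · have e1 : sB v.natAbs v = v + 1 := by
        rw [sB_apply]; unfold lo hi; split_ifs <;> omega
      have e2 : sB (v.natAbs - 1) v = if v = 1 then -1 else v - 1 := by
        rw [sB_apply]; unfold lo hi; split_ifs <;> omega
      have e3 : sB (v.natAbs - 1) v < v := by rw [e2]; split_ifs <;> omega
      rw [if_neg (by omega), if_neg (by omega), if_neg (by omega), if_pos (by omega)]
      ring
  · intro i _ hi
    simp only [Finset.mem_insert, Finset.mem_singleton, not_or] at hi
    rw [if_pos]
    rw [sB_apply]
    unfold lo BW.hi
    split_ifs <;> omega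

lemma D_lt {N : ℕ} {w : Perm ℤ} (h : SP N w) {i : ℕ} (hd : D w i) : i < N := by
  by_contra hc
  unfold D at hd
  have e1 : w⁻¹ (hi i) = hi i := h.inv.supp _ (by unfold hi; omega)
  have e2 : w⁻¹ (lo i) ≤ lo i := by
    by_cases h0 : i = 0
    · have := h.inv.supp' (x := lo i) (by unfold lo; rw [if_pos h0]; omega)
      omega
    · by_cases h1 : i = N
      · have := h.inv.le (x := lo i) (by unfold lo; rw [if_neg h0]; omega)
        unfold lo at *; rw [if_neg h0] at *; omega
      · have := h.inv.supp (lo i) (by unfold lo; rw [if_neg h0]; omega)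
        omega
  have := lo_lt_hi i
  omega

open Classical in
theorem transition {M : ℕ} {k : ℤ} (hk : k ≠ 0) (hk1 : -(M : ℤ) ≤ k) (hk2 : k ≤ M) :
    ∀ (L : ℕ) (w : Perm ℤ), SP M w → len (M + 1) w = L → G (M + 1) k w = 0 := by
  intro L
  induction L with
  | zero => ?_
  | succ L ih => ?_
  all_goals
    intro w hM hL
    have h : SP (M + 1) w := hM.mono (by omega)
    have hk1' : -((M + 1 : ℕ) : ℤ) ≤ k := by push_cast; omega
    have hk2' : k ≤ ((M + 1 : ℕ) : ℤ) := by push_cast; omega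
    have step : G (M + 1) k w = ∑ i ∈ Finset.range (M + 1),
        if D w i then G (M + 1) k (sB i * w) else 0 := by
      have e1 : G (M + 1) k w = ∑ j ∈ J (M + 1) k, ∑ i ∈ Finset.range (M + 1),
          (if len (M + 1) (w * T k j) = len (M + 1) w + 1 then
          (if j < k then 1 else -1) *
            (if D (w * T k j) i then (f (M + 1) (sB i * (w * T k j)) : ℤ) else 0) else 0) := by
        unfold G
        refine Finset.sum_congr rfl fun j hj => ?_
        obtain ⟨⟨hj1, hj2⟩, hj0, hjk⟩ := mem_J.1 hj
        have hx : SP (M + 1) (w * T k j) := h.mul (SP.T hk hj0 hk2' hk1' hj2 hj1)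
        by_cases hc : len (M + 1) (w * T k j) = len (M + 1) w + 1
        · simp only [if_pos hc]
          rw [← Finset.mul_sum, f_rec hx]
          · push_cast; rfl
          · intro h1
            rw [h1, len_one] at hc; omega
        · simp only [if_neg hc, Finset.sum_const_zero]
      rw [e1]
      rw [Finset.sum_congr rfl fun j hj => Finset.sum_congr rfl fun i hi =>
        term_eq h hk hk1' hk2' hj (Finset.mem_range.1 hi)]
      rw [Finset.sum_comm]
      simp only [Finset.sum_add_distrib]
      have e2 : ∑ i ∈ Finset.range (M + 1), ∑ j ∈ J (M + 1) k,
          (if w j = sB i (w k) then (if w j < w k then (f (M + 1) w : ℤ)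
            else -(f (M + 1) w : ℤ)) else 0) = 0 := by
        refine Eq.trans (Finset.sum_congr rfl fun i hi => ?_)
          (sum_sign (N := M + 1) (h.ne_zero hk) (v := w k)
          (by have := hM.ge hk1; push_cast; omega)
          (by have := hM.le hk2; push_cast; omega) (f (M + 1) w : ℤ))
        have hi := Finset.mem_range.1 hi
        by_cases hc : sB i (w k) = w k
        · rw [if_pos hc]
          refine Finset.sum_eq_zero fun j hj => ?_
          rw [if_neg]
          rw [hc]
          exact fun hh => (mem_J.1 hj).2.2 (w.injective hh)
        · rw [if_neg hc]
          have hsi : SP (M + 1) (sB i) := SP.sB hi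
          rw [Finset.sum_eq_single (w⁻¹ (sB i (w k)))]
          · simp
          · intro j _ hj
            rw [if_neg]
            intro hh
            rw [← hh] at hj
            simp at hj
          · intro hh
            exfalso
            apply hh
            rw [mem_J]
            refine ⟨⟨h.inv.ge (hsi.ge (h.ge hk1')), h.inv.le (hsi.le (h.le hk2'))⟩,
              h.inv.ne_zero (hsi.ne_zero (h.ne_zero hk)), ?_⟩
            intro hh
            rw [Perm.inv_eq_iff_eq] at hh
            exact hc hh
      rw [e2, add_zero]
      refine Finset.sum_congr rfl fun i _ => ?_
      split_ifs with hd
      · rfl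
      · exact Finset.sum_const_zero
    rw [step]
    refine Finset.sum_eq_zero fun i hi => ?_
    split_ifs with hd
    · have hl := len_sB_of_D h (Finset.mem_range.1 hi) hd
      first
      | omega
      | exact ih _ ((SP.sB (D_lt hM hd)).mul hM) (by omega)
    · rfl

end BW

namespace BW

open Equiv

lemma three_up {N : ℕ} {w : Perm ℤ} (h : SP N w) {i k j : ℤ} (hi0 : i ≠ 0) (hk0 : k ≠ 0)
    (hj0 : j ≠ 0) (h1 : i < k) (h2 : k < j) (d1 : i ≠ -k) (d2 : k ≠ -j) (d3 : i ≠ -j)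
    (hi1 : -(N : ℤ) ≤ i) (hj1 : j ≤ N) (w1 : w i < w k) (w2 : w k < w j) :
    len N w + 3 ≤ len N (w * T i j) := by
  have t1 : SP N (T i k) := SP.T hi0 hk0 (by omega) (by omega) (by omega) (by omega)
  have t2 : SP N (T k j) := SP.T hk0 hj0 (by omega) (by omega) (by omega) (by omega)
  have a1 := len_up h hi0 hk0 hi1 (by omega) h1 w1
  have a2 := len_up (h.mul t1) hk0 hj0 (by omega) hj1 h2 (by
    simp only [Perm.mul_apply, T_apply hi0 hk0]
    have e1 : T i k k = i := T_right hi0 hk0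
    simp only [T_apply hi0 hk0] at e1
    rw [e1, if_neg (by omega), if_neg (by omega), if_neg (by omega), if_neg (by omega)]
    omega)
  have a3 := len_up ((h.mul t1).mul t2) hi0 hk0 hi1 (by omega) h1 (by
    simp only [Perm.mul_apply]
    have e1 : T k j k = j := T_left hk0 hj0
    have e2 : T i k j = j := by
      rw [T_apply hi0 hk0]; split_ifs <;> omega
    have e3 : T k j i = i := by
      rw [T_apply hk0 hj0]; split_ifs <;> omega
    have e4 : T i k i = k := T_left hi0 hk0
    rw [e1, e2, e3, e4]; omega)
  have e : w * T i k * T k j * T i k = w * T i j := by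
    have e2 : T i k j = j := by
      rw [T_apply hi0 hk0]; split_ifs <;> omega
    have e4 : T i k k = i := T_right hi0 hk0
    have := conj t1.odd hk0 hj0 (by rw [e4]; exact hi0) (by rw [e2]; exact hj0)
    rw [e2, e4] at this
    rw [mul_assoc w, this, ← mul_assoc, T_cancel hi0 hk0]
  rw [e] at a3
  omega

open Classical in
theorem step {M : ℕ} {w : Perm ℤ} (h : SP M w) {r s q : ℤ} {d : ℕ} (hr : 1 ≤ r) (hrs : r < s)
    (hs : s ≤ M) (hmono : StrictMonoOn w (Set.Ioi r)) (hsr : w s < w r)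
    (hgt : ∀ p, s < p → w r < w p) (hd : 1 ≤ d) (hdM : d < M) (hws : w s = -(d : ℤ))
    (hsmall : ∀ p, 1 ≤ p → p < r → -(d : ℤ) < w p ∧ w p < d)
    (hqr : r < q) (hq : w q = (d : ℤ) + 1) :
    len (M + 1) (sB d * (w * T r s)) = len (M + 1) w ∧
      f (M + 1) (sB d * (w * T r s)) = f (M + 1) w := by
  have hr0 : r ≠ 0 := by omega
  have hs0 : s ≠ 0 := by omega
  have hq0 : q ≠ 0 := by omega
  have hsq : s < q := by
    by_contra hc
    have : q ≠ s := by rintro rfl; omega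
    have := hmono (show q ∈ Set.Ioi r from hqr) (show s ∈ Set.Ioi r from hrs) (by omega)
    omega
  have hwrq := hgt q hsq
  have hqM : q ≤ M := by
    by_contra hc
    have := h.supp q (by omega)
    omega
  have hT : SP M (T r s) := SP.T hr0 hs0 (by omega) (by omega) (by omega) (by omega)
  set v := w * T r s with hv
  have hvM : SP M v := h.mul hT
  have hv1 : SP (M + 1) v := hvM.mono (by omega)
  have vr : v r = -(d : ℤ) := by rw [hv, Perm.mul_apply, T_left hr0 hs0, hws]
  have vs : v s = w r := by rw [hv, Perm.mul_apply, T_right hr0 hs0]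
  have vo : ∀ p, 1 ≤ p → p ≠ r → p ≠ s → v p = w p := by
    intro p h1 h2 h3
    rw [hv, Perm.mul_apply, T_apply hr0 hs0]
    congr 1
    split_ifs <;> omega
  have vq : v q = (d : ℤ) + 1 := by rw [vo q (by omega) (by omega) (by omega), hq]
  have hd0 : d ≠ 0 := by omega
  have i1 : v⁻¹ (lo d) = -r := by
    rw [Perm.inv_eq_iff_eq, hvM.odd, vr]; simp [lo, hd0]
  have i2 : v⁻¹ (hi d) = q := by
    rw [Perm.inv_eq_iff_eq, vq]; rfl
  have e1 : sB d * v = v * T r (-q) := by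
    rw [sB_mul_eq hvM, i1, i2, ← T_neg (by omega) (by omega), neg_neg]
  have hnD : ¬ D v d := by
    unfold D; rw [i1, i2]; omega
  have hl' := len_sB_of_not_D hv1 (by omega : d < M + 1) hnD
  have hw'M : SP (M + 1) (sB d * v) := (SP.sB (by omega)).mul hv1
  have hG := transition hr0 (by omega) (by omega) _ v hvM rfl
  have hvw : v * T r s = w := T_cancel hr0 hs0 w
  unfold G at hG
  have hmem : ({s, -q} : Finset ℤ) ⊆ J (M + 1) r := by
    intro x hx
    simp only [Finset.mem_insert, Finset.mem_singleton] at hx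
    rw [mem_J]; push_cast; omega
  rw [← Finset.sum_subset hmem, Finset.sum_pair (by omega)] at hG
  · rw [← e1, hvw, if_pos hl', if_neg (by omega : ¬ s < r), if_pos (by omega : -q < r)] at hG
    have hf := f_pos hw'M
    by_cases hc : len (M + 1) w = len (M + 1) v + 1
    · rw [if_pos hc] at hG
      constructor <;> omega
    · rw [if_neg hc] at hG
      omega
  · intro j hj hj2
    obtain ⟨⟨hj1, hj2'⟩, hj0, hjr⟩ := mem_J.1 hj
    simp only [Finset.mem_insert, Finset.mem_singleton, not_or] at hj2
    push_cast at hj1 hj2'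
    rw [if_neg]
    intro hcov
    have key := (len_T_iff hv1 hr0 hj0 (by push_cast; omega) (by push_cast; omega)
      (by push_cast; omega) (by push_cast; omega) hjr).1 (by omega)
    rcases lt_or_gt_of_ne hjr with hlt | hlt
    · have hvj := key.1 hlt
      rw [vr] at hvj
      -- `j = -p`
      have hp : ¬ (1 ≤ j) := by
        intro h1
        rw [vo j h1 (by omega) (by omega)] at hvj
        have := hsmall j h1 hlt
        omega
      obtain ⟨p, rfl⟩ : ∃ p, j = -p := ⟨-j, by ring⟩
      rw [hvM.odd] at hvj
      have hpr : r < p := by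
        by_contra hc
        by_cases hpr : p = r
        · rw [hpr, vr] at hvj; omega
        · rw [vo p (by omega) hpr (by omega)] at hvj
          have := hsmall p (by omega) (by omega)
          omega
      have hps : p ≠ s := by
        rintro rfl
        rw [vs] at hvj
        omega
      have hvp := vo p (by omega) (by omega) hps
      have hne : w p ≠ w q := fun hh => by have := w.injective hh; omega
      have hpq : q < p := by
        by_contra hc
        have := hmono (show p ∈ Set.Ioi r from hpr) (show q ∈ Set.Ioi r from hqr) (by omega)
        omega
      have := three_up hv1 (i := -p) (k := -q) (j := r) (by omega) (by omega) hr0 (by omega)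
        (by omega) (by omega) (by omega) (by omega) (by push_cast; omega) (by push_cast; omega)
        (by rw [hvM.odd, hvM.odd]; omega) (by rw [hvM.odd]; omega)
      rw [T_comm (by omega) hr0] at this
      omega
    · have hvj : v r < v j := by
        have : v j ≠ v r := fun hh => hjr (v.injective hh)
        have h3 : ¬ j < r := by omega
        have h4 : ¬ v j < v r := fun hh => h3 (key.2 hh)
        omega
      rw [vr] at hvj
      rcases lt_or_gt_of_ne hj2.1 with hl | hl
      · have := hmono (show j ∈ Set.Ioi r from hlt) (show s ∈ Set.Ioi r from hrs) hl
        rw [vo j (by omega) (by omega) (by omega)] at hvj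
        omega
      · have := three_up hv1 (i := r) (k := s) (j := j) (by omega) (by omega) (by omega) (by omega)
          (by omega) (by omega) (by omega) (by omega) (by push_cast; omega) (by push_cast; omega)
          (by omega) (by
            rw [vs, vo j (by omega) (by omega) (by omega)]; exact hgt j hl)
        omega

end BW

namespace BW

open Equiv

lemma sB_fix {d : ℕ} {x : ℤ} (hd : 1 ≤ d) (h1 : x ≠ d) (h2 : x ≠ -d) (h3 : x ≠ d + 1)
    (h4 : x ≠ -(d + 1)) : sB d x = x := by
  rw [sB_apply]; unfold lo hi; split_ifs <;> omega

theorem pass {M : ℕ} {r : ℤ} (hr : 1 ≤ r) : ∀ (Jn : ℕ) (w : Perm ℤ) (M0 : ℕ), SP M w →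
    StrictMonoOn w (Set.Ioi r) →
    (∀ p, 1 ≤ p → p ≤ r → -(M0 : ℤ) ≤ w p ∧ w p ≤ M0) →
    (∀ p, r < p → w p < w r → w p < -(M0 : ℤ)) →
    (∀ a : ℤ, (M0 : ℤ) < a → (w⁻¹ a < 0 ↔ (a ≤ M0 + 2 * Jn ∧ (a - M0) % 2 = 1))) →
    M0 + 2 * Jn ≤ M →
    ∃ w', SP M w' ∧ len (M + 1) w' = len (M + 1) w ∧ f (M + 1) w' = f (M + 1) w ∧
      (∀ p, 1 ≤ p → p < r → w' p = w p) ∧ StrictMonoOn w' (Set.Ioi (r - 1)) ∧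
      (∀ a : ℤ, 1 ≤ a → a ≤ M0 → (w'⁻¹ a < 0 ↔ w⁻¹ a < 0)) ∧
      (∀ a : ℤ, (M0 : ℤ) < a → (w'⁻¹ a < 0 ↔ (a ≤ M0 + 2 * Jn ∧ (a - M0) % 2 = 0))) := by
  intro Jn
  induction Jn with
  | zero =>
    intro w M0 h hmono hsmall hbig hneg hM
    have hnn : ∀ p, r < p → w r < w p := by
      intro p hp
      by_contra hc
      have hne : w p ≠ w r := fun hh => by have := w.injective hh; omega
      have h1 := hbig p hp (by omega)
      have h2 := (hneg (-(w p)) (by omega)).1 (by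
        rw [h.inv.odd]; simp; omega)
      push_cast at h2
      omega
    refine ⟨w, h, rfl, rfl, fun _ _ _ => rfl, ?_, fun _ _ _ => Iff.rfl, ?_⟩
    · intro x hx y hy hxy
      simp only [Set.mem_Ioi] at hx hy
      by_cases hxr : x = r
      · rw [hxr]; exact hnn y (by omega)
      · exact hmono (show r < x by omega) (show r < y by omega) hxy
    · intro a ha
      rw [hneg a ha]
      push_cast
      omega
  | succ Jn ih =>
    intro w M0 h hmono hsmall hbig hneg hM
    have hoff : ∀ p, 1 ≤ p → ∀ a : ℤ, (M0 : ℤ) < a → (w p = a ∨ w p = -a) → r < p := by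
      intro p hp a ha h1
      by_contra hc
      have := hsmall p hp (by omega)
      omega
    obtain ⟨s, hs⟩ : ∃ s, s = - w⁻¹ ((M0 : ℤ) + 1) := ⟨_, rfl⟩
    have hs1 : 1 ≤ s := by
      have := (hneg ((M0 : ℤ) + 1) (by omega)).2 ⟨by push_cast; omega, by omega⟩
      omega
    have hws : w s = -((M0 + 1 : ℕ) : ℤ) := by
      rw [hs, h.odd]; simp
    push_cast at hws
    have hrs : r < s := hoff s hs1 (M0 + 1) (by omega) (by omega)
    obtain ⟨q, hqq⟩ : ∃ q, q = w⁻¹ ((M0 : ℤ) + 2) := ⟨_, rfl⟩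
    have hwq : w q = (M0 : ℤ) + 2 := by rw [hqq]; simp
    have hq1 : 1 ≤ q := by
      have h1 : ¬ (q < 0) := by
        rw [hqq, hneg _ (by omega)]
        omega
      have h2 : q ≠ 0 := by
        rintro rfl
        rw [h.zero] at hwq; omega
      omega
    have hqr : r < q := hoff q hq1 (M0 + 2) (by omega) (by omega)
    have hsM : s ≤ M := by
      have := h.inv.ge (x := (M0 : ℤ) + 1) (by omega)
      omega
    have hwr := hsmall r hr le_rfl
    have hgt : ∀ p, s < p → w r < w p := by
      intro p hp
      have h1 := hmono (show r < s from hrs) (show r < p by omega) hp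
      have hne : w p ≠ w r := fun hh => by have := w.injective hh; omega
      by_contra hc
      have := hbig p (by omega) (by omega)
      omega
    have hlt : ∀ p, r < p → p < s → w p < -((M0 : ℤ) + 1) := by
      intro p hp hps
      have h1 := hmono (show r < p from hp) (show r < s from hrs) hps
      omega
    have hr0 : r ≠ 0 := by omega
    have hs0 : s ≠ 0 := by omega
    obtain ⟨l1, f1⟩ := step (d := M0 + 1) h hr hrs hsM hmono (by omega) hgt (by omega) (by omega)
      (by push_cast; omega) (fun p h1 h2 => by
        have := hsmall p h1 (by omega); push_cast; omega) hqr (by push_cast; omega)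
    have hT : SP M (T r s) := SP.T hr0 hs0 (by omega) (by omega) (by omega) (by omega)
    have hsd : SP M (sB (M0 + 1)) := SP.sB (by omega)
    have hv := hsd.mul (h.mul hT)
    have hTinv : (T r s)⁻¹ = T r s := inv_eq_of_mul_eq_one_left (T_mul_self hr0 hs0)
    have hsinv : (sB (M0 + 1))⁻¹ = sB (M0 + 1) := inv_eq_of_mul_eq_one_left (sB_mul_self _)
    set v := sB (M0 + 1) * (w * T r s) with hvdef
    have vr : v r = -((M0 : ℤ) + 2) := by
      rw [hvdef, Perm.mul_apply, Perm.mul_apply, T_left hr0 hs0, hws, sB_apply]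
      simp only [lo, hi]; push_cast
      split_ifs <;> omega
    have vs : v s = w r := by
      rw [hvdef, Perm.mul_apply, Perm.mul_apply, T_right hr0 hs0]
      apply sB_fix <;> push_cast <;> omega
    have vq : v q = (M0 : ℤ) + 1 := by
      have e : T r s q = q := by
        rw [T_apply hr0 hs0]
        have : q ≠ s := by rintro rfl; omega
        split_ifs <;> omega
      rw [hvdef, Perm.mul_apply, Perm.mul_apply, e, hwq, sB_apply]
      simp only [lo, hi]; push_cast
      split_ifs <;> omega
    have vo : ∀ p, 1 ≤ p → p ≠ r → p ≠ s → p ≠ q → v p = w p := by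
      intro p h1 h2 h3 h4
      have e : T r s p = p := by
        rw [T_apply hr0 hs0]
        split_ifs <;> omega
      rw [hvdef, Perm.mul_apply, Perm.mul_apply, e]
      have n1 : w p ≠ w s := fun hh => h3 (w.injective hh)
      have n2 : w p ≠ w q := fun hh => h4 (w.injective hh)
      have n3 : w p ≠ w (-s) := fun hh => by have := w.injective hh; omega
      have n4 : w p ≠ w (-q) := fun hh => by have := w.injective hh; omega
      rw [h.odd] at n3 n4
      apply sB_fix <;> push_cast <;> omega
    have vinv : ∀ a, v⁻¹ a = T r s (w⁻¹ (sB (M0 + 1) a)) := by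
      intro a
      rw [hvdef, mul_inv_rev, mul_inv_rev, hTinv, hsinv]; rfl
    have Tsign : ∀ x, T r s x < 0 ↔ x < 0 := by
      intro x
      rw [T_apply hr0 hs0]
      split_ifs <;> omega
    have vneg : ∀ a : ℤ, 1 ≤ a → a ≠ M0 + 1 → a ≠ M0 + 2 → (v⁻¹ a < 0 ↔ w⁻¹ a < 0) := by
      intro a h1 h2 h3
      rw [vinv, Tsign, sB_fix] <;> push_cast <;> omega
    have A1 : StrictMonoOn v (Set.Ioi r) := by
      intro x hx y hy hxy
      simp only [Set.mem_Ioi] at hx hy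
      have m0 := hmono (show r < x from hx) (show r < y from hy) hxy
      have nd : ∀ p, 1 ≤ p → w p ≠ (M0 : ℤ) + 1 := by
        intro p hp hh
        have : w p = w (-s) := by rw [h.odd, hws, hh]; ring
        have := w.injective this
        omega
      have ndx := nd x (by omega)
      have hsq : s ≠ q := by rintro hh; rw [hh, hwq] at hws; omega
      have ex : v x = if x = s then w r else if x = q then (M0 : ℤ) + 1 else w x := by
        split_ifs with c1 c2
        · rw [c1, vs]
        · rw [c2, vq]
        · exact vo x (by omega) (by omega) c1 c2
      have ey : v y = if y = s then w r else if y = q then (M0 : ℤ) + 1 else w y := by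
        split_ifs with c1 c2
        · rw [c1, vs]
        · rw [c2, vq]
        · exact vo y (by omega) (by omega) c1 c2
      have g1 := hlt x hx
      have g2 := hgt y
      rw [ex, ey]
      have t1 : x = s → w x = w s := fun hh => by rw [hh]
      have t2 : x = q → w x = w q := fun hh => by rw [hh]
      have t3 : y = s → w y = w s := fun hh => by rw [hh]
      have t4 : y = q → w y = w q := fun hh => by rw [hh]
      clear ex ey
      by_cases c1 : x = s <;> by_cases c2 : x = q <;> by_cases c3 : y = s <;>
        by_cases c4 : y = q <;> simp only [c1, c2, c3, c4, if_true, if_false] <;> omega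
    have A2 : ∀ p, 1 ≤ p → p ≤ r → -((M0 + 2 : ℕ) : ℤ) ≤ v p ∧ v p ≤ (M0 + 2 : ℕ) := by
      intro p h1 h2
      push_cast
      by_cases hpr : p = r
      · rw [hpr, vr]; omega
      · rw [vo p h1 hpr (by omega) (by omega)]
        have := hsmall p h1 h2
        omega
    have A3 : ∀ p, r < p → v p < v r → v p < -((M0 + 2 : ℕ) : ℤ) := by
      intro p _ h2
      rw [vr] at h2
      push_cast; omega
    have A4 : ∀ a : ℤ, ((M0 + 2 : ℕ) : ℤ) < a → (v⁻¹ a < 0 ↔ (a ≤ (M0 + 2 : ℕ) + 2 * Jn ∧ (a - (M0 + 2 : ℕ)) % 2 = 1)) := by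
      intro a ha
      push_cast at ha ⊢
      rw [vneg a (by omega) (by omega) (by omega), hneg a (by omega)]
      push_cast
      omega
    obtain ⟨w', k1, k2, k3, k4, k5, k6, k7⟩ := ih v (M0 + 2) hv A1 A2 A3 A4 (by omega)
    · refine ⟨w', k1, k2.trans l1, k3.trans f1, ?_, k5, ?_, ?_⟩
      · intro p h1 h2
        rw [k4 p h1 h2, vo p h1 (by omega) (by omega) (by omega)]
      · intro a h1 h2
        rw [k6 a h1 (by push_cast; omega), vneg a h1 (by omega) (by omega)]
      · intro a ha
        by_cases a1 : a = M0 + 1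
        · rw [k6 a (by omega) (by push_cast; omega), a1, ← vq]
          simp; rw [vq]; omega
        · by_cases a2 : a = M0 + 2
          · rw [k6 a (by omega) (by push_cast; omega)]
            have : a = v (-r) := by rw [hv.odd, vr]; omega
            rw [this]; simp; rw [hv.odd, vr]; omega
          · rw [k7 a (by push_cast; omega)]
            push_cast
            omega

end BW

namespace BW

open Equiv

/-- the signed permutation `[1,…,k,-(k+1),…,-n]` -/
def u (n k : ℕ) : Perm ℤ := w0B n * w0B k

lemma w0B_apply (n : ℕ) (x : ℤ) : w0B n x = if -(n : ℤ) ≤ x ∧ x ≤ (n : ℤ) then -x else x := rfl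

lemma u_apply {n k : ℕ} (hk : k ≤ n) (x : ℤ) :
    u n k x = if (-(k : ℤ) ≤ x ∧ x ≤ k) ∨ x < -(n : ℤ) ∨ (n : ℤ) < x then x else -x := by
  unfold u
  rw [Perm.mul_apply, w0B_apply, w0B_apply]
  split_ifs <;> omega

lemma u_inv {n k : ℕ} (hk : k ≤ n) : (u n k)⁻¹ = u n k := by
  apply inv_eq_of_mul_eq_one_left
  ext x
  rw [Perm.mul_apply, u_apply hk, u_apply hk, Perm.one_apply]
  split_ifs <;> omega

lemma u_SP {n k : ℕ} (hk : k ≤ n) : SP n (u n k) := by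
  constructor
  · intro x
    rw [u_apply hk, u_apply hk]
    split_ifs <;> omega
  · intro x hx
    rw [u_apply hk, if_pos (by omega)]

theorem chain {n k : ℕ} (hk : k ≤ n) : ∀ m r : ℕ, m + r = n →
    ∃ w, SP (2 * n) w ∧ len (2 * n + 1) w = len (2 * n + 1) (u n k) ∧
      f (2 * n + 1) w = f (2 * n + 1) (u n k) ∧
      (∀ p : ℤ, 1 ≤ p → p ≤ r → w p = u n k p) ∧ StrictMonoOn w (Set.Ioi (r : ℤ)) ∧
      (∀ a : ℤ, 1 ≤ a → (w⁻¹ a < 0 ↔ ((k : ℤ) < a ∧ a ≤ r) ∨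
        (((2 * max r k - r : ℕ) : ℤ) < a ∧ a ≤ 2 * n - r ∧ (a - r) % 2 = 1))) := by
  intro m
  induction m with
  | zero =>
    intro r hr
    have hr : r = n := by omega
    subst hr
    refine ⟨u r k, (u_SP hk).mono (by omega), rfl, rfl, fun _ _ _ => rfl, ?_, ?_⟩
    · intro x hx y hy hxy
      simp only [Set.mem_Ioi] at hx hy
      rw [(u_SP hk).supp x hx, (u_SP hk).supp y hy]; exact hxy
    · intro a ha
      rw [u_inv hk, u_apply hk]
      split_ifs <;> omega
  | succ m ih =>
    intro r hr
    obtain ⟨w, h1, h2, h3, h4, h5, h6⟩ := ih (r + 1) (by omega)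
    have hu : ∀ p : ℤ, 1 ≤ p → p ≤ (r + 1 : ℕ) → w p = p ∨ w p = -p := by
      intro p p1 p2
      rw [h4 p p1 p2, u_apply hk]
      split_ifs <;> omega
    obtain ⟨w', k1, k2, k3, k4, k5, k6, k7⟩ := pass (M := 2 * n) (r := ((r + 1 : ℕ) : ℤ))
      (by omega) (n - max (r + 1) k) w (2 * max (r + 1) k - (r + 1)) h1 h5
      (by
        intro p p1 p2
        have := hu p p1 p2
        omega)
      (by
        intro p p1 p2
        have hr1 := hu (r + 1 : ℕ) (by omega) (by omega)
        have hne : w p ≠ 0 := h1.ne_zero (by omega)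
        have b : ∀ x : ℤ, 1 ≤ x → x ≤ (r + 1 : ℕ) → w p ≠ x ∧ w p ≠ -x := by
          intro x x1 x2
          have n1 : w p ≠ w x := fun hh => by have := w.injective hh; omega
          have n2 : w p ≠ w (-x) := fun hh => by have := w.injective hh; omega
          rw [h1.odd] at n2
          have := hu x x1 x2
          omega
        have b1 := b (w p)
        have b2 := b (- w p)
        have hlt : w p < -((r + 1 : ℕ) : ℤ) := by omega
        have := (h6 (- w p) (by omega)).1 (by rw [h1.inv.odd]; simp; omega)
        omega)
      (by
        intro a ha
        rw [h6 a (by omega)]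
        omega)
      (by omega)
    refine ⟨w', k1, k2.trans h2, k3.trans h3, ?_, ?_, ?_⟩
    · intro p p1 p2
      rw [k4 p p1 (by push_cast; omega), h4 p p1 (by push_cast; omega)]
    · have : ((r + 1 : ℕ) : ℤ) - 1 = r := by push_cast; ring
      rwa [this] at k5
    · intro a ha
      by_cases hc : a ≤ ((2 * max (r + 1) k - (r + 1) : ℕ) : ℤ)
      · rw [k6 a ha hc, h6 a ha]
        omega
      · rw [k7 a (by omega)]
        omega

theorem chain_end {n k : ℕ} (hk : k ≤ n) :
    ∃ w, SP (2 * n) w ∧ len (2 * n + 1) w = len (2 * n + 1) (u n k) ∧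
      f (2 * n + 1) w = f (2 * n + 1) (u n k) ∧ StrictMonoOn w (Set.Ioi (0 : ℤ)) ∧
      (∀ a : ℤ, 1 ≤ a → (w⁻¹ a < 0 ↔ 2 * (k : ℤ) < a ∧ a ≤ 2 * n ∧ a % 2 = 1)) := by
  obtain ⟨w, h1, h2, h3, h4, h5, h6⟩ := chain hk n 0 (by omega)
  refine ⟨w, h1, h2, h3, by simpa using h5, ?_⟩
  intro a ha
  rw [h6 a ha]
  omega

end BW

namespace BW

open Equiv

noncomputable def Q (A : Finset ℕ) : ℚ :=
  ∏ a ∈ A, (((a.factorial : ℚ))⁻¹ *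
    ∏ b ∈ A, if b < a then (((a : ℚ) - b) / (a + b)) else 1)

lemma Q_insert {a : ℕ} {C : Finset ℕ} (ha : a ∉ C) :
    Q (insert a C) = Q C * (((a.factorial : ℚ))⁻¹ * ∏ b ∈ C, (|(a : ℚ) - b| / (a + b))) := by
  unfold Q
  rw [Finset.prod_insert ha, Finset.prod_insert ha, if_neg (lt_irrefl a), one_mul]
  have e : ∀ c ∈ C, (((c.factorial : ℚ))⁻¹ *
      ∏ b ∈ insert a C, if b < c then (((c : ℚ) - b) / (c + b)) else 1) =
      (((c.factorial : ℚ))⁻¹ * ∏ b ∈ C, if b < c then (((c : ℚ) - b) / (c + b)) else 1) *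
      (if a < c then (((c : ℚ) - a) / (c + a)) else 1) := by
    intro c _
    rw [Finset.prod_insert ha]; ring
  rw [Finset.prod_congr rfl e, Finset.prod_mul_distrib]
  have e2 : ∏ b ∈ C, (|(a : ℚ) - b| / (a + b)) =
      (∏ b ∈ C, if b < a then (((a : ℚ) - b) / (a + b)) else 1) *
      ∏ c ∈ C, (if a < c then (((c : ℚ) - a) / (c + a)) else 1) := by
    rw [← Finset.prod_mul_distrib]
    refine Finset.prod_congr rfl fun b hb => ?_
    have hne : b ≠ a := fun h => ha (h ▸ hb)
    rcases lt_or_gt_of_ne hne with h | h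
    · have hq : (b : ℚ) < a := by exact_mod_cast h
      rw [if_pos h, if_neg (by omega), abs_of_pos (by linarith), mul_one]
    · have hq : (a : ℚ) < b := by exact_mod_cast h
      rw [if_neg (by omega), if_pos h, abs_of_neg (by linarith), one_mul, neg_sub, add_comm (a : ℚ)]
  rw [e2]; ring

lemma Q_pos (A : Finset ℕ) : 0 < Q A := by
  unfold Q
  refine Finset.prod_pos fun a _ => mul_pos (by positivity) (Finset.prod_pos fun b _ => ?_)
  split_ifs with h
  · have hq : (b : ℚ) < a := by exact_mod_cast h
    have : (0 : ℚ) ≤ b := by positivity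
    apply div_pos <;> linarith
  · norm_num

open Polynomial in
lemma lagr (A : Finset ℕ) (hA : ∀ a ∈ A, 1 ≤ a) :
    ∑ a ∈ A, (a : ℚ) * ∏ b ∈ A.erase a,
      ((((a : ℚ) - 1 - b) * (a + b)) / ((a - 1 + b) * (a - b))) = ∑ a ∈ A, (a : ℚ) := by
  rcases A.eq_empty_or_nonempty with rfl | hne
  · simp
  have hc : 0 < A.card := Finset.card_pos.2 hne
  let y : ℕ → ℚ := fun a => a * (a - 1)
  let z : ℕ → ℚ := fun a => a * (a + 1)
  have hinj : Set.InjOn y A := by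
    intro a ha b hb hab
    have h1 : (1 : ℚ) ≤ a := by exact_mod_cast hA a ha
    have h2 : (1 : ℚ) ≤ b := by exact_mod_cast hA b hb
    have h3 : ((a : ℚ) - b) * (a - 1 + b) = 0 := by
      simp only [y] at hab; linear_combination hab
    rcases mul_eq_zero.1 h3 with h | h
    · have : (a : ℚ) = b := by linarith
      exact_mod_cast this
    · linarith
  let P : ℚ[X] := ∏ a ∈ A, (X - C (z a)) - ∏ a ∈ A, (X - C (y a))
  have hdeg : P.degree < A.card := by
    have d1 : (∏ a ∈ A, (X - C (z a))).degree = (A.card : WithBot ℕ) := by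
      rw [degree_prod]; simp
    have d2 : (∏ a ∈ A, (X - C (y a))).degree = (A.card : WithBot ℕ) := by
      rw [degree_prod]; simp
    have m1 := monic_prod_X_sub_C z A
    have m2 := monic_prod_X_sub_C y A
    have := degree_sub_lt_left (d1.trans d2.symm) m1.ne_zero (by rw [m1.leadingCoeff, m2.leadingCoeff])
    rwa [d1] at this
  have key := Lagrange.coeff_eq_sum hinj hdeg
  have e1 : P.coeff (A.card - 1) = -2 * ∑ a ∈ A, (a : ℚ) := by
    simp only [P]
    rw [coeff_sub, prod_X_sub_C_coeff_card_pred _ _ hc, prod_X_sub_C_coeff_card_pred _ _ hc,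
      neg_sub_neg, ← Finset.sum_sub_distrib, Finset.mul_sum]
    refine Finset.sum_congr rfl fun a _ => ?_
    simp only [y, z]; ring
  rw [e1] at key
  have e2 : ∑ a ∈ A, eval (y a) P / ∏ b ∈ A.erase a, (y a - y b) =
      -2 * ∑ a ∈ A, (a : ℚ) * ∏ b ∈ A.erase a,
      ((((a : ℚ) - 1 - b) * (a + b)) / ((a - 1 + b) * (a - b))) := by
    rw [Finset.mul_sum]
    refine Finset.sum_congr rfl fun a ha => ?_
    have : eval (y a) P = (-2 * a) * ∏ b ∈ A.erase a, (y a - z b) := by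
      simp only [P]
      rw [eval_sub, eval_prod, eval_prod, Finset.prod_eq_zero (i := a) (s := A)
        (f := fun j => eval (y a) (X - C (y j))) ha (by simp),
        sub_zero, ← Finset.mul_prod_erase _ _ ha]
      simp only [eval_sub, eval_X, eval_C]
      congr 1
      simp only [y, z]; ring
    rw [this, mul_div_assoc, ← Finset.prod_div_distrib, mul_assoc]
    congr 2
    refine Finset.prod_congr rfl fun b _ => ?_
    simp only [y, z]
    congr 1 <;> ring
  rw [e2] at key
  linarith

/-- `A` with `i+1` replaced by `i` (and dropped if `i = 0`) -/
def mv (A : Finset ℕ) (i : ℕ) : Finset ℕ :=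
  if i = 0 then A.erase 1 else insert i (A.erase (i + 1))

lemma mv_Q {A : Finset ℕ} (hA : ∀ a ∈ A, 1 ≤ a) {i : ℕ} (hi : i + 1 ∈ A) :
    (if i ∉ A then Q (mv A i) else 0) = Q A * (((i + 1 : ℕ) : ℚ) * ∏ b ∈ A.erase (i + 1),
      (((((i + 1 : ℕ) : ℚ) - 1 - b) * ((i + 1 : ℕ) + b)) /
        (((i + 1 : ℕ) - 1 + b) * ((i + 1 : ℕ) - b)))) := by
  have hne : i + 1 ∉ A.erase (i + 1) := Finset.notMem_erase _ _
  have hQ : Q A = Q (insert (i + 1) (A.erase (i + 1))) := by rw [Finset.insert_erase hi]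
  have hp : Q A * (((i + 1 : ℕ) : ℚ) * ∏ b ∈ A.erase (i + 1),
      (((((i + 1 : ℕ) : ℚ) - 1 - b) * ((i + 1 : ℕ) + b)) /
        (((i + 1 : ℕ) - 1 + b) * ((i + 1 : ℕ) - b)))) =
      Q (A.erase (i + 1)) * (((i.factorial : ℚ))⁻¹ *
        ∏ b ∈ A.erase (i + 1), (|(i : ℚ) - b| / (i + b))) := by
    rw [hQ, Q_insert hne]
    have : ∏ b ∈ A.erase (i + 1), (|(i : ℚ) - b| / (i + b)) =
        (∏ b ∈ A.erase (i + 1), (|((i + 1 : ℕ) : ℚ) - b| / ((i + 1 : ℕ) + b))) *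
        ∏ b ∈ A.erase (i + 1), (((((i + 1 : ℕ) : ℚ) - 1 - b) * ((i + 1 : ℕ) + b)) /
        (((i + 1 : ℕ) - 1 + b) * ((i + 1 : ℕ) - b))) := by
      rw [← Finset.prod_mul_distrib]
      refine Finset.prod_congr rfl fun b hb => ?_
      obtain ⟨hb1, hb2⟩ := Finset.mem_erase.1 hb
      have hb0 : (1 : ℚ) ≤ b := by exact_mod_cast hA b hb2
      have hi0 : (0 : ℚ) ≤ i := by positivity
      have n1 : (i : ℚ) + b ≠ 0 := by positivity
      have n2 : (i : ℚ) + 1 + b ≠ 0 := by positivity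
      push_cast
      have e : ((i : ℚ) + 1 - 1) = i := by ring
      rw [e]
      rcases lt_or_gt_of_ne hb1 with h | h
      · have hq : (b : ℚ) ≤ i := by exact_mod_cast Nat.lt_succ_iff.1 h
        have n3 : (i : ℚ) + 1 - b ≠ 0 := by
          have : 0 < (i : ℚ) + 1 - b := by linarith
          exact this.ne'
        rw [abs_of_nonneg (by linarith), abs_of_pos (by linarith)]
        field_simp
      · have hq : (i : ℚ) + 1 < b := by exact_mod_cast h
        have n3 : (i : ℚ) + 1 - b ≠ 0 := by
          have : (i : ℚ) + 1 - b < 0 := by linarith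
          exact this.ne
        rw [abs_of_neg (by linarith), abs_of_neg (by linarith)]
        field_simp
    rw [this, Nat.factorial_succ]
    have h1 : (i.factorial : ℚ) ≠ 0 := by positivity
    have h2 : ((i + 1 : ℕ) : ℚ) ≠ 0 := by positivity
    rw [Nat.cast_mul]
    field_simp
  rw [hp]
  by_cases hiA : i ∈ A
  · rw [if_neg (by simpa using hiA), Finset.prod_eq_zero (i := i)]
    · simp
    · exact Finset.mem_erase.2 ⟨by omega, hiA⟩
    · simp
  · rw [if_pos hiA]
    unfold mv
    split_ifs with h0
    · subst h0
      rw [Finset.prod_eq_one]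
      · simp
      · intro b hb
        have hb0 : (1 : ℚ) ≤ b := by exact_mod_cast hA b (Finset.mem_of_mem_erase hb)
        have : (b : ℚ) ≠ 0 := by positivity
        simp [this]
    · rw [Q_insert (fun h => hiA (Finset.mem_of_mem_erase h))]

lemma sum_shift {A : Finset ℕ} (hA : ∀ a ∈ A, 1 ≤ a) {N : ℕ} (hN : ∀ a ∈ A, a ≤ N)
    (g : ℕ → ℚ) : ∑ a ∈ A, g a = ∑ i ∈ Finset.range N, if i + 1 ∈ A then g (i + 1) else 0 := by
  have e : A = Finset.image (fun i => i + 1) ((Finset.range N).filter (fun i => i + 1 ∈ A)) := by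
    ext x
    simp only [Finset.mem_image, Finset.mem_filter, Finset.mem_range]
    constructor
    · intro hx
      have := hA x hx
      have := hN x hx
      exact ⟨x - 1, ⟨by omega, by rwa [Nat.sub_add_cancel (by omega)]⟩, by omega⟩
    · rintro ⟨i, ⟨_, h⟩, rfl⟩; exact h
  rw [← Finset.sum_filter]
  conv_lhs => rw [e]
  rw [Finset.sum_image (by intro a _ b _ h; simpa using h)]

lemma Q_rec {A : Finset ℕ} (hA : ∀ a ∈ A, 1 ≤ a) {N : ℕ} (hN : ∀ a ∈ A, a ≤ N) :
    (∑ i ∈ Finset.range N, if (i + 1 ∈ A ∧ i ∉ A) then Q (mv A i) else 0) =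
      (∑ a ∈ A, a : ℕ) * Q A := by
  push_cast
  rw [← lagr A hA, mul_comm, Finset.mul_sum, sum_shift hA hN]
  refine Finset.sum_congr rfl fun i _ => ?_
  by_cases h : i + 1 ∈ A
  · rw [if_pos h, ← mv_Q hA h]; simp [h]
  · rw [if_neg (fun hh => h hh.1), if_neg h]

lemma sum_mv {A : Finset ℕ} {i : ℕ} (hi : i + 1 ∈ A) (hiA : i ∉ A) :
    (∑ a ∈ mv A i, a) + 1 = ∑ a ∈ A, a := by
  have := Finset.add_sum_erase A (fun a => a) hi
  unfold mv
  split_ifs with h0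
  · subst h0; simp only [zero_add] at this ⊢; omega
  · rw [Finset.sum_insert (fun h => hiA (Finset.mem_of_mem_erase h))]
    omega

end BW

namespace BW

open Equiv

lemma grass_D {N : ℕ} {w : Perm ℤ} (h : SP N w) (hm : StrictMonoOn w (Set.Ioi (0 : ℤ)))
    {A : Finset ℕ} (hA : ∀ a : ℕ, a ∈ A ↔ 1 ≤ a ∧ w⁻¹ (a : ℤ) < 0) (i : ℕ) :
    D w i ↔ (i + 1 ∈ A ∧ i ∉ A) := by
  unfold D
  rw [hA, hA]
  by_cases h0 : i = 0
  · subst h0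
    have e1 : hi 0 = 1 := rfl
    have e2 : lo 0 = -1 := rfl
    rw [e1, e2, h.inv.odd]
    have e3 : ((0 + 1 : ℕ) : ℤ) = 1 := rfl
    rw [e3]
    constructor
    · intro hh
      exact ⟨⟨le_rfl, by omega⟩, fun hc => by omega⟩
    · rintro ⟨⟨_, hh⟩, _⟩
      omega
  · have e1 : hi i = ((i + 1 : ℕ) : ℤ) := by simp [hi]
    have e2 : lo i = (i : ℤ) := by simp [lo, h0]
    rw [e1, e2]
    obtain ⟨x, hx⟩ : ∃ x, x = w⁻¹ (i : ℤ) := ⟨_, rfl⟩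
    obtain ⟨y, hy⟩ : ∃ y, y = w⁻¹ ((i + 1 : ℕ) : ℤ) := ⟨_, rfl⟩
    have wx : w x = i := by rw [hx]; simp
    have wy : w y = (i : ℤ) + 1 := by rw [hy]; simp
    rw [← hx, ← hy]
    have x0 : x ≠ 0 := by rintro rfl; rw [h.zero] at wx; omega
    have y0 : y ≠ 0 := by rintro rfl; rw [h.zero] at wy; omega
    have p1 : 0 < x → 0 < y → x < y := by
      intro a b
      by_contra hc
      have : x ≠ y := by rintro rfl; omega
      have := hm (show (0 : ℤ) < y from b) (show (0 : ℤ) < x from a) (by omega)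
      omega
    have p2 : x < 0 → y < 0 → x < y := by
      intro a b
      by_contra hc
      have : x ≠ y := by rintro rfl; omega
      have := hm (show (0 : ℤ) < -x by omega) (show (0 : ℤ) < -y by omega) (by omega)
      rw [h.odd, h.odd] at this
      omega
    omega

lemma grass_mono {N : ℕ} {w : Perm ℤ} (h : SP N w) (hm : StrictMonoOn w (Set.Ioi (0 : ℤ)))
    {i : ℕ} (hd : D w i) : StrictMonoOn (sB i * w) (Set.Ioi (0 : ℤ)) := by
  intro x hx y hy hxy
  simp only [Set.mem_Ioi] at hx hy
  have h1 := hm (show (0 : ℤ) < x from hx) (show (0 : ℤ) < y from hy) hxy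
  rw [Perm.mul_apply, Perm.mul_apply]
  by_contra hc
  have hne : sB i (w x) ≠ sB i (w y) := fun hh => by
    have := w.injective ((sB i).injective hh); omega
  unfold D at hd
  rcases sB_order i (h.ne_zero (by omega)) (h.ne_zero (by omega)) h1 (by omega) with
    ⟨e1, e2⟩ | ⟨e1, e2⟩
  · rw [← e1, ← e2] at hd
    simp at hd; omega
  · have e3 : hi i = w (-x) := by rw [h.odd, e1]; ring
    have e4 : lo i = w (-y) := by rw [h.odd, e2]; ring
    rw [e3, e4] at hd
    simp at hd; omega

lemma grass_mv {N : ℕ} {w : Perm ℤ} (h : SP N w)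
    {A : Finset ℕ} (hA : ∀ a : ℕ, a ∈ A ↔ 1 ≤ a ∧ w⁻¹ (a : ℤ) < 0) {i : ℕ}
    (h1 : i + 1 ∈ A) (h2 : i ∉ A) (a : ℕ) :
    a ∈ mv A i ↔ 1 ≤ a ∧ (sB i * w)⁻¹ (a : ℤ) < 0 := by
  have hs : (sB i)⁻¹ = sB i := inv_eq_of_mul_eq_one_left (sB_mul_self i)
  rw [mul_inv_rev, hs, Perm.mul_apply]
  unfold mv
  have q1 := (hA _).1 h1
  have q2 := mt (hA _).2 h2
  split_ifs with h0
  · subst h0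
    rw [Finset.mem_erase, hA]
    by_cases ha : a = 1
    · subst ha
      have : sB 0 ((1 : ℕ) : ℤ) = -1 := by rw [sB_apply]; simp [lo, hi]
      rw [this, h.inv.odd]
      push_cast at q1 ⊢
      omega
    · by_cases ha1 : 1 ≤ a
      · have : sB 0 (a : ℤ) = a := by
          rw [sB_apply]; unfold lo hi; push_cast; split_ifs <;> omega
        rw [this]; tauto
      · tauto
  · rw [Finset.mem_insert, Finset.mem_erase, hA]
    by_cases ha : a = i
    · have : sB i (a : ℤ) = ((i + 1 : ℕ) : ℤ) := by
        rw [sB_apply]; unfold lo hi; push_cast; split_ifs <;> omega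
      rw [this]
      have : 1 ≤ a := by omega
      tauto
    · by_cases ha2 : a = i + 1
      · have : sB i (a : ℤ) = (i : ℤ) := by
          rw [sB_apply]; unfold lo hi; push_cast; split_ifs <;> omega
        rw [this]
        have : 1 ≤ i := by omega
        tauto
      · by_cases ha1 : 1 ≤ a
        · have : sB i (a : ℤ) = a := by
            apply sB_fix <;> omega
          rw [this]; tauto
        · tauto

open Classical in
theorem grass {N : ℕ} : ∀ (S : ℕ) (w : Perm ℤ) (A : Finset ℕ), SP N w →
    StrictMonoOn w (Set.Ioi (0 : ℤ)) → (∀ a : ℕ, a ∈ A ↔ 1 ≤ a ∧ w⁻¹ (a : ℤ) < 0) →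
    ∑ a ∈ A, a = S → len N w = S ∧ (f N w : ℚ) = S.factorial * Q A := by
  intro S
  induction S with
  | zero =>
    intro w A h hm hA hS
    have hE : A = ∅ := by
      rw [Finset.eq_empty_iff_forall_notMem]
      intro a ha
      have h1 := ((hA a).1 ha).1
      have h2 := Finset.sum_eq_zero_iff.1 hS a ha
      omega
    have : w = 1 := no_desc h (fun i _ hd => by
      have := ((grass_D h hm hA i).1 hd).1
      rw [hE] at this; simp at this)
    rw [this, len_one, f_one, hE]
    simp [Q]
  | succ S ih =>
    intro w A h hm hA hS
    have hw1 : w ≠ 1 := by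
      rintro rfl
      have hE : A = ∅ := by
        rw [Finset.eq_empty_iff_forall_notMem]
        intro a ha
        have := (hA a).1 ha
        simp at this
        omega
      rw [hE] at hS; simp at hS
    have sub : ∀ i < N, D w i → len N (sB i * w) = S ∧
        (f N (sB i * w) : ℚ) = S.factorial * Q (mv A i) := by
      intro i hi hd
      obtain ⟨d1, d2⟩ := (grass_D h hm hA i).1 hd
      have := sum_mv d1 d2
      exact ih _ _ ((SP.sB hi).mul h) (grass_mono h hm hd) (grass_mv h hA d1 d2) (by omega)
    constructor
    · by_contra hc
      apply hw1
      apply no_desc h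
      intro i hi hd
      have h1 := (sub i hi hd).1
      have h2 := len_sB_of_D h hi hd
      omega
    · rw [f_rec h hw1]
      push_cast
      have hN : ∀ a ∈ A, a ≤ N := by
        intro a ha
        by_contra hc
        have := h.inv.supp a (by omega)
        have := ((hA a).1 ha).2
        omega
      have := Q_rec (fun a ha => ((hA a).1 ha).1) hN
      rw [hS] at this
      rw [Nat.factorial_succ, Nat.cast_mul, mul_comm ((S + 1 : ℕ) : ℚ), mul_assoc, ← this,
        Finset.mul_sum]
      refine Finset.sum_congr rfl fun i hi => ?_
      have hi := Finset.mem_range.1 hi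
      by_cases hd : D w i
      · rw [if_pos hd, if_pos ((grass_D h hm hA i).1 hd), (sub i hi hd).2]
      · rw [if_neg hd, if_neg (fun hh => hd ((grass_D h hm hA i).2 hh)), mul_zero]

/-- The set of odd numbers between the two bounds. -/
def Ao (k n : ℕ) : Finset ℕ := (Finset.Ico k n).image (fun j => 2 * j + 1)

lemma mem_Ao {k n a : ℕ} : a ∈ Ao k n ↔ 2 * k < a ∧ a ≤ 2 * n ∧ a % 2 = 1 := by
  unfold Ao
  simp only [Finset.mem_image, Finset.mem_Ico]
  constructor
  · rintro ⟨j, hj, rfl⟩; omega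
  · intro h; exact ⟨a / 2, by omega, by omega⟩

lemma Ao_succ {k n : ℕ} (h : k ≤ n) : Ao k (n + 1) = insert (2 * n + 1) (Ao k n) := by
  ext a; rw [Finset.mem_insert, mem_Ao, mem_Ao]; omega

lemma Ao_notMem (k n : ℕ) : 2 * n + 1 ∉ Ao k n := by rw [mem_Ao]; omega

lemma Ao_self (k : ℕ) : Ao k k = ∅ := by simp [Ao]

lemma sum_Ao (k d : ℕ) : (∑ a ∈ Ao k (k + d), a) + k ^ 2 = (k + d) ^ 2 := by
  induction d with
  | zero => simp [Ao_self]
  | succ d ih =>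
    rw [← add_assoc, Ao_succ (by omega), Finset.sum_insert (Ao_notMem _ _)]
    have : (k + d + 1) ^ 2 = (k + d) ^ 2 + (2 * (k + d) + 1) := by ring
    omega

lemma Q_Ao_succ {k n : ℕ} (h : k ≤ n) : Q (Ao k (n + 1)) = Q (Ao k n) *
    ((((2 * n + 1).factorial : ℚ))⁻¹ * ∏ j ∈ Finset.Ico k n, (((n : ℚ) - j) / (n + j + 1))) := by
  rw [Ao_succ h, Q_insert (Ao_notMem k n)]
  congr 2
  unfold Ao
  rw [Finset.prod_image (by intro a _ b _ h; simpa using h)]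
  refine Finset.prod_congr rfl fun j hj => ?_
  have hj := (Finset.mem_Ico.1 hj).2
  have hq : (j : ℚ) < n := by exact_mod_cast hj
  have j0 : (0 : ℚ) ≤ j := by positivity
  push_cast
  rw [abs_of_pos (by linarith)]
  have n1 : (n : ℚ) + j + 1 ≠ 0 := by positivity
  have n2 : (2 : ℚ) * n + 1 + (2 * j + 1) ≠ 0 := by positivity
  field_simp
  ring

lemma Q_ratio (d : ℕ) : Q (Ao 0 (2 + d)) * (((2 + d : ℕ) : ℚ) ^ 2 * (((2 + d : ℕ) : ℚ) ^ 2 - 1)) =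
    Q (Ao 2 (2 + d)) := by
  induction d with
  | zero =>
    have e2 : Q (Ao 2 2) = 1 := by simp [Ao_self, Q]
    have e0 : Q (Ao 0 2) = 1 / 12 := by
      rw [Q_Ao_succ (by omega), Q_Ao_succ (by omega), Ao_self]
      simp [Q, Nat.factorial]
      norm_num
    rw [e2, e0]; norm_num
  | succ d ih =>
    rw [← add_assoc, Q_Ao_succ (by omega), Q_Ao_succ (by omega), ← ih,
      Finset.prod_eq_prod_Ico_succ_bot (by omega), Finset.prod_eq_prod_Ico_succ_bot (by omega)]
    have hF : ∃ F : ℚ, F = ∏ j ∈ Finset.Ico 2 (2 + d),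
      ((((2 + d : ℕ) : ℚ) - j) / ((2 + d : ℕ) + j + 1)) := ⟨_, rfl⟩
    obtain ⟨F, hF⟩ := hF
    have h11 : 0 + 1 + 1 = 2 := rfl
    rw [h11, ← hF]
    have : ((2 * (2 + d) + 1).factorial : ℚ) ≠ 0 := by positivity
    push_cast
    have n1 : (2 : ℚ) + d + 1 ≠ 0 := by positivity
    have n2 : (2 : ℚ) + d + 1 + 1 ≠ 0 := by positivity
    simp only [zero_add, add_zero, sub_zero]
    field_simp
    ring

lemma f_u {n k : ℕ} (hk : k ≤ n) : len (2 * n + 1) (u n k) + k ^ 2 = n ^ 2 ∧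
    (f (2 * n + 1) (u n k) : ℚ) = (n ^ 2 - k ^ 2).factorial * Q (Ao k n) := by
  obtain ⟨w, h1, h2, h3, h4, h5⟩ := chain_end hk
  have hs := sum_Ao k (n - k)
  rw [Nat.add_sub_cancel' hk] at hs
  have := grass (N := 2 * n + 1) (n ^ 2 - k ^ 2) w (Ao k n) (h1.mono (by omega)) h4 (by
    intro a
    rw [mem_Ao]
    constructor
    · intro ha
      exact ⟨by omega, (h5 a (by omega)).2 (by omega)⟩
    · rintro ⟨ha, hb⟩
      have := (h5 a (by omega)).1 hb
      omega) (by omega)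
  rw [h2, h3] at this
  exact ⟨by omega, this.2⟩

theorem f_ratio {n : ℕ} (hn : 2 ≤ n) :
    f (2 * n + 1) (u n 0) = (n ^ 2 - 2) * (n ^ 2 - 3) * f (2 * n + 1) (u n 2) := by
  obtain ⟨d, rfl⟩ := Nat.exists_eq_add_of_le hn
  have h0 := (f_u (n := 2 + d) (k := 0) (by omega)).2
  have h2 := (f_u (n := 2 + d) (k := 2) (by omega)).2
  have hr := Q_ratio d
  obtain ⟨e, he⟩ : ∃ e, (2 + d) ^ 2 = e + 4 := ⟨d ^ 2 + 4 * d, by ring⟩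
  have hq : (((2 + d : ℕ) : ℚ)) ^ 2 = e + 4 := by exact_mod_cast he
  rw [hq] at hr
  rw [he] at h0 h2 ⊢
  have e1 : e + 4 - 0 ^ 2 = e + 4 := by simp
  have e2 : e + 4 - 2 ^ 2 = e := by omega
  rw [e1] at h0
  rw [e2, ← hr] at h2
  have : (f (2 * (2 + d) + 1) (u (2 + d) 0) : ℚ) =
      ((e + 4 - 2 : ℕ) * (e + 4 - 3 : ℕ) : ℚ) * f (2 * (2 + d) + 1) (u (2 + d) 2) := by
    rw [h0, h2]
    have a1 : e + 4 - 2 = e + 2 := by omega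
    have a2 : e + 4 - 3 = e + 1 := by omega
    rw [a1, a2, Nat.factorial_succ, Nat.factorial_succ, Nat.factorial_succ, Nat.factorial_succ]
    push_cast
    ring
  exact_mod_cast this

lemma alphabet {n : ℕ} : ∀ (L : ℕ) (w : Perm ℤ), SP n w → len n w = L → ∀ N, n ≤ N →
    len N w = len n w ∧ f N w = f n w := by
  classical
  intro L
  induction L with
  | zero =>
    intro w h hL N hN
    have := (len_eq_zero h).1 hL
    subst this
    simp [len_one, f_one]
  | succ L ih =>
    intro w h hL N hN
    have hw : w ≠ 1 := by rintro rfl; rw [len_one] at hL; omega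
    have hN' := h.mono hN
    have sub : ∀ i, D w i → len N (sB i * w) = L ∧ f N (sB i * w) = f n (sB i * w) := by
      intro i hd
      have hi := D_lt h hd
      have h1 := len_sB_of_D h hi hd
      have := ih _ ((SP.sB hi).mul h) (by omega) N hN
      exact ⟨by omega, this.2⟩
    constructor
    · by_contra hc
      apply hw
      apply no_desc h
      intro i hi hd
      have h1 := (sub i hd).1
      have h2 := len_sB_of_D hN' (by omega) hd
      omega
    · rw [f_rec hN' hw, f_rec h hw]
      symm
      refine (Finset.sum_subset (Finset.range_subset_range.2 hN) ?_).trans ?_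
      · intro i _ hi
        rw [if_neg]
        intro hd
        exact hi (Finset.mem_range.2 (D_lt h hd))
      · refine Finset.sum_congr rfl fun i _ => ?_
        split_ifs with hd
        · exact (sub i hd).2.symm
        · rfl

end BW

namespace BW

open Equiv

lemma w0B_SP (n : ℕ) : SP n (w0B n) := by
  constructor
  · intro x
    rw [w0B_apply, w0B_apply]
    split_ifs <;> omega
  · intro x hx
    rw [w0B_apply, if_neg (by omega)]

lemma w0B_sq (n : ℕ) : w0B n * w0B n = 1 := by
  ext x
  rw [Perm.mul_apply, w0B_apply, w0B_apply, Perm.one_apply]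
  split_ifs <;> omega

lemma u_zero (n : ℕ) : u n 0 = w0B n := by
  ext x
  rw [u_apply (Nat.zero_le n), w0B_apply]
  push_cast
  split_ifs <;> omega

lemma w0B_comm {n i : ℕ} (h : i < n) : w0B n * sB i = sB i * w0B n := by
  have hl := lo_ne i
  have hh := hi_ne i
  have b1 := lo_bd h
  have b2 := hi_bd h
  have e1 : w0B n (lo i) = -lo i := by rw [w0B_apply, if_pos b1]
  have e2 : w0B n (hi i) = -hi i := by rw [w0B_apply, if_pos b2]
  rw [sB_eq, conj (w0B_SP n).odd hl hh ((w0B_SP n).ne_zero hl) ((w0B_SP n).ne_zero hh), e1, e2,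
    T_neg hl hh]

lemma w0B_comm_word {n : ℕ} : ∀ {l : List ℕ}, Wd n l →
    w0B n * wordProd l = wordProd l * w0B n
  | [], _ => by rw [wordProd_nil, one_mul, mul_one]
  | i :: l, h => by
    rw [wordProd_cons, ← mul_assoc, w0B_comm h.head, mul_assoc, w0B_comm_word h.tail, mul_assoc]

lemma Wd.rotate {N : ℕ} {l : List ℕ} (h : Wd N l) (j : ℕ) : Wd N (l.rotate j) :=
  fun i hi => h i (List.mem_rotate.1 hi)

lemma rot_mem {n L : ℕ} {l : List ℕ} (h : l ∈ wds n L (w0B n)) {j : ℕ} (hj : j ≤ l.length) :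
    l.rotate j ∈ wds n L (w0B n) := by
  obtain ⟨h1, h2, h3⟩ := mem_wds.1 h
  refine mem_wds.2 ⟨h1.rotate j, ?_, by rw [List.length_rotate, h3]⟩
  rw [List.rotate_eq_drop_append_take hj, wordProd_append]
  have ht : Wd n (l.take j) := fun i hi => h1 i (List.mem_of_mem_take hi)
  have e : wordProd (l.take j) * wordProd (l.drop j) = w0B n := by
    rw [← wordProd_append, List.take_append_drop, h2]
  have e2 : wordProd (l.drop j) = (wordProd (l.take j))⁻¹ * w0B n := by rw [← e]; simp
  rw [e2, mul_assoc, w0B_comm_word ht, inv_mul_cancel_left]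

lemma is01_append : ∀ {l : List ℕ} (l' : List ℕ), 4 ≤ l.length → is01 (l ++ l') = is01 l
  | [], _, h => by simp at h
  | [_], _, h => by simp at h
  | [_, _], _, h => by simp at h
  | [_, _, _], _, h => by simp at h
  | _ :: _ :: _ :: _ :: _, _, _ => rfl

lemma is01_short : ∀ {l : List ℕ}, l.length < 4 → is01 l = false
  | [], _ => rfl
  | [_], _ => rfl
  | [_, _], _ => rfl
  | [_, _, _], _ => rfl
  | _ :: _ :: _ :: _ :: _, h => by simp at h; omega

lemma card_rot {n L j : ℕ} (hj : j + 4 ≤ L) :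
    ((wds n L (w0B n)).filter fun l => is01 (l.drop j) = true).card =
      ((wds n L (w0B n)).filter fun l => is01 l = true).card := by
  have key : ∀ l : List ℕ, l.length = L → is01 (l.rotate j) = is01 (l.drop j) := by
    intro l hl
    rw [List.rotate_eq_drop_append_take (by omega), is01_append]
    rw [List.length_drop]; omega
  refine Finset.card_nbij' (fun l => l.rotate j) (fun l => l.rotate (L - j)) ?_ ?_ ?_ ?_
  · intro l hl
    simp only [Finset.coe_filter, Set.mem_setOf_eq] at hl ⊢
    have hL := (mem_wds.1 hl.1).2.2
    exact ⟨rot_mem hl.1 (by omega), by rw [key l hL]; exact hl.2⟩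
  · intro l hl
    simp only [Finset.coe_filter, Set.mem_setOf_eq] at hl ⊢
    have hL := (mem_wds.1 hl.1).2.2
    refine ⟨rot_mem hl.1 (by omega), ?_⟩
    rw [← key _ (by rw [List.length_rotate, hL]), List.rotate_rotate,
      show L - j + j = l.length by omega, List.rotate_length]
    exact hl.2
  · intro l hl
    simp only [Finset.coe_filter, Set.mem_setOf_eq] at hl ⊢
    have hL := (mem_wds.1 hl.1).2.2
    rw [List.rotate_rotate, show j + (L - j) = l.length by omega, List.rotate_length]
  · intro l hl
    simp only [Finset.coe_filter, Set.mem_setOf_eq] at hl ⊢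
    have hL := (mem_wds.1 hl.1).2.2
    rw [List.rotate_rotate, show L - j + j = l.length by omega, List.rotate_length]

lemma sum_m01 {n L : ℕ} (hL : 4 ≤ L) : ∑ l ∈ wds n L (w0B n), m01Count l =
    (L - 3) * ((wds n L (w0B n)).filter fun l => is01 l = true).card := by
  have e1 : ∀ l ∈ wds n L (w0B n), m01Count l =
      ∑ j ∈ Finset.range L, if is01 (l.drop j) = true then 1 else 0 := by
    intro l hl
    have hl := (mem_wds.1 hl).2.2
    unfold m01Count
    rw [Finset.card_filter, hl]
  rw [Finset.sum_congr rfl e1, Finset.sum_comm]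
  have e2 : ∀ j ∈ Finset.range L, (∑ l ∈ wds n L (w0B n),
      if is01 (l.drop j) = true then 1 else 0) =
      if j < L - 3 then ((wds n L (w0B n)).filter fun l => is01 l = true).card else 0 := by
    intro j hj
    split_ifs with h
    · rw [← card_rot (show j + 4 ≤ L by omega), Finset.card_filter]
    · refine Finset.sum_eq_zero fun l hl => ?_
      have hl := (mem_wds.1 hl).2.2
      rw [is01_short (by rw [List.length_drop]; omega)]
      rfl
  rw [Finset.sum_congr rfl e2, ← Finset.sum_filter, Finset.sum_const, smul_eq_mul]
  congr 1
  have : (Finset.range L).filter (fun j => j < L - 3) = Finset.range (L - 3) := by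
    ext j; simp only [Finset.mem_filter, Finset.mem_range]; omega
  rw [this, Finset.card_range]

lemma pre01 : sB 0 * (sB 1 * (sB 0 * sB 1)) = w0B 2 := by
  ext x
  by_cases h : x = 1 ∨ x = 2 ∨ x = -1 ∨ x = -2
  · rcases h with rfl | rfl | rfl | rfl <;> decide
  · have e0 : sB 0 x = x := by rw [sB_apply]; unfold lo hi; push_cast; split_ifs <;> omega
    have e1 : sB 1 x = x := by rw [sB_apply]; unfold lo hi; push_cast; split_ifs <;> omega
    simp only [Perm.mul_apply, e0, e1]
    rw [w0B_apply]; push_cast; split_ifs <;> omega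

lemma pre10 : sB 1 * (sB 0 * (sB 1 * sB 0)) = w0B 2 := by
  ext x
  by_cases h : x = 1 ∨ x = 2 ∨ x = -1 ∨ x = -2
  · rcases h with rfl | rfl | rfl | rfl <;> decide
  · have e0 : sB 0 x = x := by rw [sB_apply]; unfold lo hi; push_cast; split_ifs <;> omega
    have e1 : sB 1 x = x := by rw [sB_apply]; unfold lo hi; push_cast; split_ifs <;> omega
    simp only [Perm.mul_apply, e0, e1]
    rw [w0B_apply]; push_cast; split_ifs <;> omega

lemma w2_mul {n : ℕ} (hn : 2 ≤ n) (x : Perm ℤ) : w0B 2 * x = w0B n ↔ x = u n 2 := by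
  have e : w0B 2 * u n 2 = w0B n := by
    ext x
    rw [Perm.mul_apply, u_apply hn, w0B_apply, w0B_apply]
    push_cast
    split_ifs <;> omega
  constructor
  · intro h
    rw [← e] at h
    exact mul_left_cancel h
  · rintro rfl; exact e

lemma card_01 {n L : ℕ} (hn : 2 ≤ n) :
    ((wds n (L + 4) (w0B n)).filter fun l => is01 l = true).card =
      2 * (wds n L (u n 2)).card := by
  have e : ((wds n (L + 4) (w0B n)).filter fun l => is01 l = true) =
      (wds n L (u n 2)).image (fun t => 0 :: 1 :: 0 :: 1 :: t) ∪
      (wds n L (u n 2)).image (fun t => 1 :: 0 :: 1 :: 0 :: t) := by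
    ext l
    simp only [Finset.mem_filter, Finset.mem_union, Finset.mem_image, mem_wds]
    constructor
    · rintro ⟨⟨h1, h2, h3⟩, h4⟩
      match l, h1, h2, h3, h4 with
      | [], _, _, _, h4 => simp [is01] at h4
      | [_], _, _, _, h4 => simp [is01] at h4
      | [_, _], _, _, _, h4 => simp [is01] at h4
      | [_, _, _], _, _, _, h4 => simp [is01] at h4
      | a :: b :: c :: d :: t, h1, h2, h3, h4 =>
        simp only [wordProd_cons, ← mul_assoc] at h2
        simp only [is01, Bool.or_eq_true, Bool.and_eq_true, beq_iff_eq] at h4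
        have ht := h1.tail.tail.tail.tail
        have hl : t.length = L := by simpa using h3
        rcases h4 with ⟨⟨⟨rfl, rfl⟩, rfl⟩, rfl⟩ | ⟨⟨⟨rfl, rfl⟩, rfl⟩, rfl⟩
        · left
          refine ⟨t, ⟨ht, (w2_mul hn _).1 ?_, hl⟩, rfl⟩
          rw [← pre01, ← h2]; simp only [mul_assoc]
        · right
          refine ⟨t, ⟨ht, (w2_mul hn _).1 ?_, hl⟩, rfl⟩
          rw [← pre10, ← h2]; simp only [mul_assoc]
    · rintro (⟨t, ⟨h1, h2, h3⟩, rfl⟩ | ⟨t, ⟨h1, h2, h3⟩, rfl⟩)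
      · refine ⟨⟨(((h1.cons (by omega)).cons (by omega)).cons (by omega)).cons (by omega), ?_,
          by simp [h3]⟩, rfl⟩
        have := (w2_mul hn _).2 h2
        rw [← pre01] at this
        rw [← this]; simp only [wordProd_cons, mul_assoc]
      · refine ⟨⟨(((h1.cons (by omega)).cons (by omega)).cons (by omega)).cons (by omega), ?_,
          by simp [h3]⟩, rfl⟩
        have := (w2_mul hn _).2 h2
        rw [← pre10] at this
        rw [← this]; simp only [wordProd_cons, mul_assoc]
  rw [e, Finset.card_union_of_disjoint, Finset.card_image_of_injective,
    Finset.card_image_of_injective, two_mul]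
  · intro a b hab; simpa using hab
  · intro a b hab; simpa using hab
  · rw [Finset.disjoint_left]
    intro l h1 h2
    obtain ⟨a, _, rfl⟩ := Finset.mem_image.1 h1
    obtain ⟨b, _, hb⟩ := Finset.mem_image.1 h2
    simp at hb

lemma RSet_eq (n : ℕ) : RSet n (w0B n) = ↑(wds n (len n (w0B n)) (w0B n)) := by
  ext l
  simp only [RSet, IsReducedWord, Set.mem_setOf_eq, Finset.mem_coe, mem_wds]
  constructor
  · rintro ⟨h1, h2, h3⟩
    refine ⟨h1, h2, ?_⟩
    obtain ⟨l', a1, a2, a3⟩ := len_spec (w0B_SP n)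
    have b1 := h3 l' a1 a2
    have b2 := len_le (show Wd n l from h1)
    rw [h2] at b2
    omega
  · rintro ⟨h1, h2, h3⟩
    refine ⟨h1, h2, fun l' a1 a2 => ?_⟩
    have b2 := len_le (show Wd n l' from a1)
    rw [a2] at b2
    omega

end BW

/-- For every `n ≥ 2`, the expected number of `01` moves in a uniformly random reduced
decomposition of the longest element `w₀ᴮ ∈ Bₙ` equals `2/(n² - 2)`; equivalently,
`(n² - 2) · Σ_{ω ∈ R(w₀ᴮ)} m(ω) = 2 · |R(w₀ᴮ)|`. -/
theorem expected_01_moves_B (n : ℕ) (hn : 2 ≤ n) :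
    (n ^ 2 - 2) * ∑ᶠ ω ∈ RSet n (w0B n), m01Count ω
      = 2 * Nat.card ↥(RSet n (w0B n)) := by
  have hA0 := BW.alphabet _ _ (BW.u_SP (Nat.zero_le n)) rfl (2 * n + 1) (by omega)
  have hA2 := BW.alphabet _ _ (BW.u_SP hn) rfl (2 * n + 1) (by omega)
  have hl0 := (BW.f_u (Nat.zero_le n)).1
  have hl2 := (BW.f_u hn).1
  have hr := BW.f_ratio hn
  rw [hA0.1] at hl0
  rw [hA2.1] at hl2
  rw [hA0.2, hA2.2] at hr
  rw [BW.u_zero] at hl0 hr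
  have h4 : 4 ≤ n ^ 2 := by nlinarith
  have hL : BW.len n (w0B n) = BW.len n (BW.u n 2) + 4 := by omega
  have hL2 : BW.len n (w0B n) = n ^ 2 := by omega
  rw [BW.RSet_eq, finsum_mem_coe_finset, Nat.card_coe_set_eq, Set.ncard_coe_finset,
    BW.sum_m01 (by omega)]
  have hc : ((BW.wds n (BW.len n (w0B n)) (w0B n)).filter fun l => is01 l = true).card =
      2 * BW.f n (BW.u n 2) := by
    rw [hL, BW.card_01 hn]; rfl
  rw [hc]
  have : (BW.wds n (BW.len n (w0B n)) (w0B n)).card = BW.f n (w0B n) := rfl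
  rw [this, hr, hL2]
  ring
end

section
/- (Reiner) For every integer n ≥ 3, the expected number of Yang–Baxter moves in a uniformly random reduced decomposition of the longest element w_0 ∈ S_n equals 1; equivalently, Σ_{ω ∈ R(w_0)} yb(ω) = |R(w_0)|, where yb(ω) denotes the number of Yang–Baxter moves in ω. -/
/-- The adjacent transposition `sᵢ = (i, i+1)` of the symmetric group, realized as a
permutation of `ℕ`. -/
def sA (i : ℕ) : Equiv.Perm ℕ := Equiv.swap i (i + 1)

/-- The product `s_{i₁} ⋯ s_{i_ℓ}` corresponding to the word `i₁ ⋯ i_ℓ`. -/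
def wordProdA (l : List ℕ) : Equiv.Perm ℕ := (l.map sA).prod

/-- The underlying function of the longest element `w₀ ∈ Sₙ`: `i ↦ n + 1 - i` on
`{1, …, n}`, fixing all other points. -/
def w0AFun (n : ℕ) : ℕ → ℕ := fun i => if 1 ≤ i ∧ i ≤ n then n + 1 - i else i

lemma w0AFun_involutive (n : ℕ) : Function.Involutive (w0AFun n) := by
  intro i
  unfold w0AFun
  split_ifs <;> omega

/-- The longest element `w₀ ∈ Sₙ`, as a permutation of `ℕ`. -/
def w0A (n : ℕ) : Equiv.Perm ℕ := (w0AFun_involutive n).toPerm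

/-- `l` is a reduced decomposition of `w` in `Sₙ`: a word over the alphabet
`{1, …, n-1}` whose product of generators is `w`, of minimal length among all such
words. -/
def IsReducedWordA (n : ℕ) (w : Equiv.Perm ℕ) (l : List ℕ) : Prop :=
  (∀ i ∈ l, 1 ≤ i ∧ i < n) ∧ wordProdA l = w ∧
    ∀ l' : List ℕ, (∀ i ∈ l', 1 ≤ i ∧ i < n) → wordProdA l' = w → l.length ≤ l'.length

/-- `R(w)`, the set of reduced decompositions of `w` in `Sₙ`. -/
def RSetA (n : ℕ) (w : Equiv.Perm ℕ) : Set (List ℕ) := {l | IsReducedWordA n w l}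

namespace YBA
open Finset

/-- `Fx n w`: the permutation `w` moves only points of `{1, …, n}`. -/
def Fx (n : ℕ) (w : Equiv.Perm ℕ) : Prop := w 0 = 0 ∧ ∀ x, n < x → w x = x

open Classical in
/-- number of chains of left descents from `w` to `1` -/
noncomputable def HL (n : ℕ) : ℕ → Equiv.Perm ℕ → ℕ
  | 0, w => if w = 1 then 1 else 0
  | m + 1, w => ∑ a ∈ range (n + 1), if w⁻¹ (a + 1) < w⁻¹ a then HL n m (sA a * w) else 0

open Classical in
/-- number of chains of right descents from `w` to `1` -/
noncomputable def HR (n : ℕ) : ℕ → Equiv.Perm ℕ → ℕ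
  | 0, w => if w = 1 then 1 else 0
  | m + 1, w => ∑ k ∈ range (n + 1), if w (k + 1) < w k then HR n m (w * sA k) else 0

lemma sA_mul_self (a : ℕ) : sA a * sA a = 1 := by simp [sA]
lemma sA_inv (a : ℕ) : (sA a)⁻¹ = sA a := by simp [sA]

lemma sA_apply (a x : ℕ) : sA a x = if x = a then a + 1 else if x = a + 1 then a else x := by
  simp [sA, Equiv.swap_apply_def]

lemma sA_lt_iff (a x y : ℕ) (h1 : ¬ (x = a ∧ y = a + 1)) (h2 : ¬ (x = a + 1 ∧ y = a)) :
    sA a x < sA a y ↔ x < y := by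
  simp only [sA_apply]
  split_ifs <;> omega

lemma right_desc_left (w : Equiv.Perm ℕ) (a k : ℕ) (h : sA a * w ≠ w * sA k) :
    (sA a * w) (k + 1) < (sA a * w) k ↔ w (k + 1) < w k := by
  simp only [Equiv.Perm.mul_apply]
  apply sA_lt_iff
  · rintro ⟨h1, h2⟩
    apply h
    ext x
    simp only [Equiv.Perm.mul_apply, sA_apply]
    have e1 : w⁻¹ a = k + 1 := by rw [← h1]; simp
    have e2 : w⁻¹ (a + 1) = k := by rw [← h2]; simp
    by_cases hx : x = k
    · subst hx; simp [h1, h2]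
    by_cases hx' : x = k + 1
    · subst hx'; simp [h1, h2]
    have : w x ≠ a := fun h => hx' (by rw [← e1, ← h]; simp)
    have : w x ≠ a + 1 := fun h => hx (by rw [← e2, ← h]; simp)
    simp [*]
  · rintro ⟨h1, h2⟩
    apply h
    ext x
    simp only [Equiv.Perm.mul_apply, sA_apply]
    have e1 : w⁻¹ (a + 1) = k + 1 := by rw [← h1]; simp
    have e2 : w⁻¹ a = k := by rw [← h2]; simp
    by_cases hx : x = k
    · subst hx; simp [h1, h2]
    by_cases hx' : x = k + 1
    · subst hx'; simp [h1, h2]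
    have : w x ≠ a + 1 := fun h => hx' (by rw [← e1, ← h]; simp)
    have : w x ≠ a := fun h => hx (by rw [← e2, ← h]; simp)
    simp [*]

lemma left_desc_right (w : Equiv.Perm ℕ) (a k : ℕ) (h : sA a * w ≠ w * sA k) :
    (w * sA k)⁻¹ (a + 1) < (w * sA k)⁻¹ a ↔ w⁻¹ (a + 1) < w⁻¹ a := by
  have := right_desc_left w⁻¹ k a (fun h' => h (by
    have := congrArg (fun x => x⁻¹) h'
    simpa [sA_inv] using this.symm))
  rw [mul_inv_rev, sA_inv]
  exact this

lemma left_right_iff (w : Equiv.Perm ℕ) (a k : ℕ) :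
    (w⁻¹ (a + 1) < w⁻¹ a ∧ (sA a * w) (k + 1) < (sA a * w) k) ↔
    (w (k + 1) < w k ∧ (w * sA k)⁻¹ (a + 1) < (w * sA k)⁻¹ a) := by
  by_cases h : sA a * w = w * sA k
  · constructor
    · rintro ⟨h1, h2⟩
      exfalso
      have e : (sA a * w)⁻¹ = w⁻¹ * sA a := by rw [mul_inv_rev, sA_inv]
      rw [h] at h2
      simp only [Equiv.Perm.mul_apply] at h2
      have e1 : sA k (k + 1) = k := by simp [sA]
      have e2 : sA k k = k + 1 := by simp [sA]
      rw [e1, e2] at h2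
      have h3 := congrArg (fun f => f k) h
      simp only [Equiv.Perm.mul_apply, e2] at h3
      have h4 : w k = a := by
        rw [sA_apply] at h3; split_ifs at h3 <;> omega
      have h5 : w (k + 1) = a + 1 := by
        rw [← h3, h4]; simp [sA]
      rw [← h5, ← h4] at h1
      simp at h1
    · rintro ⟨h1, h2⟩
      exfalso
      rw [← h, mul_inv_rev, sA_inv] at h2
      simp only [Equiv.Perm.mul_apply] at h2
      have e1 : sA a (a + 1) = a := by simp [sA]
      have e2 : sA a a = a + 1 := by simp [sA]
      rw [e1, e2] at h2
      have e3 : sA k k = k + 1 := by simp [sA]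
      have h3 := congrArg (fun f => f k) h
      simp only [Equiv.Perm.mul_apply, e3] at h3
      rw [sA_apply] at h3
      have h4 : w k = a + 1 := by
        split_ifs at h3 <;> omega
      have h5 : w (k + 1) = a := by
        rw [← h3, h4]; simp
      rw [← h5] at h2
      have h6 : w⁻¹ (w (k + 1) + 1) = k := by rw [h5, ← h4]; simp
      rw [h6] at h2
      simp at h2
  · rw [right_desc_left w a k h, left_desc_right w a k h, and_comm]

lemma HL_eq_HR (n m : ℕ) : ∀ w, HL n m w = HR n m w := by
  induction m using Nat.twoStepInduction with
  | zero => intro w; rfl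
  | one =>
    intro w
    simp only [HL, HR]
    apply Finset.sum_congr rfl
    intro a _
    by_cases h : w = sA a
    · subst h
      simp [sA_inv]
    · have h1 : sA a * w ≠ 1 := fun h' => h (by
        rw [← sA_inv a]; exact eq_inv_of_mul_eq_one_right h')
      have h2 : w * sA a ≠ 1 := fun h' => h (by
        rw [← sA_inv a]; exact eq_inv_of_mul_eq_one_left h')
      simp [h1, h2]
  | more m ih0 ih1 =>
    intro w
    have e1 : HL n (m + 2) w = ∑ a ∈ range (n + 1), ∑ k ∈ range (n + 1),
        if (w⁻¹ (a + 1) < w⁻¹ a ∧ (sA a * w) (k + 1) < (sA a * w) k) then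
          HR n m (sA a * w * sA k) else 0 := by
      rw [HL]
      refine Finset.sum_congr rfl fun a _ => ?_
      rw [ih1, HR]
      by_cases h : w⁻¹ (a + 1) < w⁻¹ a
      · simp only [h, true_and, if_true]
      · simp only [h, false_and, if_false, sum_const_zero]
    have e2 : HR n (m + 2) w = ∑ k ∈ range (n + 1), ∑ a ∈ range (n + 1),
        if (w (k + 1) < w k ∧ (w * sA k)⁻¹ (a + 1) < (w * sA k)⁻¹ a) then
          HL n m (sA a * (w * sA k)) else 0 := by
      rw [HR]
      refine Finset.sum_congr rfl fun a _ => ?_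
      rw [← ih1, HL]
      by_cases h : w (a + 1) < w a
      · simp only [h, true_and, if_true]
      · simp only [h, false_and, if_false, sum_const_zero]
    rw [e1, e2, Finset.sum_comm]
    refine Finset.sum_congr rfl fun k _ => Finset.sum_congr rfl fun a _ => ?_
    simp only [left_right_iff, ih0, mul_assoc]

/-- Bruhat cover condition for `w < w * (i j)`. -/
def Cov (w : Equiv.Perm ℕ) (i j : ℕ) : Prop :=
  i < j ∧ w i < w j ∧ ∀ c, i < c → c < j → ¬ (w i < w c ∧ w c < w j)

lemma cov_left (w : Equiv.Perm ℕ) (a i j : ℕ) (p q : ℕ) (hp : w p = a) (hq : w q = a + 1)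
    (h1 : ¬ (i = p ∧ j = q)) (h2 : ¬ (i = q ∧ j = p)) :
    (Cov w i j ∧ Equiv.swap i j q < Equiv.swap i j p) ↔ (q < p ∧ Cov (sA a * w) i j) := by
  have P : ∀ x, w x = a ↔ x = p := fun x => by rw [← hp]; simp
  have Q : ∀ x, w x = a + 1 ↔ x = q := fun x => by rw [← hq]; simp
  have hu : ∀ x, (sA a * w) x = if x = p then a + 1 else if x = q then a else w x := by
    intro x; simp [sA_apply, P, Q]
  have hpq : p ≠ q := by rintro rfl; omega
  have hu1 : (sA a * w) p = a + 1 := by simp [hu]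
  have hu2 : (sA a * w) q = a := by simp [hu, hpq.symm]
  have hu3 : ∀ x, x ≠ p → x ≠ q → (sA a * w) x = w x := by intro x h h'; simp [hu, h, h']
  generalize sA a * w = u at *
  clear hu
  unfold Cov
  simp only [Equiv.swap_apply_def]
  constructor
  · rintro ⟨⟨hij, hw, hc⟩, hs⟩
    have hcp := hc p
    have hcq := hc q
    have hqp : q < p := by grind
    refine ⟨hqp, hij, by grind, ?_⟩
    intro c hc1 hc2
    have := hc c hc1 hc2
    grind
  · rintro ⟨hqp, hij, hw, hc⟩
    have hcp := hc p
    have hcq := hc q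
    refine ⟨⟨hij, by grind, ?_⟩, by grind⟩
    intro c hc1 hc2
    have := hc c hc1 hc2
    grind

end YBA

namespace YBA
open Finset

open Classical in
/-- signed cover indicator -/
noncomputable def eps (v : Equiv.Perm ℕ) (r j : ℕ) : ℤ :=
  (if Cov v r j then 1 else 0) - (if Cov v j r then 1 else 0)

lemma Fx.inv_zero {n : ℕ} {w : Equiv.Perm ℕ} (h : Fx n w) : w⁻¹ 0 = 0 := by
  rw [Equiv.Perm.inv_eq_iff_eq, h.1]

lemma Fx.inv_gt {n : ℕ} {w : Equiv.Perm ℕ} (h : Fx n w) {x : ℕ} (hx : n < x) : w⁻¹ x = x := by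
  rw [Equiv.Perm.inv_eq_iff_eq, h.2 x hx]

lemma Fx.inv {n : ℕ} {w : Equiv.Perm ℕ} (h : Fx n w) : Fx n w⁻¹ :=
  ⟨h.inv_zero, fun _ hx => h.inv_gt hx⟩

lemma Fx.mul {n : ℕ} {w v : Equiv.Perm ℕ} (h : Fx n w) (h' : Fx n v) : Fx n (w * v) := by
  refine ⟨by simp [h.1, h'.1], fun x hx => by simp [h.2 x hx, h'.2 x hx]⟩

lemma Fx.swap {n i j : ℕ} (hi : 1 ≤ i) (hi' : i ≤ n) (hj : 1 ≤ j) (hj' : j ≤ n) :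
    Fx n (Equiv.swap i j) := by
  refine ⟨Equiv.swap_apply_of_ne_of_ne (by omega) (by omega), fun x hx =>
    Equiv.swap_apply_of_ne_of_ne (by omega) (by omega)⟩

lemma Fx.sA {n a : ℕ} (ha : 1 ≤ a) (ha' : a < n) : Fx n (sA a) :=
  Fx.swap ha ha'.le (by omega) (by omega)

lemma Fx.le {n : ℕ} {w : Equiv.Perm ℕ} (h : Fx n w) {x : ℕ} (hx : x ≤ n) : w x ≤ n := by
  by_contra hc
  have h1 := h.2 (w x) (by omega)
  have := w.injective h1
  omega

lemma Fx.pos {n : ℕ} {w : Equiv.Perm ℕ} (h : Fx n w) {x : ℕ} (hx : 1 ≤ x) : 1 ≤ w x := by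
  by_contra hc
  have h1 : w x = w 0 := by rw [h.1]; omega
  have := w.injective h1
  omega

lemma Fx.desc_range {n : ℕ} {w : Equiv.Perm ℕ} (h : Fx n w) {k : ℕ} (hk : w (k + 1) < w k) :
    1 ≤ k ∧ k < n := by
  constructor
  · by_contra hc
    have : k = 0 := by omega
    subst this
    rw [h.1] at hk; omega
  · by_contra hc
    have h1 := h.2 (k + 1) (by omega)
    rcases Nat.lt_or_ge n k with h2 | h2
    · rw [h.2 k h2] at hk; omega
    · have := h.le h2; omega

lemma Fx.ldesc {n : ℕ} {w : Equiv.Perm ℕ} (h : Fx n w) {a : ℕ} (hk : w⁻¹ (a + 1) < w⁻¹ a) :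
    Fx n (_root_.sA a * w) := by
  obtain ⟨h1, h2⟩ := h.inv.desc_range hk
  exact (Fx.sA h1 h2).mul h

lemma swap_eq_sA_mul (v : Equiv.Perm ℕ) (p q a : ℕ) (hp : v p = a) (hq : v q = a + 1) :
    _root_.sA a * v * Equiv.swap p q = v := by
  have h : _root_.sA a * v = v * Equiv.swap p q := by
    rw [Equiv.mul_swap_eq_swap_mul, hp, hq]; rfl
  rw [h, mul_assoc]; simp

open Classical in
lemma term_eq (v : Equiv.Perm ℕ) (r j a : ℕ) (H : Equiv.Perm ℕ → ℤ) :
    (eps v r j * if (v * Equiv.swap r j)⁻¹ (a + 1) < (v * Equiv.swap r j)⁻¹ a then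
        H (_root_.sA a * (v * Equiv.swap r j)) else 0)
    = (if v⁻¹ (a + 1) < v⁻¹ a then
        eps (_root_.sA a * v) r j * H (_root_.sA a * v * Equiv.swap r j) else 0)
      + (if v r = a ∧ v j = a + 1 then H v else 0)
      - (if v r = a + 1 ∧ v j = a then H v else 0) := by
  obtain ⟨p, hp⟩ := v.surjective a
  obtain ⟨q, hq⟩ := v.surjective (a + 1)
  have P : ∀ x, v x = a ↔ x = p := fun x => by rw [← hp]; simp
  have Q : ∀ x, v x = a + 1 ↔ x = q := fun x => by rw [← hq]; simp
  have ip : v⁻¹ a = p := by rw [← hp]; simp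
  have iq : v⁻¹ (a + 1) = q := by rw [← hq]; simp
  have hpq : p ≠ q := by rintro rfl; omega
  have hinv : ∀ x, (v * Equiv.swap r j)⁻¹ x = Equiv.swap r j (v⁻¹ x) := by
    intro x; simp [mul_inv_rev]
  rw [hinv, hinv, ip, iq, ← mul_assoc]
  simp only [P, Q]
  have u1 : (_root_.sA a * v) p = a + 1 := by simp [hp, sA_apply]
  have u2 : (_root_.sA a * v) q = a := by simp [hq, sA_apply]
  by_cases h1 : r = p ∧ j = q
  · obtain ⟨rfl, rfl⟩ := h1
    rw [swap_eq_sA_mul v r j a hp hq]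
    have c1 : Cov v r j ↔ r < j := by
      constructor
      · exact fun h => h.1
      · intro h; exact ⟨h, by omega, fun c _ _ => by omega⟩
    have c2 : ¬ Cov v j r := fun h => by have := h.2.1; omega
    have c3 : ¬ Cov (_root_.sA a * v) r j := fun h => by have := h.2.1; omega
    have c4 : Cov (_root_.sA a * v) j r ↔ j < r := by
      constructor
      · exact fun h => h.1
      · intro h; exact ⟨h, by omega, fun c _ _ => by omega⟩
    rw [eps, eps]
    simp only [c1, c2, c3, c4, Equiv.swap_apply_left, Equiv.swap_apply_right]
    rcases lt_or_gt_of_ne hpq with h | h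
    · simp [h, not_lt.2 h.le, hpq]
    · simp [h, not_lt.2 h.le, hpq]
  by_cases h2 : r = q ∧ j = p
  · obtain ⟨rfl, rfl⟩ := h2
    rw [Equiv.swap_comm, swap_eq_sA_mul v j r a hp hq]
    have c1 : Cov v j r ↔ j < r := by
      constructor
      · exact fun h => h.1
      · intro h; exact ⟨h, by omega, fun c _ _ => by omega⟩
    have c2 : ¬ Cov v r j := fun h => by have := h.2.1; omega
    have c3 : ¬ Cov (_root_.sA a * v) j r := fun h => by have := h.2.1; omega
    have c4 : Cov (_root_.sA a * v) r j ↔ r < j := by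
      constructor
      · exact fun h => h.1
      · intro h; exact ⟨h, by omega, fun c _ _ => by omega⟩
    rw [eps, eps]
    simp only [c1, c2, c3, c4, Equiv.swap_apply_left, Equiv.swap_apply_right]
    rcases lt_or_gt_of_ne hpq with h | h
    · simp [h, not_lt.2 h.le, hpq, hpq.symm]
    · simp [h, not_lt.2 h.le, hpq, hpq.symm]
  have e1 := cov_left v a r j p q hp hq h1 h2
  have e2 := cov_left v a j r p q hp hq (by tauto) (by tauto)
  rw [Equiv.swap_comm j r] at e2
  rw [if_neg h1, if_neg h2, eps, eps]
  generalize H (_root_.sA a * v * Equiv.swap r j) = X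
  by_cases a1 : Equiv.swap r j q < Equiv.swap r j p <;> by_cases a2 : q < p <;>
    simp only [a1, a2, and_true, and_false, true_and, false_and, iff_false, false_iff] at e1 e2 <;>
    simp [a1, a2, e1, e2]

/-- The transition identity. -/
lemma transition (n m : ℕ) : ∀ (v : Equiv.Perm ℕ) (r : ℕ), Fx n v → 1 ≤ r → r ≤ n →
    ∑ j ∈ range (n + 2), eps v r j * (HL n m (v * Equiv.swap r j) : ℤ) = 0 := by
  classical
  induction m with
  | zero =>
    intro v r _ _ _
    refine Finset.sum_eq_zero fun j _ => ?_
    rw [HL]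
    split_ifs with h
    · have hv : v = Equiv.swap r j := by
        rw [← Equiv.swap_inv]; exact eq_inv_of_mul_eq_one_left h
      have c1 : ¬ Cov v r j := fun h => by
        have h1 := h.1; have h2 := h.2.1; rw [hv] at h2; simp at h2; omega
      have c2 : ¬ Cov v j r := fun h => by
        have h1 := h.1; have h2 := h.2.1; rw [hv] at h2; simp at h2; omega
      simp [eps, c1, c2]
    · simp
  | succ m ih =>
    intro v r hv hr hr'
    have e0 : ∀ j, (eps v r j * (HL n (m + 1) (v * Equiv.swap r j) : ℤ)) =
      ∑ a ∈ range (n + 1), (eps v r j *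
        if (v * Equiv.swap r j)⁻¹ (a + 1) < (v * Equiv.swap r j)⁻¹ a then
        (HL n m (_root_.sA a * (v * Equiv.swap r j)) : ℤ) else 0) := by
      intro j
      rw [HL, ← Finset.mul_sum]
      push_cast
      rfl
    simp only [e0]
    rw [Finset.sum_comm]
    simp only [term_eq v r _ _ (fun x => (HL n m x : ℤ)), Finset.sum_add_distrib,
      Finset.sum_sub_distrib]
    have z1 : ∑ a ∈ range (n + 1), ∑ j ∈ range (n + 2), (if v⁻¹ (a + 1) < v⁻¹ a then
        eps (_root_.sA a * v) r j * (HL n m (_root_.sA a * v * Equiv.swap r j) : ℤ) else 0) = 0 := by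
      refine Finset.sum_eq_zero fun a _ => ?_
      by_cases h : v⁻¹ (a + 1) < v⁻¹ a
      · simp only [h, if_true]
        exact ih _ r (hv.ldesc h) hr hr'
      · simp only [h, if_false, sum_const_zero]
    have hr1 := hv.pos hr
    have hr2 := hv.le hr'
    have z2 : ∑ a ∈ range (n + 1), ∑ j ∈ range (n + 2),
        (if v r = a ∧ v j = a + 1 then (HL n m v : ℤ) else 0) = HL n m v := by
      rw [Finset.sum_eq_single (v r), Finset.sum_eq_single (v⁻¹ (v r + 1))]
      · simp
      · intro b _ hb
        rw [if_neg]
        rintro ⟨_, h⟩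
        exact hb (by rw [← h]; simp)
      · intro h
        exfalso; apply h
        have : v⁻¹ (v r + 1) < n + 2 := by
          rcases Nat.lt_or_ge n (v r + 1) with h | h
          · rw [hv.inv_gt h]; omega
          · have := hv.inv.le h; omega
        simpa using this
      · intro b _ hb
        refine Finset.sum_eq_zero fun j _ => ?_
        rw [if_neg]
        rintro ⟨h, _⟩; exact hb h.symm
      · intro h; exfalso; apply h; simp; omega
    have z3 : ∑ a ∈ range (n + 1), ∑ j ∈ range (n + 2),
        (if v r = a + 1 ∧ v j = a then (HL n m v : ℤ) else 0) = HL n m v := by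
      rw [Finset.sum_eq_single (v r - 1), Finset.sum_eq_single (v⁻¹ (v r - 1))]
      · rw [if_pos]
        simp; omega
      · intro b _ hb
        rw [if_neg]
        rintro ⟨_, h⟩
        exact hb (by rw [← h]; simp)
      · intro h
        exfalso; apply h
        have : v⁻¹ (v r - 1) < n + 2 := by
          have := hv.inv.le (x := v r - 1) (by omega); omega
        simpa using this
      · intro b _ hb
        refine Finset.sum_eq_zero fun j _ => ?_
        rw [if_neg]
        rintro ⟨h, _⟩; omega
      · intro h; exfalso; apply h; simp; omega
    rw [z1, z2, z3]; simp

end YBA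

namespace YBA
open Finset

/-- dominant (132-avoiding) permutations -/
def Dom (n : ℕ) (w : Equiv.Perm ℕ) : Prop :=
  ∀ a b c, 1 ≤ a → a < b → b < c → c ≤ n → ¬ (w a < w c ∧ w c < w b)

/-- Lehmer code -/
def cd (n : ℕ) (w : Equiv.Perm ℕ) (i : ℕ) : ℕ := ((Ioc i n).filter fun j => w j < w i).card

lemma exists_j {n : ℕ} {w : Equiv.Perm ℕ} {k : ℕ} (hkn : k < n) (hd : w (k + 1) < w k) :
    ∃ j, k < j ∧ j ≤ n ∧ w j < w k ∧ ∀ c, k < c → c ≤ n → w c < w k → w c ≤ w j := by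
  obtain ⟨j, hj, hmax⟩ := Finset.exists_max_image ((Ioc k n).filter fun j => w j < w k) w
    ⟨k + 1, by simp; omega⟩
  simp only [mem_filter, mem_Ioc] at hj hmax
  exact ⟨j, hj.1.1, hj.1.2, hj.2, fun c h1 h2 h3 => hmax c ⟨⟨h1, h2⟩, h3⟩⟩

section step
variable {n : ℕ} {w : Equiv.Perm ℕ} {k j : ℕ}

lemma dom_step (hw : Dom n w) (hk : 1 ≤ k) (hd : w (k + 1) < w k)
    (hkj : k < j) (hjn : j ≤ n) (hjk : w j < w k)
    (hmax : ∀ c, k < c → c ≤ n → w c < w k → w c ≤ w j) : Dom n (w * Equiv.swap k j) := by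
  have inj : ∀ x y, w x = w y → x = y := fun x y h => w.injective h
  -- no value above `w k` strictly between the positions `k` and `j`
  have key : ∀ b, k < b → b < j → w b < w k := by
    intro b h1 h2
    by_contra h3
    have h4 : w b ≠ w k := fun h => by have := inj _ _ h; omega
    have h5 : k + 1 < b := by
      rcases Nat.lt_or_ge (k + 1) b with h | h
      · exact h
      · have : b = k + 1 := by omega
        subst this; omega
    have h6 := hmax (k + 1) (by omega) (by omega) hd
    have h7 : w (k + 1) ≠ w j := fun h => by have := inj _ _ h; omega
    exact hw (k + 1) b j (by omega) h5 h2 hjn ⟨by omega, by omega⟩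
  have uk : (w * Equiv.swap k j) k = w j := by simp
  have uj : (w * Equiv.swap k j) j = w k := by simp
  have uo : ∀ x, x ≠ k → x ≠ j → (w * Equiv.swap k j) x = w x := by
    intro x h h'; simp [Equiv.swap_apply_of_ne_of_ne h h']
  generalize w * Equiv.swap k j = u at *
  intro a b c ha hab hbc hcn ⟨h1, h2⟩
  have ik := fun x => inj x k
  have ij := fun x => inj x j
  have mc := hmax c
  have mb := hmax b
  have kb := key b
  have d1 := hw a b c ha hab hbc hcn
  have d2 := hw a b k ha hab
  have d3 := hw a b j ha hab
  have d4 := hw a j c ha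
  have d5 := hw a k c ha
  have d6 := hw k b c hk
  have d7 := hw j b c (by omega)
  have ikc := ik c
  have ijc := ij c
  have ikb := ik b
  clear inj key hmax hw
  by_cases ak : a = k
  · subst ak
    by_cases cj : c = j
    · subst cj; grind
    by_cases bj : b = j
    · subst bj; grind
    grind
  by_cases aj : a = j
  · subst aj; grind
  rw [uo a ak aj] at h1
  by_cases bk : b = k
  · subst bk; grind
  by_cases bj : b = j
  · subst bj; grind
  rw [uo b bk bj] at h2
  by_cases ck : c = k
  · subst ck; grind
  by_cases cj : c = j
  · subst cj; grind
  grind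

lemma HL_step (m : ℕ) (hF : Fx n w) (hw : Dom n w) (hk : 1 ≤ k) (hd : w (k + 1) < w k)
    (hkj : k < j) (hjn : j ≤ n) (hjk : w j < w k)
    (hmax : ∀ c, k < c → c ≤ n → w c < w k → w c ≤ w j) :
    HL n m (w * sA k) = HL n m (w * Equiv.swap k j) := by
  classical
  by_cases hj1 : j = k + 1
  · subst hj1; rfl
  have inj : ∀ x y, w x = w y → x = y := fun x y h => w.injective h
  set v := w * sA k * Equiv.swap (k + 1) j with hv
  have e1 : v * Equiv.swap (k + 1) j = w * sA k := by
    rw [hv, mul_assoc]; simp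
  have e2 : v * Equiv.swap (k + 1) k = w * Equiv.swap k j := by
    rw [hv, mul_assoc, mul_assoc]
    congr 1
    ext x
    simp only [Equiv.Perm.mul_apply, sA, Equiv.swap_apply_def]
    grind
  have vk : v k = w (k + 1) := by
    simp only [hv, Equiv.Perm.mul_apply, sA, Equiv.swap_apply_def]; grind
  have vk1 : v (k + 1) = w j := by
    simp only [hv, Equiv.Perm.mul_apply, sA, Equiv.swap_apply_def]; grind
  have vj : v j = w k := by
    simp only [hv, Equiv.Perm.mul_apply, sA, Equiv.swap_apply_def]; grind
  have vo : ∀ x, x ≠ k → x ≠ k + 1 → x ≠ j → v x = w x := by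
    intro x h1 h2 h3
    simp only [hv, Equiv.Perm.mul_apply, sA, Equiv.swap_apply_def]; grind
  have hFv : Fx n v := by
    refine (hF.mul (Fx.sA hk (by omega))).mul (Fx.swap ?_ ?_ ?_ ?_) <;> omega
  have hxz : w (k + 1) < w j := by
    have := hmax (k + 1) (by omega) (by omega) hd
    have : w (k + 1) ≠ w j := fun h => by have := inj _ _ h; omega
    omega
  have c1 : Cov v (k + 1) j := by
    refine ⟨by omega, by omega, ?_⟩
    intro c h1 h2 ⟨h3, h4⟩
    have h5 := vo c (by omega) (by omega) (by omega)
    have := hmax c (by omega) (by omega) (by omega)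
    omega
  have c2 : Cov v k (k + 1) := ⟨by omega, by omega, fun c _ _ => by omega⟩
  have c3 : ∀ i, Cov v (k + 1) i → i = j := by
    rintro i ⟨h1, h2, h3⟩
    by_contra hij
    have h5 := vo i (by omega) (by omega) hij
    rcases lt_or_gt_of_ne hij with h | h
    · have h6 : ¬ w i < w k := fun h' => by
        have := hmax i (by omega) (by omega) h'; omega
      have h7 : w i ≠ w k := fun h' => by have := inj _ _ h'; omega
      exact hw (k + 1) i j (by omega) h1 h hjn ⟨hxz, by omega⟩
    · have := h3 j (by omega) h
      have h7 : w i ≠ w k := fun h' => by have := inj _ _ h'; omega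
      have h8 : ¬ (w i < w k) := by
        intro h'
        rcases Nat.lt_or_ge n i with hi | hi
        · have := hF.2 i hi
          have := hF.le (x := k) (by omega)
          omega
        · have := hmax i (by omega) hi h'; omega
      omega
  have c4 : ∀ i, Cov v i (k + 1) → i = k := by
    rintro i ⟨h1, h2, h3⟩
    by_contra hij
    have h5 := vo i hij (by omega) (by omega)
    have h6 := h3 k (by omega) (by omega)
    have h7 : w i ≠ w (k + 1) := fun h' => by have := inj _ _ h'; omega
    rcases Nat.eq_zero_or_pos i with h | h
    · subst h; have := hF.1; omega
    · exact hw i k j h (by omega) hkj hjn ⟨by omega, hjk⟩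
  have ht := transition n m v (k + 1) hFv (by omega) (by omega)
  have hsplit : ∀ i ∈ range (n + 2), eps v (k + 1) i * (HL n m (v * Equiv.swap (k + 1) i) : ℤ) =
      (if i = j then (HL n m (w * sA k) : ℤ) else 0) -
      (if i = k then (HL n m (w * Equiv.swap k j) : ℤ) else 0) := by
    intro i _
    by_cases h1 : i = j
    · subst h1
      have : ¬ Cov v i (k + 1) := fun h => by have := h.1; omega
      rw [eps, if_pos c1, if_neg this, e1]
      have : i ≠ k := by omega
      simp [this]
    by_cases h2 : i = k
    · subst h2
      have : ¬ Cov v (i + 1) i := fun h => by have := h.1; omega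
      rw [eps, if_pos c2, if_neg this, e2]
      simp [h1]
    · have g1 : ¬ Cov v (k + 1) i := fun h => h1 (c3 i h)
      have g2 : ¬ Cov v i (k + 1) := fun h => h2 (c4 i h)
      rw [eps, if_neg g1, if_neg g2]
      simp [h1, h2]
  rw [Finset.sum_congr rfl hsplit, Finset.sum_sub_distrib, Finset.sum_ite_eq',
    Finset.sum_ite_eq', if_pos (by simp; omega), if_pos (by simp; omega)] at ht
  have : (HL n m (w * sA k) : ℤ) = HL n m (w * Equiv.swap k j) := by linarith
  exact_mod_cast this

lemma cd_step_eq
    (hkj : k < j) (hjn : j ≤ n) (hjk : w j < w k)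
    (hmax : ∀ c, k < c → c ≤ n → w c < w k → w c ≤ w j) :
    cd n (w * Equiv.swap k j) k + 1 = cd n w k := by
  have inj : ∀ x y, w x = w y → x = y := fun x y h => w.injective h
  have : ((Ioc k n).filter fun i => w i < w k) =
    insert j ((Ioc k n).filter fun i => (w * Equiv.swap k j) i < (w * Equiv.swap k j) k) := by
    ext i
    simp only [mem_filter, mem_Ioc, mem_insert, Equiv.Perm.mul_apply, Equiv.swap_apply_left]
    by_cases hi : i = j
    · subst hi; simp; omega
    by_cases hik : i = k
    · subst hik; simp; omega
    rw [Equiv.swap_apply_of_ne_of_ne hik hi]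
    have h1 := hmax i
    have h2 : w i ≠ w j := fun h => hi (inj _ _ h)
    constructor
    · rintro ⟨⟨a, b⟩, c⟩
      right; refine ⟨⟨a, b⟩, ?_⟩
      have := h1 a b c; omega
    · rintro (h | ⟨⟨a, b⟩, c⟩)
      · omega
      · exact ⟨⟨a, b⟩, by omega⟩
  rw [cd, cd, this, card_insert_of_notMem]
  simp; omega

lemma cd_step_ne
    (hkj : k < j) (hjn : j ≤ n) (hjk : w j < w k)
    (hmax : ∀ c, k < c → c ≤ n → w c < w k → w c ≤ w j) (i : ℕ) (hik : i ≠ k) :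
    cd n (w * Equiv.swap k j) i = cd n w i := by
  have inj : ∀ x y, w x = w y → x = y := fun x y h => w.injective h
  rw [cd, cd]
  by_cases hlt : i < k
  · -- bijection given by the swap
    have hi : Equiv.swap k j i = i := Equiv.swap_apply_of_ne_of_ne (by omega) (by omega)
    have hm : ∀ x, x ∈ ((Ioc i n).filter fun x => (w * Equiv.swap k j) x < (w * Equiv.swap k j) i)
        ↔ (i < x ∧ x ≤ n) ∧ w (Equiv.swap k j x) < w i := by
      intro x
      rw [mem_filter, mem_Ioc, Equiv.Perm.mul_apply, Equiv.Perm.mul_apply, hi]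
    refine Finset.card_bij (fun x _ => Equiv.swap k j x) ?_ ?_ ?_
    · intro x hx
      rw [hm] at hx
      obtain ⟨h1, h2⟩ := hx
      rw [mem_filter, mem_Ioc]
      refine ⟨?_, h2⟩
      rw [Equiv.swap_apply_def]; split_ifs <;> omega
    · intro x _ y _ h; exact (Equiv.swap k j).injective h
    · intro y hy
      rw [mem_filter, mem_Ioc] at hy
      obtain ⟨h1, h2⟩ := hy
      refine ⟨Equiv.swap k j y, (hm _).2 ⟨?_, by simpa using h2⟩, by simp⟩
      rw [Equiv.swap_apply_def]; split_ifs <;> omega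
  · congr 1
    ext x
    rw [mem_filter, mem_filter, mem_Ioc, Equiv.Perm.mul_apply, Equiv.Perm.mul_apply]
    apply and_congr_right
    rintro ⟨h1, h2⟩
    have hxk : x ≠ k := by omega
    have m1 := hmax i (by omega) (by omega)
    have m2 := hmax x (by omega) (by omega)
    by_cases hij : i = j
    · subst hij
      rw [Equiv.swap_apply_right, Equiv.swap_apply_of_ne_of_ne hxk (by omega)]
      have : w x ≠ w i := fun h => by have := inj _ _ h; omega
      omega
    · rw [Equiv.swap_apply_of_ne_of_ne hik hij]
      have h3 : w i ≠ w j := fun h => hij (inj _ _ h)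
      have h4 : w i ≠ w k := fun h => hik (inj _ _ h)
      by_cases hxj : x = j
      · subst hxj
        rw [Equiv.swap_apply_right]
        omega
      · rw [Equiv.swap_apply_of_ne_of_ne hxk hxj]

end step

lemma cd_ascent {n : ℕ} {w : Equiv.Perm ℕ} {k : ℕ} (hw : Dom n w) (hk : 1 ≤ k)
    (hd : w k < w (k + 1)) : cd n w k = cd n w (k + 1) := by
  rw [cd, cd]
  congr 1
  ext x
  simp only [mem_filter, mem_Ioc]
  have := hw k (k + 1) x hk (by omega)
  constructor
  · rintro ⟨⟨h1, h2⟩, h3⟩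
    have : x ≠ k + 1 := by rintro rfl; omega
    exact ⟨⟨by omega, h2⟩, by omega⟩
  · rintro ⟨⟨h1, h2⟩, h3⟩
    have h4 : w x ≠ w k := fun h => by have := w.injective h; omega
    exact ⟨⟨by omega, h2⟩, by omega⟩

end YBA

namespace YBA
open Finset Matrix

/-- Vandermonde determinant -/
noncomputable def VV {n : ℕ} (b : Fin n → ℤ) : ℤ := (Matrix.vandermonde b).det

lemma VV_eq {n : ℕ} (b : Fin n → ℤ) :
    VV b = (Matrix.of fun i j : Fin n => (descPochhammer ℤ j).eval (b i)).det := by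
  rw [VV]
  exact det_eval_matrixOfPolynomials_eq_det_vandermonde b (fun i => descPochhammer ℤ i)
    (fun i => descPochhammer_natDegree ℤ i) (fun i => monic_descPochhammer ℤ i)

lemma det_updateRow_eq {n : ℕ} (A : Matrix (Fin n) (Fin n) ℤ) (i : Fin n) (b : Fin n → ℤ) :
    (A.updateRow i b).det = ∑ j, A.adjugate j i * b j := by
  rw [← cramer_transpose_apply, cramer_eq_adjugate_mulVec, ← adjugate_transpose]
  rfl

lemma VV_rec {n : ℕ} (b : Fin n → ℤ) :
    ∑ i, b i * VV (Function.update b i (b i - 1)) = (∑ i, b i - ∑ i : Fin n, (i : ℤ)) * VV b := by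
  set A := Matrix.of fun i j : Fin n => (descPochhammer ℤ j).eval (b i) with hA
  have hV : VV b = A.det := VV_eq b
  have h1 : ∀ i, b i * VV (Function.update b i (b i - 1)) =
      ∑ j, A.adjugate j i * ((b i - j) * A i j) := by
    intro i
    have : (Matrix.of fun i' j : Fin n =>
        (descPochhammer ℤ j).eval (Function.update b i (b i - 1) i')) =
        A.updateRow i (fun j => (descPochhammer ℤ j).eval (b i - 1)) := by
      ext i' j
      by_cases h : i' = i
      · subst h; simp
      · simp [h, hA]
    rw [VV_eq, this, det_updateRow_eq, Finset.mul_sum]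
    refine Finset.sum_congr rfl fun j _ => ?_
    have e : b i * (descPochhammer ℤ j).eval (b i - 1) = (b i - j) * A i j := by
      have e1 := congrArg (Polynomial.eval (b i)) (descPochhammer_succ_left ℤ j)
      have e2 := congrArg (Polynomial.eval (b i)) (descPochhammer_succ_right ℤ j)
      simp only [Polynomial.eval_mul, Polynomial.eval_X, Polynomial.eval_comp,
        Polynomial.eval_sub, Polynomial.eval_one, Polynomial.eval_natCast] at e1 e2
      rw [← e1, e2, hA]
      simp [mul_comm]
    rw [← e]; ring
  have h2 : ∀ i, ∑ j, A.adjugate j i * A i j = A.det := by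
    intro i
    have := congrFun (congrFun (mul_adjugate A) i) i
    rw [mul_apply] at this
    simp only [Matrix.smul_apply, one_apply_eq, smul_eq_mul, mul_one] at this
    rw [← this]
    exact Finset.sum_congr rfl fun j _ => mul_comm _ _
  have h3 : ∀ j, ∑ i, A.adjugate j i * A i j = A.det := by
    intro j
    have := congrFun (congrFun (adjugate_mul A) j) j
    rw [mul_apply] at this
    simpa using this
  simp only [h1]
  have h4 : ∀ i j : Fin n, A.adjugate j i * ((b i - j) * A i j) =
    b i * (A.adjugate j i * A i j) - j * (A.adjugate j i * A i j) := by intros; ring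
  simp only [h4, Finset.sum_sub_distrib]
  rw [Finset.sum_comm (f := fun (i j : Fin n) => (j : ℤ) * (A.adjugate j i * A i j))]
  simp only [← Finset.mul_sum, h2, h3]
  rw [hV, ← Finset.sum_mul, ← Finset.sum_mul]
  ring

/-- beta numbers of a permutation -/
def bN (n : ℕ) (w : Equiv.Perm ℕ) (i : Fin n) : ℕ := cd n w (n - i) + i

/-- number of inversions -/
def ell (n : ℕ) (w : Equiv.Perm ℕ) : ℕ := ∑ i : Fin n, cd n w (n - i)

lemma eq_one_of_ell {n : ℕ} {w : Equiv.Perm ℕ} (hF : Fx n w) (h : ell n w = 0) : w = 1 := by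
  have h0 : ∀ i, 1 ≤ i → i ≤ n → cd n w i = 0 := by
    intro i h1 h2
    have := (Finset.sum_eq_zero_iff.1 h) ⟨n - i, by omega⟩ (mem_univ _)
    simpa [Nat.sub_sub_self h2] using this
  have hmono : ∀ k, w k < w (k + 1) := by
    intro k
    by_contra hc
    have hne : w k ≠ w (k + 1) := fun h => by have := w.injective h; omega
    have hd : w (k + 1) < w k := by omega
    obtain ⟨h1, h2⟩ := hF.desc_range hd
    have h3 := h0 k h1 h2.le
    rw [cd, Finset.card_eq_zero] at h3
    have : k + 1 ∈ ((Ioc k n).filter fun j => w j < w k) := by simp; omega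
    rw [h3] at this
    simp at this
  have hs : StrictMono w := strictMono_nat_of_lt_succ hmono
  ext x
  have h1 := hs.le_apply (x := x)
  have hs' : StrictMono (w⁻¹ : Equiv.Perm ℕ) := by
    intro a b hab
    by_contra hc
    have := hs.monotone (not_lt.1 hc)
    simp at this; omega
  have h2 := hs'.le_apply (x := w x)
  simp at h2
  simp; omega

lemma main_formula (n : ℕ) (m : ℕ) : ∀ w, Fx n w → Dom n w → ell n w = m →
    (HL n m w : ℤ) * ∏ i : Fin n, ((bN n w i).factorial : ℤ) =
      m.factorial * VV (fun i => (bN n w i : ℤ)) := by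
  induction m with
  | zero =>
    intro w hF hD hl
    have hw := eq_one_of_ell hF hl
    have hb : ∀ i, bN n w i = i := by
      intro i
      have := (Finset.sum_eq_zero_iff.1 hl) i (mem_univ _)
      simp [bN, this]
    simp only [hb]
    rw [HL, if_pos hw]
    cases n with
    | zero => simp [VV]
    | succ n =>
      rw [VV, det_vandermonde_id_eq_superFactorial,
        Fin.prod_univ_eq_prod_range (fun i => (i.factorial : ℤ))]
      have h := Nat.prod_range_factorial_succ n
      rw [Finset.prod_range_succ']
      simp only [← h]
      push_cast
      simp
  | succ m ih =>
    intro w hF hD hl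
    set β : Fin n → ℤ := fun i => (bN n w i : ℤ) with hβ
    set F : ℕ → ℕ := fun k => if w (k + 1) < w k then HL n m (w * sA k) else 0 with hFdef
    have hH : HL n (m + 1) w = ∑ i : Fin n, F (n - i) := by
      rw [HL_eq_HR, HR, Finset.sum_range_succ']
      have : ¬ w (0 + 1) < w 0 := by rw [hF.1]; omega
      rw [if_neg this, add_zero, Fin.sum_univ_eq_sum_range (fun i => F (n - i)),
        ← Finset.sum_range_reflect]
      refine Finset.sum_congr rfl fun i hi => ?_
      rw [mem_range] at hi
      have e : n - 1 - i + 1 = n - i := by omega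
      simp only [hFdef, HL_eq_HR, e]
    have hterm : ∀ i : Fin n, (F (n - i) : ℤ) * ∏ i : Fin n, ((bN n w i).factorial : ℤ) =
        m.factorial * (β i * VV (Function.update β i (β i - 1))) := by
      intro i
      have hi := i.2
      by_cases hd : w (n - i + 1) < w (n - i)
      · obtain ⟨hk1, hk2⟩ := hF.desc_range hd
        obtain ⟨j, j1, j2, j3, j4⟩ := exists_j hk2 hd
        have hD' := dom_step hD hk1 hd j1 j2 j3 j4
        have hH' := HL_step m hF hD hk1 hd j1 j2 j3 j4
        have c1 := cd_step_eq j1 j2 j3 j4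
        have c2 := cd_step_ne j1 j2 j3 j4
        have hF' : Fx n (w * Equiv.swap (n - i) j) :=
          hF.mul (Fx.swap hk1 (by omega) (by omega) j2)
        generalize w * Equiv.swap (n - i) j = u at *
        have b1 : bN n u i + 1 = bN n w i := by simp only [bN]; omega
        have b2 : ∀ i', i' ≠ i → bN n u i' = bN n w i' := by
          intro i' h
          have : (i' : ℕ) ≠ i := fun h' => h (Fin.ext h')
          have := i'.2
          simp only [bN]; rw [c2 _ (by omega)]
        have hl' : ell n u = m := by
          have : ell n u + 1 = ell n w := by
            rw [ell, ell, ← Finset.add_sum_erase _ _ (mem_univ i),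
              ← Finset.add_sum_erase _ (fun i : Fin n => cd n w (n - i)) (mem_univ i)]
            rw [← c1]
            have : ∑ x ∈ univ.erase i, cd n u (n - x) = ∑ x ∈ univ.erase i, cd n w (n - x) := by
              refine Finset.sum_congr rfl fun x hx => ?_
              have h := Finset.ne_of_mem_erase hx
              have : (x : ℕ) ≠ i := fun h' => h (Fin.ext h')
              have := x.2
              rw [c2 _ (by omega)]
            omega
          omega
        have hih := ih u hF' hD' hl'
        have hup : (fun i => (bN n u i : ℤ)) = Function.update β i (β i - 1) := by
          ext i'
          by_cases h : i' = i
          · subst h; simp [hβ, ← b1]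
          · simp [h, hβ, b2]
        have hprod : ∏ i : Fin n, ((bN n w i).factorial : ℤ) =
            β i * ∏ i : Fin n, ((bN n u i).factorial : ℤ) := by
          rw [← Finset.mul_prod_erase _ _ (mem_univ i),
            ← Finset.mul_prod_erase _ (fun i : Fin n => ((bN n u i).factorial : ℤ)) (mem_univ i)]
          have : ∏ x ∈ univ.erase i, ((bN n w x).factorial : ℤ) =
              ∏ x ∈ univ.erase i, ((bN n u x).factorial : ℤ) := by
            refine Finset.prod_congr rfl fun x hx => ?_
            rw [b2 x (Finset.ne_of_mem_erase hx)]
          rw [this, ← b1, Nat.factorial_succ, hβ]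
          simp only [← b1]
          push_cast; ring
        rw [hprod, ← hup]
        simp only [hFdef, if_pos hd]
        rw [hH']
        linear_combination β i * hih
      · simp only [hFdef, if_neg hd]
        simp only [Nat.cast_zero, zero_mul]
        symm
        by_cases hi0 : (i : ℕ) = 0
        · have : β i = 0 := by simp [hβ, bN, hi0, cd]
          simp [this]
        · have hne : w (n - i) ≠ w (n - i + 1) := fun h => by have := w.injective h; omega
          have hc := cd_ascent hD (k := n - i) (by omega) (by omega)
          have hz : VV (Function.update β i (β i - 1)) = 0 := by
            rw [VV, det_vandermonde_eq_zero_iff]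
            refine ⟨i, ⟨i - 1, by omega⟩, ?_, ?_⟩
            · have hn : (⟨i - 1, by omega⟩ : Fin n) ≠ i := by
                intro h; have := congrArg Fin.val h; simp at this; omega
              rw [Function.update_self, Function.update_of_ne hn]
              simp only [hβ, bN]
              have e : n - (i - 1 : ℕ) = n - i + 1 := by omega
              rw [e, hc]
              push_cast
              rw [Nat.cast_sub (by omega)]; simp; ring
            · intro h; have := congrArg Fin.val h; simp at this; omega
          simp [hz]
    rw [hH]
    push_cast
    rw [Finset.sum_mul, Finset.sum_congr rfl (fun i _ => hterm i), ← Finset.mul_sum, VV_rec]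
    have : ∑ i, β i - ∑ i : Fin n, (i : ℤ) = m + 1 := by
      rw [← Finset.sum_sub_distrib]
      have e : ((m + 1 : ℕ) : ℤ) = ∑ i : Fin n, (cd n w (n - i) : ℤ) := by
        rw [← hl, ell]; push_cast; rfl
      push_cast at e
      rw [e]
      refine Finset.sum_congr rfl fun i _ => ?_
      simp [hβ, bN]
    rw [this, Nat.factorial_succ]
    push_cast; ring

end YBA

namespace YBA
open Finset

lemma cd_left_ne {n a : ℕ} {w : Equiv.Perm ℕ} (hd : w⁻¹ (a + 1) < w⁻¹ a) (i : ℕ)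
    (hi : i ≠ w⁻¹ (a + 1)) : cd n (sA a * w) i = cd n w i := by
  rw [cd, cd]
  congr 1
  ext j
  rw [mem_filter, mem_filter, mem_Ioc]
  refine and_congr_right ?_
  rintro ⟨hj, -⟩
  simp only [Equiv.Perm.mul_apply]
  apply sA_lt_iff
  · rintro ⟨h1, h2⟩
    apply hi; rw [← h2]; simp
  · rintro ⟨h1, h2⟩
    rw [← h1, ← h2] at hd
    simp at hd; omega

lemma cd_left_eq {n a : ℕ} {w : Equiv.Perm ℕ} (hd : w⁻¹ (a + 1) < w⁻¹ a) (hn : w⁻¹ a ≤ n) :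
    cd n (sA a * w) (w⁻¹ (a + 1)) + 1 = cd n w (w⁻¹ (a + 1)) := by
  rw [cd, cd]
  have : ((Ioc (w⁻¹ (a + 1)) n).filter fun j => w j < w (w⁻¹ (a + 1))) =
      insert (w⁻¹ a) ((Ioc (w⁻¹ (a + 1)) n).filter fun j =>
        (sA a * w) j < (sA a * w) (w⁻¹ (a + 1))) := by
    ext j
    rw [mem_insert, mem_filter, mem_filter, mem_Ioc]
    have hw : ∀ x, w (w⁻¹ x) = x := fun x => by simp
    simp only [Equiv.Perm.mul_apply, hw]
    by_cases hj : j = w⁻¹ a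
    · subst hj
      simp only [true_or, iff_true, hw]; exact ⟨⟨hd, hn⟩, by omega⟩
    · have h1 : w j ≠ a := fun h => hj (by rw [← h]; simp)
      simp only [hj, false_or, sA_apply]
      refine and_congr_right fun _ => ?_
      simp only [h1, if_false]
      split_ifs <;> omega
  rw [this, card_insert_of_notMem]
  simp [sA_apply]

lemma ell_left {n a : ℕ} {w : Equiv.Perm ℕ} (hF : Fx n w) (hd : w⁻¹ (a + 1) < w⁻¹ a) :
    ell n (sA a * w) + 1 = ell n w := by
  obtain ⟨h1, h2⟩ := hF.inv.desc_range hd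
  have h3 := hF.inv.le (x := a) h2.le
  have h4 := hF.inv.pos (x := a + 1) (by omega)
  have c1 := cd_left_eq (n := n) hd h3
  have c2 := cd_left_ne (n := n) hd
  generalize w⁻¹ (a + 1) = p at *
  generalize w⁻¹ a = q at *
  rw [ell, ell, ← Finset.add_sum_erase _ _ (mem_univ (⟨n - p, by omega⟩ : Fin n)),
    ← Finset.add_sum_erase _ (fun i : Fin n => cd n w (n - i))
      (mem_univ (⟨n - p, by omega⟩ : Fin n))]
  have e : n - (n - p) = p := by omega
  simp only [e]
  rw [← c1]
  have : ∑ x ∈ univ.erase (⟨n - p, by omega⟩ : Fin n), cd n (sA a * w) (n - x) =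
      ∑ x ∈ univ.erase (⟨n - p, by omega⟩ : Fin n), cd n w (n - x) := by
    refine Finset.sum_congr rfl fun x hx => ?_
    have h := Finset.ne_of_mem_erase hx
    have : (x : ℕ) ≠ n - p := fun h' => h (Fin.ext h')
    have := x.2
    rw [c2 _ (by omega)]
  omega

lemma ell_left_asc {n a : ℕ} {w : Equiv.Perm ℕ} (hF : Fx n w) (h1 : 1 ≤ a) (h2 : a < n)
    (hd : ¬ w⁻¹ (a + 1) < w⁻¹ a) : ell n (sA a * w) = ell n w + 1 := by
  have hne : w⁻¹ (a + 1) ≠ w⁻¹ a := fun h => by have := (w⁻¹).injective h; omega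
  have := ell_left (n := n) (a := a) (w := sA a * w) ((Fx.sA h1 h2).mul hF) (by
    rw [mul_inv_rev, sA_inv]
    simp only [Equiv.Perm.mul_apply, sA_apply]
    simp only [if_true, Nat.succ_ne_self, if_false]; omega)
  rw [← mul_assoc, sA_mul_self, one_mul] at this
  exact this.symm

open Classical in
/-- words of length `m` in `1, …, n-1` with product `w` -/
noncomputable def wF (n : ℕ) : ℕ → Equiv.Perm ℕ → Finset (List ℕ)
  | 0, w => if w = 1 then {[]} else ∅
  | m + 1, w => (Ico 1 n).biUnion fun k => (wF n m (sA k * w)).image (List.cons k)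

lemma wordProdA_cons (k : ℕ) (l : List ℕ) : wordProdA (k :: l) = sA k * wordProdA l := by
  simp [wordProdA]

lemma wordProdA_append (k l : List ℕ) : wordProdA (k ++ l) = wordProdA k * wordProdA l := by
  simp [wordProdA]

lemma eq_sA_mul_iff (k : ℕ) (u w : Equiv.Perm ℕ) : u = sA k * w ↔ sA k * u = w := by
  constructor
  · rintro rfl; rw [← mul_assoc, sA_mul_self, one_mul]
  · rintro rfl; rw [← mul_assoc, sA_mul_self, one_mul]

lemma mem_wF (n m : ℕ) : ∀ (w : Equiv.Perm ℕ) (l : List ℕ), l ∈ wF n m w ↔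
    l.length = m ∧ (∀ i ∈ l, 1 ≤ i ∧ i < n) ∧ wordProdA l = w := by
  induction m with
  | zero =>
    intro w l
    rw [wF]
    split_ifs with h
    · subst h
      simp only [mem_singleton, List.length_eq_zero_iff]
      constructor
      · rintro rfl; simp [wordProdA]
      · exact fun h => h.1
    · simp only [notMem_empty, List.length_eq_zero_iff, false_iff]
      rintro ⟨rfl, -, h'⟩
      apply h; rw [← h']; simp [wordProdA]
  | succ m ih =>
    intro w l
    rw [wF]
    simp only [mem_biUnion, mem_Ico, mem_image, ih]
    constructor
    · rintro ⟨k, hk, l', ⟨h1, h2, h3⟩, rfl⟩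
      refine ⟨by simp [h1], ?_, ?_⟩
      · intro i hi
        rcases List.mem_cons.1 hi with rfl | hi
        · exact hk
        · exact h2 i hi
      · rw [wordProdA_cons, ← eq_sA_mul_iff]; exact h3
    · rintro ⟨h1, h2, h3⟩
      cases l with
      | nil => simp at h1
      | cons k l =>
        refine ⟨k, h2 k (by simp), l, ⟨by simpa using h1, fun i hi => h2 i (by simp [hi]), ?_⟩, rfl⟩
        rw [eq_sA_mul_iff, ← wordProdA_cons]; exact h3

lemma card_wF_succ (n m : ℕ) (w : Equiv.Perm ℕ) :
    (wF n (m + 1) w).card = ∑ k ∈ Ico 1 n, (wF n m (sA k * w)).card := by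
  classical
  rw [wF, card_biUnion]
  · refine Finset.sum_congr rfl fun k _ => ?_
    rw [card_image_of_injective _ (List.cons_injective)]
  · intro i _ j _ hij
    rw [Function.onFun, disjoint_left]
    intro l hl hl'
    simp only [mem_image] at hl hl'
    obtain ⟨l1, -, rfl⟩ := hl
    obtain ⟨l2, -, h⟩ := hl'
    exact hij (List.cons.inj h).1.symm

lemma ell_one (n : ℕ) : ell n 1 = 0 := by
  rw [ell]
  refine Finset.sum_eq_zero fun i _ => ?_
  rw [cd, card_eq_zero]
  ext j
  rw [mem_filter, mem_Ioc]
  refine iff_of_false (fun h => ?_) (notMem_empty _)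
  have h2 : j < n - i := h.2
  omega

lemma Fx_wordProdA {n : ℕ} {l : List ℕ} (h : ∀ i ∈ l, 1 ≤ i ∧ i < n) : Fx n (wordProdA l) := by
  induction l with
  | nil => simp [wordProdA, Fx]
  | cons k l ih =>
    rw [wordProdA_cons]
    have hk := h k (by simp)
    exact (Fx.sA hk.1 hk.2).mul (ih fun i hi => h i (by simp [hi]))

lemma ell_wordProdA {n : ℕ} {l : List ℕ} (h : ∀ i ∈ l, 1 ≤ i ∧ i < n) :
    ell n (wordProdA l) ≤ l.length := by
  induction l with
  | nil => simp [wordProdA, ell_one]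
  | cons k l ih =>
    have ih' := ih fun i hi => h i (by simp [hi])
    have hk := h k (by simp)
    have hF : Fx n (wordProdA l) := Fx_wordProdA fun i hi => h i (by simp [hi])
    rw [wordProdA_cons, List.length_cons]
    by_cases hd : (wordProdA l)⁻¹ (k + 1) < (wordProdA l)⁻¹ k
    · have := ell_left hF hd; omega
    · have := ell_left_asc hF hk.1 hk.2 hd; omega

lemma card_wF_zero {n m : ℕ} {w : Equiv.Perm ℕ} (h : m < ell n w) : (wF n m w).card = 0 := by
  rw [card_eq_zero, eq_empty_iff_forall_notMem]
  intro l hl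
  rw [mem_wF] at hl
  obtain ⟨h1, h2, rfl⟩ := hl
  have := ell_wordProdA h2
  omega

lemma card_wF (n m : ℕ) : ∀ w, Fx n w → ell n w = m → (wF n m w).card = HL n m w := by
  induction m with
  | zero =>
    intro w _ _
    rw [wF, HL]; split_ifs <;> simp
  | succ m ih =>
    intro w hF hl
    rw [card_wF_succ, HL]
    have hsub : Ico 1 n ⊆ range (n + 1) := by intro x; simp; omega
    rw [← Finset.sum_subset hsub]
    · refine Finset.sum_congr rfl fun k hk => ?_
      rw [mem_Ico] at hk
      split_ifs with hd
      · apply ih _ ((Fx.sA hk.1 hk.2).mul hF)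
        have := ell_left hF hd; omega
      · apply card_wF_zero
        have := ell_left_asc hF hk.1 hk.2 hd; omega
    · intro k _ hk
      rw [if_neg]
      intro hd
      exact hk (mem_Ico.2 (hF.inv.desc_range hd))

lemma RSetA_eq {n m : ℕ} {w : Equiv.Perm ℕ} (hl : ell n w = m)
    (hpos : 0 < (wF n m w).card) : RSetA n w = ↑(wF n m w) := by
  obtain ⟨l0, hl0⟩ := card_pos.1 hpos
  rw [mem_wF] at hl0
  ext l
  rw [mem_coe, mem_wF, RSetA, Set.mem_ofPred_eq, IsReducedWordA]
  constructor
  · rintro ⟨h1, h2, h3⟩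
    refine ⟨?_, h1, h2⟩
    have h4 := h3 l0 hl0.2.1 hl0.2.2
    have h5 := ell_wordProdA h1
    rw [h2] at h5
    omega
  · rintro ⟨h1, h2, h3⟩
    refine ⟨h2, h3, fun l' h4 h5 => ?_⟩
    have h6 := ell_wordProdA h4
    rw [h5] at h6
    omega

end YBA

namespace YBA
open Finset

lemma w0A_apply (n i : ℕ) : w0A n i = if 1 ≤ i ∧ i ≤ n then n + 1 - i else i := rfl

/-- rotation of words -/
def rot (n : ℕ) : List ℕ → List ℕ
  | [] => []
  | i :: l => l ++ [n - i]

lemma rot_mem {n N : ℕ} {l : List ℕ} (h : l ∈ wF n N (w0A n)) : rot n l ∈ wF n N (w0A n) := by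
  cases l with
  | nil => exact h
  | cons i l =>
    rw [mem_wF] at h ⊢
    obtain ⟨h1, h2, h3⟩ := h
    have hi := h2 i (by simp)
    refine ⟨by simpa [rot] using h1, ?_, ?_⟩
    · intro k hk
      rcases List.mem_append.1 hk with hk | hk
      · exact h2 k (by simp [hk])
      · rw [List.mem_singleton] at hk; omega
    · rw [wordProdA_cons, ← eq_sA_mul_iff] at h3
      rw [rot, wordProdA_append, h3]
      have e : wordProdA [n - i] = sA (n - i) := by simp [wordProdA]
      have h4 : w0A n * sA (n - i) = sA i * w0A n := by
        rw [sA, Equiv.mul_swap_eq_swap_mul, w0A_apply, w0A_apply, if_pos (by omega),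
          if_pos (by omega), Equiv.swap_comm, sA]
        congr 2 <;> omega
      rw [e, mul_assoc, h4, ← mul_assoc, sA_mul_self, one_mul]

lemma rot_inj {n N : ℕ} : Set.InjOn (rot n) (wF n N (w0A n) : Set (List ℕ)) := by
  intro l hl l' hl' h
  rw [mem_coe, mem_wF] at hl hl'
  cases l with
  | nil =>
    cases l' with
    | nil => rfl
    | cons i l' => simp [rot] at h
  | cons i l =>
    cases l' with
    | nil => simp [rot] at h
    | cons i' l' =>
      have h1 := hl.2.1 i (by simp)
      have h2 := hl'.2.1 i' (by simp)
      simp only [rot] at h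
      have h3 := List.append_inj' h rfl
      obtain ⟨h3, h4⟩ := h3
      rw [List.cons.injEq] at h4
      have : i = i' := by omega
      rw [this, h3]

lemma rot_image {n N : ℕ} : (wF n N (w0A n)).image (rot n) = wF n N (w0A n) := by
  apply eq_of_subset_of_card_le
  · intro l hl
    obtain ⟨l', h, rfl⟩ := mem_image.1 hl
    exact rot_mem h
  · rw [card_image_of_injOn rot_inj]

lemma isYB_short {l : List ℕ} (h : l.length < 3) : isYB l = false := by
  match l, h with
  | [], _ => rfl
  | [_], _ => rfl
  | [_, _], _ => rfl
  | _ :: _ :: _ :: _, h => simp at h; omega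

lemma isYB_append {l l' : List ℕ} (h : 3 ≤ l.length) : isYB (l ++ l') = isYB l := by
  match l, h with
  | [], h => simp at h
  | [_], h => simp at h
  | [_, _], h => simp at h
  | _ :: _ :: _ :: _, h => rfl

/-- number of words with a Yang-Baxter move at `j` -/
noncomputable def cY (n N j : ℕ) : ℕ :=
  ((wF n N (w0A n)).filter fun l => isYB (l.drop j) = true).card

lemma cY_succ {n N j : ℕ} (h : j + 4 ≤ N) : cY n N (j + 1) = cY n N j := by
  symm
  rw [cY]
  conv_lhs => rw [← rot_image]
  rw [filter_image, card_image_of_injOn (rot_inj.mono (by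
    intro x hx; exact mem_coe.2 (mem_filter.1 (mem_coe.1 hx)).1)), cY]
  congr 1
  apply filter_congr
  intro l hl
  rw [mem_wF] at hl
  cases l with
  | nil => simp at hl; omega
  | cons i l =>
    have h1 := hl.1
    rw [List.length_cons] at h1
    rw [rot, List.drop_succ_cons, List.drop_append_of_le_length (by omega), isYB_append]
    rw [List.length_drop]; omega

lemma cY_eq {n N j : ℕ} (h : j + 3 ≤ N) : cY n N j = cY n N 0 := by
  induction j with
  | zero => rfl
  | succ j ih => rw [cY_succ (by omega), ih (by omega)]

lemma cY_zero {n N j : ℕ} (h : N < j + 3) : cY n N j = 0 := by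
  rw [cY, card_eq_zero, filter_eq_empty_iff]
  intro l hl
  rw [mem_wF] at hl
  rw [isYB_short]
  · simp
  · rw [List.length_drop]; omega

lemma sum_yb (n M : ℕ) : ∑ l ∈ wF n (M + 3) (w0A n), ybCount l = (M + 1) * cY n (M + 3) 0 := by
  have h1 : ∑ l ∈ wF n (M + 3) (w0A n), ybCount l = ∑ j ∈ range (M + 3), cY n (M + 3) j := by
    have : ∀ l ∈ wF n (M + 3) (w0A n), ybCount l =
        ∑ j ∈ range (M + 3), if isYB (l.drop j) = true then 1 else 0 := by
      intro l hl
      rw [mem_wF] at hl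
      rw [ybCount, hl.1, card_filter]
    rw [Finset.sum_congr rfl this, Finset.sum_comm]
    refine Finset.sum_congr rfl fun j _ => ?_
    rw [cY, card_filter]
  rw [h1, Finset.sum_range_succ, Finset.sum_range_succ, cY_zero (by omega), cY_zero (by omega)]
  rw [Finset.sum_congr rfl (fun j hj => cY_eq (by rw [mem_range] at hj; omega))]
  simp

/-- the permutation with a braid removed -/
def uP (n k : ℕ) : Equiv.Perm ℕ := sA k * (sA (k + 1) * (sA k * w0A n))

lemma braid (k : ℕ) (w : Equiv.Perm ℕ) :
    sA (k + 1) * (sA k * (sA (k + 1) * w)) = sA k * (sA (k + 1) * (sA k * w)) := by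
  ext x
  simp only [Equiv.Perm.mul_apply, sA_apply]
  split_ifs <;> omega

lemma cY_formula (n M : ℕ) :
    cY n (M + 3) 0 = 2 * ∑ k ∈ Ico 1 (n - 1), (wF n M (uP n k)).card := by
  classical
  have key : ((wF n (M + 3) (w0A n)).filter fun l => isYB (l.drop 0) = true) =
      (Ico 1 (n - 1)).biUnion fun k =>
        (wF n M (uP n k)).image (fun l => k :: (k + 1) :: k :: l) ∪
        (wF n M (uP n k)).image (fun l => (k + 1) :: k :: (k + 1) :: l) := by
    ext l
    simp only [mem_filter, mem_biUnion, mem_union, mem_image, mem_wF, mem_Ico, List.drop_zero]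
    constructor
    · rintro ⟨⟨h1, h2, h3⟩, h4⟩
      match l, h1 with
      | a :: b :: c :: l, h1 =>
        have ha := h2 a (by simp)
        have hb := h2 b (by simp)
        have hl : ∀ i ∈ l, 1 ≤ i ∧ i < n := fun i hi => h2 i (by simp [hi])
        have hlen : l.length = M := by simpa using h1
        simp only [wordProdA_cons] at h3
        simp only [isYB, Bool.or_eq_true, Bool.and_eq_true, bne_iff_ne, beq_iff_eq] at h4
        rcases h4 with ⟨⟨-, rfl⟩, rfl⟩ | ⟨⟨-, rfl⟩, rfl⟩
        · refine ⟨c, by omega, Or.inl ⟨l, ⟨hlen, hl, ?_⟩, rfl⟩⟩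
          rw [uP]
          simp only [eq_sA_mul_iff]
          exact h3
        · refine ⟨b, by omega, Or.inr ⟨l, ⟨hlen, hl, ?_⟩, rfl⟩⟩
          rw [uP]
          simp only [eq_sA_mul_iff]
          rw [← braid]; exact h3
    · rintro ⟨k, hk, ⟨l', ⟨h1, h2, h3⟩, rfl⟩ | ⟨l', ⟨h1, h2, h3⟩, rfl⟩⟩
      · refine ⟨⟨by simp [h1], ?_, ?_⟩, ?_⟩
        · intro i hi
          simp only [List.mem_cons] at hi
          rcases hi with rfl | rfl | rfl | hi
          · omega
          · omega
          · omega
          · exact h2 i hi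
        · rw [uP] at h3
          simp only [eq_sA_mul_iff] at h3
          simp only [wordProdA_cons]; exact h3
        · simp [isYB]; omega
      · refine ⟨⟨by simp [h1], ?_, ?_⟩, ?_⟩
        · intro i hi
          simp only [List.mem_cons] at hi
          rcases hi with rfl | rfl | rfl | hi
          · omega
          · omega
          · omega
          · exact h2 i hi
        · rw [uP] at h3
          simp only [eq_sA_mul_iff] at h3
          simp only [wordProdA_cons]; rw [braid]; exact h3
        · simp [isYB]; omega
  rw [cY, key, card_biUnion, Finset.mul_sum]
  · refine Finset.sum_congr rfl fun k _ => ?_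
    rw [card_union_of_disjoint, card_image_of_injective, card_image_of_injective, two_mul]
    · intro a b h; simpa using h
    · intro a b h; simpa using h
    · rw [disjoint_left]
      intro l hl hl'
      simp only [mem_image] at hl hl'
      obtain ⟨l1, -, rfl⟩ := hl
      obtain ⟨l2, -, h⟩ := hl'
      simp at h
  · intro i _ j _ hij
    rw [Function.onFun, disjoint_left]
    intro l hl hl'
    simp only [mem_union, mem_image] at hl hl'
    rcases hl with ⟨l1, -, rfl⟩ | ⟨l1, -, rfl⟩ <;> rcases hl' with ⟨l2, -, h⟩ | ⟨l2, -, h⟩ <;>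
      simp only [List.cons.injEq] at h <;> omega

end YBA

namespace YBA
open Finset Matrix

lemma VV_update {n : ℕ} (β : Fin n → ℤ) (j : Fin n) :
    ∃ C : ℤ, ∀ y, VV (Function.update β j y) = C * ∏ i ∈ univ.erase j, (y - β i) := by
  refine ⟨(∏ i ∈ univ.erase j, ∏ l ∈ (Ioi i).erase j, (β l - β i)) *
    ∏ i ∈ univ.erase j, (if i < j then 1 else -1), fun y => ?_⟩
  rw [VV, det_vandermonde, ← Finset.mul_prod_erase _ _ (mem_univ j)]
  have h1 : ∏ l ∈ Ioi j, (Function.update β j y l - Function.update β j y j) =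
      ∏ i ∈ univ.erase j, (if j < i then β i - y else 1) := by
    rw [← Finset.prod_filter]
    have : (univ.erase j).filter (fun i => j < i) = Ioi j := by
      ext i
      simp only [mem_filter, mem_erase, mem_univ, and_true, mem_Ioi]
      exact ⟨fun h => h.2, fun h => ⟨ne_of_gt h, h⟩⟩
    rw [this]
    refine Finset.prod_congr rfl fun l hl => ?_
    rw [Function.update_self, Function.update_of_ne (ne_of_gt (mem_Ioi.1 hl))]
  have h2 : ∀ i ∈ univ.erase j,
      ∏ l ∈ Ioi i, (Function.update β j y l - Function.update β j y i) =
      (if i < j then y - β i else 1) * ∏ l ∈ (Ioi i).erase j, (β l - β i) := by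
    intro i hi
    have hij := ne_of_mem_erase hi
    have e : ∀ l ∈ (Ioi i).erase j,
        Function.update β j y l - Function.update β j y i = β l - β i := by
      intro l hl
      rw [Function.update_of_ne hij, Function.update_of_ne (ne_of_mem_erase hl)]
    rw [← Finset.prod_congr rfl e]
    split_ifs with h
    · rw [← Finset.mul_prod_erase _ _ (mem_Ioi.2 h), Function.update_self,
        Function.update_of_ne hij]
    · rw [one_mul, erase_eq_of_notMem (by simpa using h)]
  rw [h1, Finset.prod_congr rfl h2, Finset.prod_mul_distrib]
  have h3 : (∏ i ∈ univ.erase j, (if j < i then β i - y else 1)) *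
      (∏ i ∈ univ.erase j, (if i < j then y - β i else 1)) =
      (∏ i ∈ univ.erase j, (if i < j then 1 else -1)) * ∏ i ∈ univ.erase j, (y - β i) := by
    rw [← Finset.prod_mul_distrib, ← Finset.prod_mul_distrib]
    refine Finset.prod_congr rfl fun i hi => ?_
    rcases lt_or_gt_of_ne (ne_of_mem_erase hi) with h | h
    · rw [if_neg (not_lt.2 h.le), if_pos h, if_pos h]
    · rw [if_pos h, if_neg (not_lt.2 h.le), if_neg (not_lt.2 h.le)]; ring
  rw [← mul_assoc, h3]; ring

lemma VV_update_mul {n : ℕ} (β : Fin n → ℤ) (j : Fin n) (y : ℤ) :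
    VV (Function.update β j y) * ∏ i ∈ univ.erase j, (β j - β i) =
      VV β * ∏ i ∈ univ.erase j, (y - β i) := by
  obtain ⟨C, hC⟩ := VV_update β j
  have := hC (β j)
  rw [Function.update_eq_self] at this
  rw [this, hC y]; ring

lemma VV_swap {n : ℕ} (β : Fin n → ℤ) {i j : Fin n} (h : i ≠ j) :
    VV (β ∘ Equiv.swap i j) = - VV β := by
  rw [VV, VV]
  have : vandermonde (β ∘ Equiv.swap i j) = (vandermonde β).submatrix (Equiv.swap i j) id := by
    ext a b; simp [vandermonde_apply]
  rw [this, det_permute, Equiv.Perm.sign_swap h]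
  simp

/-- the numbers `d_m` -/
def dd (m : ℕ) : ℚ := ∏ e ∈ range m, (2 * (e : ℚ) + 5) / (2 * e + 2)

/-- auxiliary product -/
def AA (m : ℕ) : ℚ := ∏ e ∈ range m, (2 * (e : ℚ) - 1) / (2 * e + 2)

lemma dd_succ (m : ℕ) : dd (m + 1) * (m + 1) = dd m * (m + 5 / 2) := by
  rw [dd, dd, prod_range_succ]
  have : (2 * (m : ℚ) + 2) ≠ 0 := by positivity
  field_simp

lemma AA_eq (p : ℕ) : -((2 * (p : ℚ) + 4) * (2 * p + 3) * (2 * p + 2)) * AA (p + 2) = 3 * dd p := by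
  induction p with
  | zero => norm_num [AA, dd, prod_range_succ]
  | succ p ih =>
    have h := dd_succ p
    have h1 : AA (p + 1 + 2) = AA (p + 2) * ((2 * p + 3) / (2 * p + 6)) := by
      rw [AA, AA, prod_range_succ]
      push_cast
      congr 1
      congr 1 <;> ring
    have h2 : dd (p + 1) = dd p * (p + 5 / 2) / (p + 1) := by
      rw [← h]; field_simp
    rw [h1, h2]
    have : (3 : ℚ) * (dd p * (p + 5 / 2) / (p + 1)) = (3 * dd p) * ((p + 5 / 2) / (p + 1)) := by ring
    rw [this, ← ih]
    push_cast
    field_simp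
    ring

lemma conv_sum (s : ℕ) : ∑ x ∈ antidiagonal s, dd x.1 * dd x.2 =
    (s + 1) * (s + 2) * (s + 3) * (s + 4) / 24 := by
  induction s with
  | zero => norm_num [dd]
  | succ s ih =>
    have h1 : ((s : ℚ) + 1) * ∑ x ∈ antidiagonal (s + 1), dd x.1 * dd x.2 =
        2 * ∑ x ∈ antidiagonal (s + 1), x.1 * (dd x.1 * dd x.2) := by
      have e : ∑ x ∈ antidiagonal (s + 1), (x.1 : ℚ) * (dd x.1 * dd x.2) =
          ∑ x ∈ antidiagonal (s + 1), (x.2 : ℚ) * (dd x.1 * dd x.2) := by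
        rw [← Finset.Nat.sum_antidiagonal_swap]
        refine Finset.sum_congr rfl fun x _ => ?_
        simp only [Prod.fst_swap, Prod.snd_swap]; ring
      rw [two_mul]
      nth_rewrite 2 [e]
      rw [← Finset.sum_add_distrib, Finset.mul_sum]
      refine Finset.sum_congr rfl fun x hx => ?_
      have : (x.1 : ℚ) + x.2 = s + 1 := by exact_mod_cast mem_antidiagonal.1 hx
      rw [← this]; ring
    have h2 : ∑ x ∈ antidiagonal (s + 1), (x.1 : ℚ) * (dd x.1 * dd x.2) =
        ∑ x ∈ antidiagonal s, ((x.1 : ℚ) + 5 / 2) * (dd x.1 * dd x.2) := by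
      rw [Finset.Nat.sum_antidiagonal_succ]
      simp only [Nat.cast_zero, zero_mul, zero_add]
      refine Finset.sum_congr rfl fun x _ => ?_
      have := dd_succ x.1
      push_cast
      linear_combination dd x.2 * this
    have h3 : 2 * ∑ x ∈ antidiagonal s, ((x.1 : ℚ) + 5 / 2) * (dd x.1 * dd x.2) =
        (s + 5) * ∑ x ∈ antidiagonal s, dd x.1 * dd x.2 := by
      have e : ∑ x ∈ antidiagonal s, ((x.1 : ℚ) + 5 / 2) * (dd x.1 * dd x.2) =
          ∑ x ∈ antidiagonal s, ((x.2 : ℚ) + 5 / 2) * (dd x.1 * dd x.2) := by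
        rw [← Finset.Nat.sum_antidiagonal_swap]
        refine Finset.sum_congr rfl fun x _ => ?_
        simp only [Prod.fst_swap, Prod.snd_swap]; ring
      rw [two_mul]
      nth_rewrite 2 [e]
      rw [← Finset.sum_add_distrib, Finset.mul_sum]
      refine Finset.sum_congr rfl fun x hx => ?_
      have : (x.1 : ℚ) + x.2 = s := by exact_mod_cast mem_antidiagonal.1 hx
      rw [← this]; ring
    rw [h2, h3, ih] at h1
    have h0 : (s : ℚ) + 1 ≠ 0 := by positivity
    apply mul_left_cancel₀ h0
    rw [h1]
    push_cast
    ring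

/-- the product evaluated -/
lemma prod_eval (n : ℕ) (j : Fin n) :
    (∏ i ∈ univ.erase j, ((2 * (j : ℚ) - 3) - 2 * (i : ℚ))) =
      AA j * dd (n - 1 - j) * ∏ i ∈ univ.erase j, (2 * (j : ℚ) - 2 * (i : ℚ)) := by
  have hj := j.2
  have key : ∏ i ∈ univ.erase j, ((2 * (j : ℚ) - 3) - 2 * (i : ℚ)) / (2 * (j : ℚ) - 2 * (i : ℚ)) =
      AA j * dd (n - 1 - j) := by
    have e1 : ∏ i ∈ univ.erase j, ((2 * (j : ℚ) - 3) - 2 * (i : ℚ)) / (2 * (j : ℚ) - 2 * (i : ℚ)) =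
        ∏ i : Fin n, if (i : ℕ) = j then 1 else
          ((2 * (j : ℚ) - 3) - 2 * (i : ℚ)) / (2 * (j : ℚ) - 2 * (i : ℚ)) := by
      rw [← Finset.mul_prod_erase univ _ (mem_univ j), if_pos rfl, one_mul]
      refine Finset.prod_congr rfl fun i hi => ?_
      rw [if_neg]
      intro h; exact ne_of_mem_erase hi (Fin.ext h)
    rw [e1, Fin.prod_univ_eq_prod_range (fun i => if i = (j : ℕ) then (1 : ℚ) else
          ((2 * (j : ℚ) - 3) - 2 * (i : ℚ)) / (2 * (j : ℚ) - 2 * (i : ℚ)))]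
    generalize (j : ℕ) = k at *
    obtain ⟨q, rfl⟩ : ∃ q, n = k + (q + 1) := ⟨n - 1 - k, by omega⟩
    rw [prod_range_add, prod_range_succ']
    have : k + (q + 1) - 1 - k = q := by omega
    rw [this]
    congr 1
    · rw [AA, ← Finset.prod_range_reflect]
      refine Finset.prod_congr rfl fun i hi => ?_
      rw [mem_range] at hi
      rw [if_neg (by omega)]
      have : ((k - 1 - i : ℕ) : ℚ) = k - 1 - i := by
        rw [Nat.sub_sub, Nat.cast_sub (by omega)]; push_cast; ring
      rw [this]
      congr 1 <;> ring
    · simp only [add_zero, if_true, mul_one]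
      rw [dd]
      refine Finset.prod_congr rfl fun i hi => ?_
      rw [if_neg (by omega)]
      push_cast
      rw [← neg_div_neg_eq]
      congr 1 <;> ring
  rw [← key, ← Finset.prod_mul_distrib]
  refine Finset.prod_congr rfl fun i hi => ?_
  rw [div_mul_cancel₀]
  intro h
  apply ne_of_mem_erase hi
  apply Fin.ext
  have : (j : ℚ) = i := by linarith
  exact_mod_cast this.symm

end YBA

namespace YBA
open Finset

lemma Fx_w0 (n : ℕ) : Fx n (w0A n) := by
  refine ⟨by rw [w0A_apply, if_neg (by omega)], fun x hx => by rw [w0A_apply, if_neg (by omega)]⟩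

lemma w0_inv (n : ℕ) : (w0A n)⁻¹ = w0A n := by
  rw [inv_eq_iff_mul_eq_one]
  ext x
  simp only [Equiv.Perm.mul_apply, w0A_apply, Equiv.Perm.one_apply]
  split_ifs <;> omega

lemma Fx_u {n k : ℕ} (h1 : 1 ≤ k) (h2 : k + 1 < n) : Fx n (uP n k) :=
  (Fx.sA h1 (by omega)).mul ((Fx.sA (by omega) h2).mul ((Fx.sA h1 (by omega)).mul (Fx_w0 n)))

lemma u_apply {n k : ℕ} (h1 : 1 ≤ k) (h2 : k + 1 < n) (x : ℕ) :
    uP n k x = if x = n - 1 - k then k else if x = n + 1 - k then k + 2 else w0A n x := by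
  simp only [uP, Equiv.Perm.mul_apply, w0A_apply, sA_apply]
  split_ifs <;> omega

lemma Dom_w0 (n : ℕ) : Dom n (w0A n) := by
  intro a b c h1 h2 h3 h4
  simp only [w0A_apply]
  split_ifs <;> omega

lemma Dom_u {n k : ℕ} (h1 : 1 ≤ k) (h2 : k + 1 < n) : Dom n (uP n k) := by
  intro a b c h3 h4 h5 h6
  simp only [u_apply h1 h2, w0A_apply]
  split_ifs <;> omega

lemma cd_w0 {n i : ℕ} (h1 : 1 ≤ i) : cd n (w0A n) i = n - i := by
  have : ((Ioc i n).filter fun j => w0A n j < w0A n i) = Ioc i n := by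
    ext x
    rw [mem_filter, mem_Ioc]
    simp only [w0A_apply]
    split_ifs <;> omega
  rw [cd, this, Nat.card_Ioc]

lemma cd_u {n k i : ℕ} (h1 : 1 ≤ k) (h2 : k + 1 < n) (hi : 1 ≤ i) (hi' : i ≤ n) :
    cd n (uP n k) i = if i = n - k then n - i - 1 else if i = n - 1 - k then n - i - 2
      else n - i := by
  have : ((Ioc i n).filter fun j => uP n k j < uP n k i) =
      if i = n - k then Ioc (i + 1) n else if i = n - 1 - k then Ioc (i + 2) n else Ioc i n := by
    ext x
    rw [mem_filter, mem_Ioc]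
    simp only [u_apply h1 h2, w0A_apply]
    by_cases e1 : i = n - k
    · rw [if_pos e1, mem_Ioc]
      split_ifs <;> omega
    · rw [if_neg e1]
      by_cases e2 : i = n - 1 - k
      · rw [if_pos e2, if_pos e2, mem_Ioc]
        split_ifs <;> omega
      · rw [if_neg e2, if_neg e2, mem_Ioc]
        split_ifs <;> omega
  rw [cd, this]
  split_ifs <;> rw [Nat.card_Ioc] <;> omega

lemma bN_w0 (n : ℕ) (i : Fin n) : bN n (w0A n) i = 2 * i := by
  have := i.2
  rw [bN, cd_w0 (by omega)]; omega

lemma bN_u {n k : ℕ} (h1 : 1 ≤ k) (h2 : k + 1 < n) (i : Fin n) :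
    bN n (uP n k) i = if (i : ℕ) = k then 2 * k - 1 else if (i : ℕ) = k + 1 then 2 * k
      else 2 * i := by
  have := i.2
  rw [bN, cd_u h1 h2 (by omega) (by omega)]
  split_ifs <;> omega

lemma ell_w0 (n : ℕ) : 2 * ell n (w0A n) = n * (n - 1) := by
  have : ell n (w0A n) = ∑ i ∈ range n, i := by
    rw [ell, ← Fin.sum_univ_eq_sum_range (fun i => i)]
    refine Finset.sum_congr rfl fun i _ => ?_
    have := i.2
    rw [cd_w0 (by omega)]; omega
  rw [this, mul_comm, Finset.sum_range_id_mul_two]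

lemma ell_u {n k : ℕ} (h1 : 1 ≤ k) (h2 : k + 1 < n) : ell n (uP n k) + 3 = ell n (w0A n) := by
  have F1 := (Fx.sA h1 (by omega : k < n)).mul (Fx_w0 n)
  have F2 := (Fx.sA (by omega : 1 ≤ k + 1) h2).mul F1
  have e1 := ell_left (n := n) (a := k) (Fx_w0 n) (by
    simp only [w0_inv, w0A_apply]
    split_ifs <;> omega)
  have e2 := ell_left (n := n) (a := k + 1) F1 (by
    simp only [mul_inv_rev, w0_inv, sA_inv, Equiv.Perm.mul_apply, w0A_apply, sA_apply]
    split_ifs <;> omega)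
  have e3 := ell_left (n := n) (a := k) F2 (by
    simp only [mul_inv_rev, w0_inv, sA_inv, Equiv.Perm.mul_apply, w0A_apply, sA_apply]
    split_ifs <;> omega)
  rw [uP]; omega

lemma VV_w0_pos (n : ℕ) : 0 < VV (fun i : Fin n => ((bN n (w0A n) i : ℕ) : ℤ)) := by
  rw [VV, Matrix.det_vandermonde]
  refine Finset.prod_pos fun i _ => Finset.prod_pos fun j hj => ?_
  have : i < j := mem_Ioi.1 hj
  rw [Fin.lt_def] at this
  simp only [bN_w0]
  push_cast
  omega

lemma HL_w0_pos (n : ℕ) : 0 < HL n (ell n (w0A n)) (w0A n) := by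
  have h := main_formula n _ (w0A n) (Fx_w0 n) (Dom_w0 n) rfl
  by_contra hc
  have : HL n (ell n (w0A n)) (w0A n) = 0 := by omega
  rw [this, Nat.cast_zero, zero_mul] at h
  have h2 := VV_w0_pos n
  have h3 : (0 : ℤ) < (ell n (w0A n)).factorial := by exact_mod_cast Nat.factorial_pos _
  have := mul_pos h3 h2
  omega

lemma ratio {n p M : ℕ} (hn : p + 3 ≤ n) (hM : ell n (w0A n) = M + 3) :
    (HL n M (uP n (p + 1)) : ℚ) * ((M + 1) * (M + 2) * (M + 3)) =
      HL n (M + 3) (w0A n) * (3 * dd p * dd (n - 3 - p)) := by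
  have h1 : 1 ≤ p + 1 := by omega
  have h2 : p + 1 + 1 < n := by omega
  have f0 := main_formula n _ (w0A n) (Fx_w0 n) (Dom_w0 n) hM
  have f1 := main_formula n M (uP n (p + 1)) (Fx_u h1 h2) (Dom_u h1 h2)
    (by have := ell_u h1 h2; omega)
  set j : Fin n := ⟨p + 2, by omega⟩ with hj
  set j' : Fin n := ⟨p + 1, by omega⟩ with hj'
  have hjj : j' ≠ j := by intro h; have := congrArg Fin.val h; simp [hj, hj'] at this
  set β : Fin n → ℕ := fun i => 2 * i with hβ
  have hu : bN n (uP n (p + 1)) = (Function.update β j (2 * p + 1)) ∘ Equiv.swap j' j := by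
    ext i
    rw [bN_u h1 h2, Function.comp]
    by_cases e1 : i = j'
    · subst e1
      rw [Equiv.swap_apply_left, Function.update_self]
      simp [hj']; omega
    by_cases e2 : i = j
    · subst e2
      rw [Equiv.swap_apply_right, Function.update_of_ne hjj]
      simp [hj', hj, hβ]
    · have e1' : (i : ℕ) ≠ p + 1 := fun h => e1 (Fin.ext h)
      have e2' : (i : ℕ) ≠ p + 1 + 1 := fun h => e2 (Fin.ext h)
      rw [Equiv.swap_apply_of_ne_of_ne e1 e2, Function.update_of_ne e2, if_neg e1', if_neg e2']
  have h0 : bN n (w0A n) = β := by ext i; exact bN_w0 n i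
  have hV : VV (fun i => ((bN n (uP n (p + 1)) i : ℕ) : ℤ)) =
      - VV (Function.update (fun i => (β i : ℤ)) j (2 * p + 1)) := by
    rw [← VV_swap _ hjj]
    congr 1
    ext i
    rw [hu]
    simp only [Function.comp]
    generalize Equiv.swap j' j i = x
    by_cases e : x = j
    · subst e; simp
    · simp [e]
  have hprod : (∏ i : Fin n, ((bN n (uP n (p + 1)) i).factorial : ℤ)) *
      ((2 * p + 4) * (2 * p + 3) * (2 * p + 2)) = ∏ i : Fin n, ((β i).factorial : ℤ) := by
    rw [hu]
    simp only [Function.comp]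
    rw [Equiv.prod_comp (Equiv.swap j' j)
      (fun i => ((Function.update β j (2 * p + 1) i).factorial : ℤ)),
      ← Finset.mul_prod_erase _ _ (mem_univ j),
      ← Finset.mul_prod_erase _ (fun i => ((β i).factorial : ℤ)) (mem_univ j)]
    have e : ∏ x ∈ univ.erase j, ((Function.update β j (2 * p + 1) x).factorial : ℤ) =
        ∏ x ∈ univ.erase j, ((β x).factorial : ℤ) := by
      refine Finset.prod_congr rfl fun x hx => ?_
      rw [Function.update_of_ne (ne_of_mem_erase hx)]
    have e' : β j = 2 * p + 1 + 1 + 1 + 1 := by simp [hβ, hj]; ring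
    rw [e, Function.update_self, e', Nat.factorial_succ (2 * p + 1 + 1 + 1),
      Nat.factorial_succ (2 * p + 1 + 1), Nat.factorial_succ (2 * p + 1)]
    push_cast
    ring
  rw [hV] at f1
  rw [h0] at f0
  have hm := VV_update_mul (fun i => (β i : ℤ)) j (2 * p + 1)
  have hp := prod_eval n j
  have hA := AA_eq p
  set V1 := VV (Function.update (fun i => (β i : ℤ)) j (2 * p + 1))
  set V0 := VV (fun i => (β i : ℤ))
  set Q1 := ∏ i : Fin n, ((bN n (uP n (p + 1)) i).factorial : ℤ) with hQ1
  set Q0 := ∏ i : Fin n, ((β i).factorial : ℤ)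
  have hm' : (V1 : ℚ) = V0 * (AA (p + 2) * dd (n - 3 - p)) := by
    have hne : ∏ i ∈ univ.erase j, (2 * (j : ℚ) - 2 * (i : ℚ)) ≠ 0 := by
      rw [Finset.prod_ne_zero_iff]
      intro i hi h
      apply ne_of_mem_erase hi
      apply Fin.ext
      have : (j : ℚ) = i := by linarith
      exact_mod_cast this.symm
    apply mul_right_cancel₀ hne
    have hm2 := congrArg (Int.cast : ℤ → ℚ) hm
    push_cast at hm2
    have e1 : ∏ i ∈ univ.erase j, (((β j : ℕ) : ℚ) - (β i : ℕ)) =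
        ∏ i ∈ univ.erase j, (2 * (j : ℚ) - 2 * (i : ℚ)) := by
      refine Finset.prod_congr rfl fun i _ => ?_
      simp [hβ]
    have e2 : ∏ i ∈ univ.erase j, ((2 * (p : ℚ) + 1) - (β i : ℕ)) =
        ∏ i ∈ univ.erase j, ((2 * (j : ℚ) - 3) - 2 * (i : ℚ)) := by
      refine Finset.prod_congr rfl fun i _ => ?_
      simp [hβ, hj]; ring
    rw [e1, e2, hp] at hm2
    have e3 : n - 1 - (j : ℕ) = n - 3 - p := by simp only [hj]; omega
    rw [e3] at hm2
    rw [hm2]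
    simp only [hj]; ring
  have f0' := congrArg (Int.cast : ℤ → ℚ) f0
  have f1' := congrArg (Int.cast : ℤ → ℚ) f1
  have hprod' := congrArg (Int.cast : ℤ → ℚ) hprod
  have hQ : (Q1 : ℚ) ≠ 0 := by
    have : Q1 ≠ 0 := by
      rw [hQ1, Finset.prod_ne_zero_iff]
      intro i _
      exact_mod_cast Nat.factorial_ne_zero _
    exact_mod_cast this
  rw [Int.cast_mul, Int.cast_mul] at f0' f1'
  rw [Int.cast_mul] at hprod'
  rw [Nat.factorial_succ, Nat.factorial_succ, Nat.factorial_succ] at f0'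
  push_cast at f0' f1' hprod'
  apply mul_right_cancel₀ hQ
  rw [← hA]
  rw [hm'] at f1'
  rw [← hprod'] at f0'
  linear_combination ((M + 1) * (M + 2) * (M + 3) : ℚ) * f1' -
    AA (p + 2) * dd (n - 3 - p) * (-1) * f0'

lemma main_count {n M : ℕ} (hn : 3 ≤ n) (hM : ell n (w0A n) = M + 3) :
    (M + 1) * (2 * ∑ k ∈ Ico 1 (n - 1), HL n M (uP n k)) = HL n (M + 3) (w0A n) := by
  obtain ⟨s, rfl⟩ : ∃ s, n = s + 3 := ⟨n - 3, by omega⟩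
  have hN : (2 : ℚ) * (M + 3) = (s + 3) * (s + 2) := by
    have := ell_w0 (s + 3)
    rw [hM] at this
    have e : s + 3 - 1 = s + 2 := by omega
    rw [e] at this
    exact_mod_cast this
  have e : ∑ k ∈ Ico 1 (s + 3 - 1), HL (s + 3) M (uP (s + 3) k) =
      ∑ p ∈ range (s + 1), HL (s + 3) M (uP (s + 3) (p + 1)) := by
    rw [Finset.sum_Ico_eq_sum_range]
    refine Finset.sum_congr (by congr 1) fun p _ => by rw [add_comm 1 p]
  rw [e]
  have hs : (∑ p ∈ range (s + 1), (HL (s + 3) M (uP (s + 3) (p + 1)) : ℚ)) *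
      ((M + 1) * (M + 2) * (M + 3)) =
      HL (s + 3) (M + 3) (w0A (s + 3)) * (3 * ((s + 1) * (s + 2) * (s + 3) * (s + 4) / 24)) := by
    rw [← conv_sum, Finset.Nat.sum_antidiagonal_eq_sum_range_succ (fun a b => dd a * dd b),
      Finset.sum_mul, Finset.mul_sum, Finset.mul_sum]
    refine Finset.sum_congr rfl fun p hp => ?_
    rw [mem_range] at hp
    rw [ratio (by omega) hM]
    have : s + 3 - 3 - p = s - p := by omega
    rw [this]; ring
  have h3 : (3 : ℚ) * ((s + 1) * (s + 2) * (s + 3) * (s + 4) / 24) = (M + 3) * (M + 2) / 2 := by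
    have : (M : ℚ) = (s + 3) * (s + 2) / 2 - 3 := by linarith
    rw [this]; ring
  rw [h3] at hs
  have h4 : ((M : ℚ) + 2) * (M + 3) ≠ 0 := by positivity
  have : ((M : ℚ) + 1) * (2 * ∑ p ∈ range (s + 1), (HL (s + 3) M (uP (s + 3) (p + 1)) : ℚ)) =
      HL (s + 3) (M + 3) (w0A (s + 3)) := by
    apply mul_right_cancel₀ h4
    linear_combination 2 * hs
  exact_mod_cast this

end YBA

/-- (Reiner) For every `n ≥ 3`, the expected number of Yang–Baxter moves in a uniformly
random reduced decomposition of the longest element `w₀ ∈ Sₙ` equals `1`; equivalently,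
`Σ_{ω ∈ R(w₀)} yb(ω) = |R(w₀)|`. -/
theorem expected_yang_baxter_A (n : ℕ) (hn : 3 ≤ n) :
    ∑ᶠ ω ∈ RSetA n (w0A n), ybCount ω = Nat.card ↥(RSetA n (w0A n)) := by
  have h3 : 3 ≤ YBA.ell n (w0A n) := by
    have := YBA.ell_u (n := n) (k := 1) le_rfl (by omega)
    omega
  obtain ⟨M, hM⟩ : ∃ M, YBA.ell n (w0A n) = M + 3 := ⟨YBA.ell n (w0A n) - 3, by omega⟩
  have hc := YBA.card_wF n (M + 3) (w0A n) (YBA.Fx_w0 n) hM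
  have hpos := YBA.HL_w0_pos n
  rw [hM] at hpos
  rw [YBA.RSetA_eq hM (by rw [hc]; exact hpos), finsum_mem_coe_finset, YBA.sum_yb,
    YBA.cY_formula]
  have e : ∑ k ∈ Finset.Ico 1 (n - 1), (YBA.wF n M (YBA.uP n k)).card =
      ∑ k ∈ Finset.Ico 1 (n - 1), YBA.HL n M (YBA.uP n k) := by
    refine Finset.sum_congr rfl fun k hk => ?_
    rw [Finset.mem_Ico] at hk
    have := YBA.ell_u (n := n) (k := k) hk.1 (by omega)
    exact YBA.card_wF n M _ (YBA.Fx_u hk.1 (by omega)) (by omega)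
  rw [e, YBA.main_count hn hM, ← hc]
  simp
end

section
/- Let n ≥ 3, let k satisfy 1 ≤ k ≤ n−2, and let j satisfy 1 ≤ j ≤ n²−2. Then the number of reduced decompositions ω = i_1⋯i_{n²} of w_0^B ∈ B_n with (i_j, i_{j+1}, i_{j+2}) ∈ {(k, k+1, k), (k+1, k, k+1)} equals the number of reduced decompositions ω = i_1⋯i_{n²} of w_0^B with (i_1, i_2, i_3) ∈ {(k, k+1, k), (k+1, k, k+1)}. -/
lemma sB_apply (a : ℕ) (x : ℤ) : sB a x =
    if a = 0 then (if x = 1 then -1 else if x = -1 then 1 else x)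
    else if x = a then (a : ℤ) + 1 else if x = (a : ℤ) + 1 then (a : ℤ)
    else if x = -(a : ℤ) then -((a : ℤ) + 1) else if x = -((a : ℤ) + 1) then -(a : ℤ) else x := by
  unfold sB
  by_cases ha : a = 0
  · simp [ha, Equiv.swap_apply_def]
  · simp only [ha, if_false, Equiv.Perm.mul_apply, Equiv.swap_apply_def]
    split_ifs <;> omega

lemma sB_neg (a : ℕ) (x : ℤ) : sB a (-x) = - sB a x := by
  simp only [sB_apply]
  split_ifs <;> omega

lemma wordProd_nil : wordProd [] = 1 := rfl

lemma wordProd_cons (a : ℕ) (l : List ℕ) : wordProd (a :: l) = sB a * wordProd l := by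
  simp [wordProd]

lemma wordProd_append (l l' : List ℕ) : wordProd (l ++ l') = wordProd l * wordProd l' := by
  simp [wordProd]

lemma wordProd_neg (l : List ℕ) (x : ℤ) : wordProd l (-x) = - wordProd l x := by
  induction l with
  | nil => simp [wordProd_nil]
  | cons a l ih => simp [wordProd_cons, ih, sB_neg]

lemma w0B_apply (n : ℕ) (x : ℤ) :
    w0B n x = if -(n : ℤ) ≤ x ∧ x ≤ (n : ℤ) then -x else x := rfl

lemma sB_comm (n a : ℕ) (ha : a < n) : Commute (sB a) (w0B n) := by
  ext x
  simp only [Equiv.Perm.mul_apply, w0B_apply]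
  split_ifs with h1 h2 h2
  · exact sB_neg a x
  · exfalso; apply h2
    rw [sB_apply]; split_ifs <;> omega
  · exfalso; apply h1
    rw [sB_apply] at h2; split_ifs at h2 <;> omega
  · rfl

lemma wordProd_comm (n : ℕ) (l : List ℕ) (hl : ∀ i ∈ l, i < n) :
    Commute (wordProd l) (w0B n) := by
  induction l with
  | nil => rw [wordProd_nil]; exact Commute.one_left _
  | cons a l ih =>
    rw [wordProd_cons]
    exact (sB_comm n a (hl a (by simp))).mul_left (ih fun i hi => hl i (by simp [hi]))

/-- Representatives of the positive roots. -/
noncomputable def posPairs (n : ℕ) : Finset ((_ : ℕ) × ℤ) :=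
  (Finset.range n).sigma fun j => (Finset.Icc (-((j : ℤ) + 1)) j).erase 0

lemma mem_posPairs (n : ℕ) (p : (_ : ℕ) × ℤ) :
    p ∈ posPairs n ↔ p.1 < n ∧ p.2 ≠ 0 ∧ -((p.1 : ℤ) + 1) ≤ p.2 ∧ p.2 ≤ p.1 := by
  simp [posPairs]

lemma card_posPairs (n : ℕ) : (posPairs n).card = n ^ 2 := by
  have h : ∀ j : ℕ, ((Finset.Icc (-((j : ℤ) + 1)) j).erase 0).card = 2 * j + 1 := by
    intro j
    rw [Finset.card_erase_of_mem (by rw [Finset.mem_Icc]; omega), Int.card_Icc]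
    omega
  rw [posPairs, Finset.card_sigma]
  simp only [h]
  induction n with
  | zero => simp
  | succ n ih => rw [Finset.sum_range_succ, ih]; ring

noncomputable def invSet (n : ℕ) (w : Equiv.Perm ℤ) : Finset ((_ : ℕ) × ℤ) :=
  (posPairs n).filter fun p => w ((p.1 : ℤ) + 1) < w p.2

lemma sB_flip (a : ℕ) (x y : ℤ) (h : x < y) (h' : sB a y < sB a x) :
    (a = 0 ∧ x = -1 ∧ y = 1) ∨ (x = a ∧ y = a + 1) ∨ (x = -((a : ℤ) + 1) ∧ y = -(a : ℤ)) := by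
  simp only [sB_apply] at h'
  split_ifs at h' <;> omega

lemma inv_card_le (n : ℕ) (l : List ℕ) : (invSet n (wordProd l)).card ≤ l.length := by
  induction l with
  | nil =>
    rw [List.length_nil, Nat.le_zero, Finset.card_eq_zero, invSet, Finset.filter_eq_empty_iff]
    intro p hp
    rw [mem_posPairs] at hp
    simp only [wordProd_nil, Equiv.Perm.one_apply]
    omega
  | cons a l ih =>
    have key : (invSet n (wordProd (a :: l)) \ invSet n (wordProd l)).card ≤ 1 := by
      rw [Finset.card_le_one]
      have step : ∀ p ∈ invSet n (wordProd (a :: l)) \ invSet n (wordProd l),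
          (p.2 ≠ 0 ∧ -((p.1 : ℤ) + 1) ≤ p.2 ∧ p.2 ≤ p.1) ∧
          ((p.2 = (wordProd l).symm a ∧ (p.1 : ℤ) + 1 = (wordProd l).symm (a + 1)) ∨
           (-p.2 = (wordProd l).symm (a + 1) ∧ -((p.1 : ℤ) + 1) = (wordProd l).symm a) ∨
           (a = 0 ∧ p.2 = (wordProd l).symm (-1) ∧ (p.1 : ℤ) + 1 = (wordProd l).symm 1)) := by
        intro p hp
        simp only [invSet, Finset.mem_sdiff, Finset.mem_filter, mem_posPairs, wordProd_cons,
          Equiv.Perm.mul_apply, not_and, not_lt] at hp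
        obtain ⟨⟨hP, h1⟩, h2⟩ := hp
        have h3 := h2 hP
        have hne : wordProd l p.2 ≠ wordProd l ((p.1 : ℤ) + 1) := by
          intro he
          have := (wordProd l).injective he
          omega
        refine ⟨hP.2, ?_⟩
        rcases sB_flip a _ _ (lt_of_le_of_ne h3 hne) h1 with h | h | h
        · right; right
          simp only [Equiv.eq_symm_apply]; exact h
        · left
          simp only [Equiv.eq_symm_apply]; exact h
        · right; left
          simp only [Equiv.eq_symm_apply, wordProd_neg]
          omega
      have h0 : (wordProd l).symm 0 = 0 := by
        rw [Equiv.symm_apply_eq]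
        have := wordProd_neg l 0
        rw [neg_zero] at this
        omega
      intro p hp q hq
      have hp' := step p hp
      have hq' := step q hq
      have : p.1 = q.1 ∧ p.2 = q.2 := by
        by_cases ha : a = 0
        · subst ha
          simp only [Nat.cast_zero, h0] at hp' hq'
          omega
        · omega
      obtain ⟨p1, p2⟩ := p
      obtain ⟨q1, q2⟩ := q
      obtain ⟨h1, h2⟩ := this
      simp only at h1 h2
      rw [h1, h2]
    have := Finset.card_le_card_sdiff_add_card (t := invSet n (wordProd l))
      (s := invSet n (wordProd (a :: l)))
    rw [List.length_cons]
    omega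

lemma length_ge (n : ℕ) (l : List ℕ) (h : wordProd l = w0B n) : n ^ 2 ≤ l.length := by
  have h1 := inv_card_le n l
  have h2 : invSet n (w0B n) = posPairs n := by
    rw [invSet, Finset.filter_eq_self]
    intro p hp
    rw [mem_posPairs] at hp
    rw [w0B_apply, w0B_apply, if_pos (by omega), if_pos (by omega)]
    omega
  rw [h, h2, card_posPairs] at h1
  exact h1

lemma reduced_rotate (n m : ℕ) (l : List ℕ) (h : IsReducedWord n (w0B n) l) :
    IsReducedWord n (w0B n) (l.rotate m) := by
  obtain ⟨h1, h2, h3⟩ := h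
  refine ⟨fun i hi => h1 i (List.mem_rotate.1 hi), ?_, ?_⟩
  · rw [List.rotate_eq_drop_append_take_mod, wordProd_append]
    have hc := wordProd_comm n (l.take (m % l.length)) fun i hi => h1 i (List.mem_of_mem_take hi)
    rw [← List.take_append_drop (m % l.length) l, wordProd_append] at h2
    apply mul_left_cancel (a := wordProd (l.take (m % l.length)))
    rw [← mul_assoc, h2, hc.eq]
  · intro l' a b
    rw [List.length_rotate]
    exact h3 l' a b

lemma take_rotate (m : ℕ) (l : List ℕ) (h : m + 3 ≤ l.length) :
    (l.rotate m).take 3 = (l.drop m).take 3 := by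
  rw [List.rotate_eq_drop_append_take (by omega), List.take_append_of_le_length]
  rw [List.length_drop]; omega

/-- For `n ≥ 3`, `1 ≤ k ≤ n - 2` and `1 ≤ j ≤ n² - 2`, the number of reduced
decompositions of `w₀ᴮ ∈ Bₙ` whose letters in positions `j, j+1, j+2` form
`(k, k+1, k)` or `(k+1, k, k+1)` equals the number of reduced decompositions of `w₀ᴮ`
whose first three letters form `(k, k+1, k)` or `(k+1, k, k+1)`. -/
theorem yb_position_equidistributed (n k j : ℕ) (hn : 3 ≤ n) (hk1 : 1 ≤ k)
    (hk2 : k ≤ n - 2) (hj1 : 1 ≤ j) (hj2 : j ≤ n ^ 2 - 2) :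
    Nat.card {l : List ℕ // IsReducedWord n (w0B n) l ∧
        ((l.drop (j - 1)).take 3 = [k, k + 1, k] ∨
          (l.drop (j - 1)).take 3 = [k + 1, k, k + 1])}
      = Nat.card {l : List ℕ // IsReducedWord n (w0B n) l ∧
          (l.take 3 = [k, k + 1, k] ∨ l.take 3 = [k + 1, k, k + 1])} := by
  have hm : ∀ l, IsReducedWord n (w0B n) l → (j - 1) + 3 ≤ l.length := by
    intro l hl
    have := length_ge n l hl.2.1
    have h9 : 3 ^ 2 ≤ n ^ 2 := Nat.pow_le_pow_left hn 2
    omega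
  refine Nat.card_congr
    { toFun := fun l => ⟨l.1.rotate (j - 1), reduced_rotate n _ _ l.2.1, ?_⟩
      invFun := fun l => ⟨l.1.rotate (l.1.length - (j - 1)), reduced_rotate n _ _ l.2.1, ?_⟩
      left_inv := ?_
      right_inv := ?_ }
  · rw [take_rotate _ _ (hm _ l.2.1)]
    exact l.2.2
  · have hl := hm _ l.2.1
    have hr := hm _ (reduced_rotate n (l.1.length - (j - 1)) _ l.2.1)
    rw [← take_rotate _ _ hr, List.rotate_rotate, Nat.sub_add_cancel (by omega),
      List.rotate_length]
    exact l.2.2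
  · intro l
    have hl := hm _ l.2.1
    apply Subtype.ext
    simp only [List.rotate_rotate, List.length_rotate]
    rw [Nat.add_sub_cancel' (by omega), List.rotate_length]
  · intro l
    have hl := hm _ l.2.1
    apply Subtype.ext
    simp only [List.rotate_rotate]
    rw [Nat.sub_add_cancel (by omega), List.rotate_length]
end
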